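/- Let a = (a_n)_{n≥1} be a sequence of positive integers such that the infinite word a₁a₂a₃… begins in arbitrarily long palindromes, i.e., for every N there exists n ≥ N such that a_j = a_{n+1−j} for all 1 ≤ j ≤ n. Then the real number α = [0; a₁, a₂, …, a_n, …] is either a quadratic irrational or transcendental (i.e., α is not algebraic of degree ≥ 3 over ℚ). -/

import Mathlib

open Filter Topology

/-- Numerators of the convergents of `[0; a 1, a 2, ...]`. -/
def cfNum (a : ℕ → ℕ) : ℕ → ℕ
  | 0 => 0
  | 1 => 1
  | n + 2 => a (n + 2) * cfNum a (n + 1) + cfNum a n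

/-- Denominators of the convergents of `[0; a 1, a 2, ...]`. -/
def cfDen (a : ℕ → ℕ) : ℕ → ℕ
  | 0 => 1
  | 1 => a 1
  | n + 2 => a (n + 2) * cfDen a (n + 1) + cfDen a n

/-!
Reversing a word of partial quotients transposes the product of the symmetric matrices
`!![a i, 1; 1, 0]`, so a palindromic prefix of length `n` forces `p_n = q_{n-1}`. Then `p_n / q_n`
and `p_{n-1} / q_n` approximate `α` and `α²` simultaneously, both within `O(1 / q_n²)`.

Suppose that `α` is algebraic and `1, α, α²` are independent over the integers. By the method of
Thue, Siegel, Roth and Schmidt, infinitely many such approximations cannot exist. Each of them gives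
a plane in which two independent integer vectors take small values at the linear forms that define
`α`. Choose `m` approximations with rapidly growing denominators. Siegel's lemma provides a
multihomogeneous integer form with small coefficients which vanishes to high order with respect to
`α`; integrality makes it vanish to high order on the product of the `m` planes. A linear change of
variables reduces to polynomials evaluated at rational points with large denominators, and there
Roth's lemma, proved by means of generalized Wronskians, bounds the order of vanishing.
-/

namespace PalindromicCF

section WeightedL1Norm

open MvPolynomial

variable {σ R : Type*}

/-- The weighted `ℓ¹` norm `∑ ‖c_e‖ ρ^e` of a polynomial `∑ c_e X^e`. It bounds the polynomial
on the polydisc of polyradius `ρ`. -/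
noncomputable def weightedL1Norm [SeminormedCommRing R] (ρ : σ → ℝ) (P : MvPolynomial σ R) : ℝ :=
  ∑ e ∈ P.support, ‖coeff e P‖ * e.prod fun v k => ρ v ^ k

/-- The length of a polynomial: the sum of the norms of its coefficients. It serves as the
(multiplicative) height of integer polynomials. -/
noncomputable def l1Norm [SeminormedCommRing R] (P : MvPolynomial σ R) : ℝ :=
  weightedL1Norm 1 P

section SeminormedCommRing

variable [SeminormedCommRing R] {ρ : σ → ℝ}

lemma weightedL1Norm_eq_sum {P : MvPolynomial σ R} {s : Finset (σ →₀ ℕ)} (hs : P.support ⊆ s) :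
    weightedL1Norm ρ P = ∑ e ∈ s, ‖coeff e P‖ * e.prod fun v k => ρ v ^ k :=
  Finset.sum_subset hs fun e _ he => by simp [notMem_support_iff.mp he]

@[simp]
lemma weightedL1Norm_zero : weightedL1Norm ρ (0 : MvPolynomial σ R) = 0 := by
  simp [weightedL1Norm]

@[simp]
lemma weightedL1Norm_monomial (e : σ →₀ ℕ) (c : R) :
    weightedL1Norm ρ (monomial e c) = ‖c‖ * e.prod fun v k => ρ v ^ k := by
  classical
  rw [weightedL1Norm_eq_sum support_monomial_subset, Finset.sum_singleton, coeff_monomial,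
    if_pos rfl]

@[simp]
lemma weightedL1Norm_C (c : R) : weightedL1Norm ρ (C c) = ‖c‖ := by
  simpa using weightedL1Norm_monomial (ρ := ρ) 0 c

lemma weightedL1Norm_one [NormOneClass R] : weightedL1Norm ρ (1 : MvPolynomial σ R) = 1 := by
  simpa using weightedL1Norm_C (ρ := ρ) (1 : R)

lemma weightedL1Norm_X [NormOneClass R] (v : σ) :
    weightedL1Norm ρ (X v : MvPolynomial σ R) = ρ v := by
  simp [X]

lemma weightedL1Norm_neg (P : MvPolynomial σ R) : weightedL1Norm ρ (-P) = weightedL1Norm ρ P := by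
  simp [weightedL1Norm]

lemma monomialWeight_nonneg (hρ : 0 ≤ ρ) (e : σ →₀ ℕ) : 0 ≤ e.prod fun v k => ρ v ^ k :=
  Finset.prod_nonneg fun v _ => pow_nonneg (hρ v) _

lemma weightedL1Norm_nonneg (hρ : 0 ≤ ρ) (P : MvPolynomial σ R) : 0 ≤ weightedL1Norm ρ P :=
  Finset.sum_nonneg fun e _ => mul_nonneg (norm_nonneg _) (monomialWeight_nonneg hρ e)

lemma norm_coeff_mul_le_weightedL1Norm (hρ : 0 ≤ ρ) (P : MvPolynomial σ R) (e : σ →₀ ℕ) :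
    (‖coeff e P‖ * e.prod fun v k => ρ v ^ k) ≤ weightedL1Norm ρ P := by
  classical
  rw [weightedL1Norm_eq_sum (Finset.subset_insert e P.support)]
  exact Finset.single_le_sum
    (f := fun e : σ →₀ ℕ => ‖coeff e P‖ * e.prod fun v k => ρ v ^ k)
    (fun e _ => mul_nonneg (norm_nonneg _) (monomialWeight_nonneg hρ e))
    (Finset.mem_insert_self _ _)

lemma weightedL1Norm_add_le (hρ : 0 ≤ ρ) (P Q : MvPolynomial σ R) :
    weightedL1Norm ρ (P + Q) ≤ weightedL1Norm ρ P + weightedL1Norm ρ Q := by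
  classical
  rw [weightedL1Norm_eq_sum (P := P + Q) support_add,
    weightedL1Norm_eq_sum (P := P) Finset.subset_union_left,
    weightedL1Norm_eq_sum (P := Q) Finset.subset_union_right, ← Finset.sum_add_distrib]
  refine Finset.sum_le_sum fun e _ => ?_
  rw [← add_mul, coeff_add]
  exact mul_le_mul_of_nonneg_right (norm_add_le _ _) (monomialWeight_nonneg hρ e)

lemma weightedL1Norm_sum_le (hρ : 0 ≤ ρ) {ι : Type*} (s : Finset ι) (f : ι → MvPolynomial σ R) :
    weightedL1Norm ρ (∑ i ∈ s, f i) ≤ ∑ i ∈ s, weightedL1Norm ρ (f i) :=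
  Finset.le_sum_of_subadditive _ weightedL1Norm_zero.le (weightedL1Norm_add_le hρ) s f

lemma weightedL1Norm_mul_le (hρ : 0 ≤ ρ) (P Q : MvPolynomial σ R) :
    weightedL1Norm ρ (P * Q) ≤ weightedL1Norm ρ P * weightedL1Norm ρ Q := by
  have monomial_mul_monomial_le (e f : σ →₀ ℕ) (c d : R) :
      weightedL1Norm ρ (monomial e c * monomial f d) ≤
        (‖c‖ * e.prod fun v k => ρ v ^ k) * (‖d‖ * f.prod fun v k => ρ v ^ k) := by
    classical
    rw [monomial_mul, weightedL1Norm_monomial,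
      Finsupp.prod_add_index' (fun _ => pow_zero _) (fun _ _ _ => pow_add _ _ _), mul_mul_mul_comm]
    exact mul_le_mul_of_nonneg_right (norm_mul_le c d)
      (mul_nonneg (monomialWeight_nonneg hρ e) (monomialWeight_nonneg hρ f))
  conv_lhs => rw [P.as_sum, Q.as_sum, Finset.sum_mul_sum]
  refine (weightedL1Norm_sum_le hρ _ _).trans ?_
  unfold weightedL1Norm
  rw [Finset.sum_mul_sum]
  exact Finset.sum_le_sum fun e _ => (weightedL1Norm_sum_le hρ _ _).trans
    (Finset.sum_le_sum fun f _ => monomial_mul_monomial_le e f _ _)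

lemma weightedL1Norm_prod_le [NormOneClass R] (hρ : 0 ≤ ρ) {ι : Type*} (s : Finset ι)
    (f : ι → MvPolynomial σ R) :
    weightedL1Norm ρ (∏ i ∈ s, f i) ≤ ∏ i ∈ s, weightedL1Norm ρ (f i) := by
  classical
  induction s using Finset.induction_on with
  | empty => simp [weightedL1Norm_one]
  | insert a s ha ih =>
    rw [Finset.prod_insert ha, Finset.prod_insert ha]
    exact (weightedL1Norm_mul_le hρ _ _).trans
      (mul_le_mul_of_nonneg_left ih (weightedL1Norm_nonneg hρ _))

lemma weightedL1Norm_pow_le [NormOneClass R] (hρ : 0 ≤ ρ) (P : MvPolynomial σ R) (n : ℕ) :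
    weightedL1Norm ρ (P ^ n) ≤ weightedL1Norm ρ P ^ n := by
  simpa using weightedL1Norm_prod_le hρ (Finset.range n) fun _ => P

lemma l1Norm_nonneg (P : MvPolynomial σ R) : 0 ≤ l1Norm P :=
  weightedL1Norm_nonneg zero_le_one P

lemma l1Norm_eq_sum {P : MvPolynomial σ R} {s : Finset (σ →₀ ℕ)} (hs : P.support ⊆ s) :
    l1Norm P = ∑ e ∈ s, ‖coeff e P‖ := by
  simp [l1Norm, weightedL1Norm_eq_sum hs]

lemma l1Norm_monomial (e : σ →₀ ℕ) (c : R) : l1Norm (monomial e c) = ‖c‖ := by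
  simp [l1Norm]

lemma norm_coeff_le_l1Norm (P : MvPolynomial σ R) (e : σ →₀ ℕ) : ‖coeff e P‖ ≤ l1Norm P := by
  simpa [l1Norm] using norm_coeff_mul_le_weightedL1Norm (ρ := 1) zero_le_one P e

lemma l1Norm_neg (P : MvPolynomial σ R) : l1Norm (-P) = l1Norm P :=
  weightedL1Norm_neg P

end SeminormedCommRing

lemma one_le_l1Norm {P : MvPolynomial σ ℤ} (hP : P ≠ 0) : 1 ≤ l1Norm P := by
  obtain ⟨e, he⟩ := ne_zero_iff.mp hP
  refine le_trans ?_ (norm_coeff_le_l1Norm P e)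
  rw [Int.norm_eq_abs]
  exact_mod_cast Int.one_le_abs he

end WeightedL1Norm

section HasseDerivative

open MvPolynomial

variable {σ R : Type*} [CommRing R]

/-- The generic Taylor expansion `P(X + Y)`, as a polynomial in `Y` with coefficients in `R[X]`. -/
noncomputable def genericTaylor : MvPolynomial σ R →ₐ[R] MvPolynomial σ (MvPolynomial σ R) :=
  aeval fun v => C (X v) + X v

/-- The Hasse derivative `(1 / I!) ∂^I` of a multivariate polynomial, read off as the coefficient of
`Y ^ I` in `P(X + Y)`, which makes sense in every characteristic. -/
noncomputable def hasseDeriv (I : σ →₀ ℕ) : MvPolynomial σ R →ₗ[R] MvPolynomial σ R where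
  toFun P := coeff I (genericTaylor P)
  map_add' P Q := by simp
  map_smul' c P := by simp [coeff_smul]

/-- The translation `P(X) ↦ P(X + β)`. -/
noncomputable def translate (β : σ → R) : MvPolynomial σ R →ₐ[R] MvPolynomial σ R :=
  aeval fun v => X v + C (β v)

lemma hasseDeriv_apply (I : σ →₀ ℕ) (P : MvPolynomial σ R) :
    hasseDeriv I P = coeff I (genericTaylor P) := rfl

lemma genericTaylor_translate (β : σ → R) (P : MvPolynomial σ R) :
    genericTaylor (translate β P) = (genericTaylor P).map (translate β).toRingHom := by
  suffices h : (genericTaylor (σ := σ) (R := R)).toRingHom.comp (translate β).toRingHom =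
      (MvPolynomial.map (translate β).toRingHom).comp genericTaylor.toRingHom from
    DFunLike.congr_fun h P
  refine ringHom_ext (fun a => ?_) fun v => ?_
  · simp [genericTaylor, translate, algebraMap_eq, MvPolynomial.algebraMap_apply]
  · simp [genericTaylor, translate, algebraMap_eq, MvPolynomial.algebraMap_apply]
    ring

lemma hasseDeriv_translate (β : σ → R) (I : σ →₀ ℕ) (P : MvPolynomial σ R) :
    hasseDeriv I (translate β P) = translate β (hasseDeriv I P) := by
  rw [hasseDeriv_apply, genericTaylor_translate, coeff_map]
  rfl

lemma translate_injective (β : σ → R) : Function.Injective (translate β) := by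
  have translate_neg_translate : (translate (-β)).comp (translate β) = AlgHom.id R _ := by
    ext v
    simp [translate, algebraMap_eq]
  exact Function.LeftInverse.injective (g := translate (-β)) fun P =>
    DFunLike.congr_fun translate_neg_translate P

section Fintype

variable [Fintype σ]

/-- The product of binomial coefficients `∏ v, (e v).choose (I v)` attached to two multi-indices. -/
def multichoose (e I : σ →₀ ℕ) : ℕ := ∏ v, (e v).choose (I v)

lemma multichoose_eq_zero {e I : σ →₀ ℕ} (h : ¬I ≤ e) : multichoose e I = 0 := by
  obtain ⟨v, hv⟩ := not_forall.mp h
  exact Finset.prod_eq_zero (Finset.mem_univ v) (Nat.choose_eq_zero_of_lt (not_le.mp hv))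

lemma multichoose_le_two_pow_degree (e I : σ →₀ ℕ) : multichoose e I ≤ 2 ^ e.degree := by
  rw [Finsupp.degree_eq_sum, ← Finset.prod_pow_eq_pow_sum]
  exact Finset.prod_le_prod' fun v _ => Nat.choose_le_two_pow _ _

lemma genericTaylor_monomial [DecidableEq σ] (e : σ →₀ ℕ) (c : R) :
    genericTaylor (monomial e c) =
      ∑ I ∈ Finset.Icc 0 e, monomial I (monomial (e - I) (c * multichoose e I)) := by
  rw [genericTaylor, aeval_monomial, Finsupp.prod_fintype _ _ (by simp)]
  simp_rw [add_comm (C (X _)) (X _), add_pow]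
  rw [Finset.prod_univ_sum, Finset.mul_sum]
  refine Finset.sum_equiv Finsupp.equivFunOnFinite.symm
    (fun I => by simp [Finsupp.le_def]) fun I _ => ?_
  rw [monomial_eq, monomial_eq, Finsupp.prod_fintype _ _ (by simp),
    Finsupp.prod_fintype _ _ (by simp)]
  simp only [Finset.prod_mul_distrib, multichoose, Finsupp.equivFunOnFinite_symm_apply_apply,
    Finsupp.tsub_apply, map_mul, map_prod, map_pow, map_natCast, Nat.cast_prod,
    MvPolynomial.algebraMap_apply, algebraMap_eq]
  ring

lemma hasseDeriv_monomial (I e : σ →₀ ℕ) (c : R) :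
    hasseDeriv I (monomial e c) = monomial (e - I) (c * multichoose e I) := by
  classical
  simp only [hasseDeriv_apply, genericTaylor_monomial, coeff_sum, coeff_monomial,
    Finset.sum_ite_eq', Finset.mem_Icc, zero_le, true_and]
  split_ifs with hI
  · rfl
  · simp [multichoose_eq_zero hI]

lemma coeff_hasseDeriv (I e : σ →₀ ℕ) (P : MvPolynomial σ R) :
    coeff e (hasseDeriv I P) = multichoose (e + I) I * coeff (e + I) P := by
  classical
  induction P using MvPolynomial.induction_on' with
  | monomial f c =>
    rw [hasseDeriv_monomial, coeff_monomial, coeff_monomial]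
    by_cases hI : I ≤ f
    · simp only [tsub_eq_iff_eq_add_of_le hI]
      split_ifs with h
      · rw [h, mul_comm]
      · rw [mul_zero]
    · have hf : f ≠ e + I := fun h => hI (h ▸ le_add_self)
      simp [multichoose_eq_zero hI, hf]
  | add P Q hP hQ => simp only [map_add, coeff_add, hP, hQ, mul_add]

end Fintype

section Finite

variable [Finite σ]

lemma coeff_ne_zero_of_coeff_hasseDeriv_ne_zero {I e : σ →₀ ℕ} {P : MvPolynomial σ R}
    (h : coeff e (hasseDeriv I P) ≠ 0) : coeff (e + I) P ≠ 0 := by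
  cases nonempty_fintype σ
  rw [coeff_hasseDeriv] at h
  exact right_ne_zero_of_mul h

lemma hasseDeriv_map {S : Type*} [CommRing S] (g : R →+* S) (I : σ →₀ ℕ) (P : MvPolynomial σ R) :
    hasseDeriv I (P.map g) = (hasseDeriv I P).map g := by
  cases nonempty_fintype σ
  ext e
  simp [coeff_hasseDeriv, coeff_map]

lemma l1Norm_hasseDeriv_le (I : σ →₀ ℕ) (P : MvPolynomial σ ℤ) :
    l1Norm (hasseDeriv I P) ≤ 2 ^ P.totalDegree * l1Norm P := by
  cases nonempty_fintype σ
  conv_lhs => rw [P.as_sum, map_sum]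
  refine (weightedL1Norm_sum_le zero_le_one _ _).trans ?_
  rw [l1Norm_eq_sum subset_rfl, Finset.mul_sum]
  refine Finset.sum_le_sum fun e he => ?_
  change l1Norm _ ≤ _
  have hchoose : multichoose e I ≤ 2 ^ P.totalDegree :=
    (multichoose_le_two_pow_degree e I).trans
      (Nat.pow_le_pow_right two_pos (le_totalDegree he))
  rw [hasseDeriv_monomial, l1Norm_monomial, norm_mul, mul_comm, Int.norm_natCast]
  gcongr
  exact_mod_cast hchoose

end Finite

end HasseDerivative

section Wronskian

open MvPolynomial

lemma mul_choose_eq (n k : ℕ) : n * n.choose k = (k + 1) * n.choose (k + 1) + k * n.choose k := by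
  obtain hk | hk := le_or_gt k n
  · obtain ⟨t, rfl⟩ := Nat.exists_eq_add_of_le hk
    have h := Nat.choose_succ_right_eq (k + t) k
    rw [Nat.add_sub_cancel_left] at h
    linear_combination -h
  · simp [Nat.choose_eq_zero_of_lt hk, Nat.choose_eq_zero_of_lt (hk.trans k.lt_succ_self)]

lemma apply_mul_multichoose {σ : Type*} [Fintype σ] (e I : σ →₀ ℕ) (v : σ) :
    e v * multichoose e I =
      (I v + 1) * multichoose e (I + Finsupp.single v 1) + I v * multichoose e I := by
  classical
  have erase_eq : ∏ w ∈ Finset.univ.erase v, (e w).choose (I w + Finsupp.single v 1 w) =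
      ∏ w ∈ Finset.univ.erase v, (e w).choose (I w) :=
    Finset.prod_congr rfl fun w hw => by
      simp [Finsupp.single_eq_of_ne (Finset.ne_of_mem_erase hw)]
  simp only [multichoose, ← Finset.mul_prod_erase _ _ (Finset.mem_univ v), erase_eq,
    Finsupp.add_apply, Finsupp.single_eq_same]
  linear_combination
    (∏ w ∈ Finset.univ.erase v, (e w).choose (I w)) * mul_choose_eq (e v) (I v)

variable {σ K : Type*} [Field K]

/-- The polynomial obtained from `P` by multiplying each coefficient `c_e` by `g e`, as a linear
map in `g`. -/
noncomputable def rescaleCoeff (P : MvPolynomial σ K) :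
    ((σ →₀ ℕ) → K) →ₗ[K] MvPolynomial σ K where
  toFun g := ∑ e ∈ P.support, monomial e (g e * coeff e P)
  map_add' g h := by simp [add_mul, Finset.sum_add_distrib]
  map_smul' c g := by simp [mul_assoc, Finset.smul_sum, smul_monomial]

lemma coeff_rescaleCoeff (P : MvPolynomial σ K) (g : (σ →₀ ℕ) → K) (e : σ →₀ ℕ) :
    coeff e (rescaleCoeff P g) = g e * coeff e P := by
  classical
  simp only [rescaleCoeff, LinearMap.coe_mk, AddHom.coe_mk, coeff_sum, coeff_monomial,
    Finset.sum_ite_eq', mem_support_iff]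
  split_ifs with h
  · rfl
  · rw [not_not.mp h, mul_zero]

lemma degree_rescaleCoeff_le (m : MonomialOrder σ) (P : MvPolynomial σ K) (g : (σ →₀ ℕ) → K) :
    m.toSyn (m.degree (rescaleCoeff P g)) ≤ m.toSyn (m.degree P) := by
  refine m.degree_le_iff.mpr fun e he => m.le_degree (mem_support_iff.mpr ?_)
  rw [mem_support_iff, coeff_rescaleCoeff] at he
  exact right_ne_zero_of_mul he

/-- The jet of order `s` of a polynomial: all its Hasse derivatives of order at most `s`. -/
noncomputable def hasseJet (s : ℕ) :
    MvPolynomial σ K →ₗ[K] {I : σ →₀ ℕ // I.degree ≤ s} → MvPolynomial σ K :=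
  LinearMap.pi fun I => hasseDeriv I.1

lemma hasseJet_apply (s : ℕ) (P : MvPolynomial σ K) (I : {I : σ →₀ ℕ // I.degree ≤ s}) :
    hasseJet s P I = hasseDeriv I.1 P := rfl

section Interpolation

variable [Fintype σ]

variable (σ K) in
/-- The functions on multi-indices that are polynomial of degree at most `s`, in the basis of
binomial coefficients. -/
def polynomialFunctions (s : ℕ) : Submodule K ((σ →₀ ℕ) → K) :=
  Submodule.span K {g | ∃ I : σ →₀ ℕ, I.degree ≤ s ∧ g = fun e => (multichoose e I : K)}

lemma multichoose_mem_polynomialFunctions {s : ℕ} {I : σ →₀ ℕ} (hI : I.degree ≤ s) :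
    (fun e => (multichoose e I : K)) ∈ polynomialFunctions σ K s :=
  Submodule.subset_span ⟨I, hI, rfl⟩

lemma mul_mem_polynomialFunctions {s : ℕ} {g : (σ →₀ ℕ) → K}
    (hg : g ∈ polynomialFunctions σ K s) (v : σ) (c : K) :
    (fun e => (e v : K) - c) * g ∈ polynomialFunctions σ K (s + 1) := by
  suffices h : polynomialFunctions σ K s ≤ (polynomialFunctions σ K (s + 1)).comap
      (LinearMap.mulLeft K fun e => (e v : K) - c) from h hg
  refine Submodule.span_le.mpr ?_
  rintro _ ⟨I, hI, rfl⟩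
  have hsum : ((fun e => (e v : K) - c) * fun e : σ →₀ ℕ => (multichoose e I : K)) =
      (I v + 1 : K) • (fun e => (multichoose e (I + Finsupp.single v 1) : K)) +
        ((I v : K) - c) • fun e => (multichoose e I : K) := by
    funext e
    have h := congrArg (Nat.cast : ℕ → K) (apply_mul_multichoose e I v)
    push_cast at h
    simp only [Pi.mul_apply, Pi.add_apply, Pi.smul_apply, smul_eq_mul]
    linear_combination h
  rw [Submodule.comap_coe, Set.mem_preimage, LinearMap.mulLeft_apply, hsum]
  exact Submodule.add_mem _
    (Submodule.smul_mem _ _ (multichoose_mem_polynomialFunctions (by simpa using hI)))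
    (Submodule.smul_mem _ _ (multichoose_mem_polynomialFunctions (hI.trans s.le_succ)))

lemma exists_mem_polynomialFunctions_separating [CharZero K] {ι : Type*} (s : Finset ι)
    (e : ι → (σ →₀ ℕ)) (e₀ : σ →₀ ℕ) (h : ∀ ν ∈ s, e ν ≠ e₀) :
    ∃ g ∈ polynomialFunctions σ K s.card, (∀ ν ∈ s, g (e ν) = 0) ∧ g e₀ ≠ 0 := by
  classical
  induction s using Finset.induction_on with
  | empty =>
    exact ⟨_, multichoose_mem_polynomialFunctions (I := 0) (by simp), by simp,
      by simp [multichoose]⟩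
  | insert a s ha ih =>
    obtain ⟨g, hg, hg_zero, hg_ne⟩ := ih fun ν hν => h ν (Finset.mem_insert_of_mem hν)
    obtain ⟨v, hv⟩ := DFunLike.ne_iff.mp (h a (Finset.mem_insert_self _ _))
    refine ⟨_, Finset.card_insert_of_notMem ha ▸ mul_mem_polynomialFunctions hg v (e a v),
      fun ν hν => ?_, mul_ne_zero (sub_ne_zero.mpr (Nat.cast_injective.ne hv.symm)) hg_ne⟩
    obtain rfl | hν := Finset.mem_insert.mp hν
    · simp
    · simp [hg_zero ν hν]

lemma rescaleCoeff_multichoose (I : σ →₀ ℕ) (P : MvPolynomial σ K) :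
    rescaleCoeff P (fun e => (multichoose e I : K)) = monomial I 1 * hasseDeriv I P := by
  classical
  ext e
  rw [coeff_rescaleCoeff, coeff_monomial_mul']
  split_ifs with h
  · rw [coeff_hasseDeriv, tsub_add_cancel_of_le h, one_mul]
  · simp [multichoose_eq_zero h]

lemma sum_mul_rescaleCoeff_eq_zero {ι : Type*} [Fintype ι] {s : ℕ} {φ f : ι → MvPolynomial σ K}
    (hf : ∑ ν, f ν • hasseJet s (φ ν) = 0) {g : (σ →₀ ℕ) → K}
    (hg : g ∈ polynomialFunctions σ K s) : ∑ ν, f ν * rescaleCoeff (φ ν) g = 0 := by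
  suffices h : polynomialFunctions σ K s ≤
      LinearMap.ker (∑ ν, LinearMap.mulLeft K (f ν) ∘ₗ rescaleCoeff (φ ν)) by
    simpa using h hg
  refine Submodule.span_le.mpr ?_
  rintro _ ⟨I, hI, rfl⟩
  have hfI : ∑ ν, f ν * hasseDeriv I (φ ν) = 0 := by
    simpa [hasseJet_apply] using congrFun hf ⟨I, hI⟩
  simp only [SetLike.mem_coe, LinearMap.mem_ker, LinearMap.sum_apply, LinearMap.comp_apply,
    LinearMap.mulLeft_apply, rescaleCoeff_multichoose, mul_left_comm (f _), ← Finset.mul_sum, hfI,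
    mul_zero]

end Interpolation

/-- In a linear relation with coefficients `f ν`, interpolation at the leading exponents isolates
the leading term of one summand `f ν * φ ν` of maximal degree. -/
lemma linearIndependent_hasseJet_of_injective_degree [Finite σ] [CharZero K] (m : MonomialOrder σ)
    {k : ℕ} {φ : Fin k → MvPolynomial σ K} (hφ : ∀ ν, φ ν ≠ 0)
    (hdeg : Function.Injective fun ν => m.degree (φ ν)) :
    LinearIndependent (MvPolynomial σ K) fun ν => hasseJet (k - 1) (φ ν) := by
  classical
  cases nonempty_fintype σ
  refine Fintype.linearIndependent_iff.mpr fun f hf => ?_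
  by_contra! hne
  obtain ⟨ν₀, hν₀, hmax⟩ := Finset.exists_max_image {ν | f ν ≠ 0}
    (fun ν => m.toSyn (m.degree (f ν) + m.degree (φ ν))) (by simpa [Finset.Nonempty] using hne)
  obtain ⟨g, hg, hg_zero, hg_ne⟩ := exists_mem_polynomialFunctions_separating (K := K)
    (Finset.univ.erase ν₀) (fun ν => m.degree (φ ν)) (m.degree (φ ν₀))
    fun ν hν h => Finset.ne_of_mem_erase hν (hdeg h)
  rw [Finset.card_erase_of_mem (Finset.mem_univ _), Finset.card_univ, Fintype.card_fin] at hg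
  have hsum : coeff (m.degree (f ν₀) + m.degree (φ ν₀))
      (∑ ν, f ν * rescaleCoeff (φ ν) g) = 0 := by
    rw [sum_mul_rescaleCoeff_eq_zero hf hg, coeff_zero]
  rw [coeff_sum, Finset.sum_eq_single ν₀ (fun ν _ hν => ?_) (by simp),
    m.coeff_mul_of_add_of_degree_le le_rfl (degree_rescaleCoeff_le m _ g),
    coeff_rescaleCoeff] at hsum
  · refine mul_ne_zero ?_ (mul_ne_zero hg_ne ?_) hsum
    · exact m.coeff_degree_ne_zero_iff.mpr (by simpa using hν₀)
    · exact m.coeff_degree_ne_zero_iff.mpr (hφ ν₀)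
  by_cases hfν : f ν = 0
  · simp [hfν]
  obtain hlt | heq := (hmax ν (by simpa using hfν)).lt_or_eq
  · refine m.coeff_eq_zero_of_lt ((m.degree_mul_le.trans ?_).trans_lt hlt)
    rw [map_add, map_add]
    exact add_le_add le_rfl (degree_rescaleCoeff_le m _ g)
  · rw [← m.toSyn.injective heq,
      m.coeff_mul_of_add_of_degree_le le_rfl (degree_rescaleCoeff_le m _ g), coeff_rescaleCoeff,
      hg_zero ν (Finset.mem_erase.mpr ⟨hν, Finset.mem_univ _⟩), zero_mul, mul_zero]

lemma degree_sub_smul_lt (m : MonomialOrder σ) {P Q : MvPolynomial σ K}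
    (hdeg : m.degree P = m.degree Q) (hQ : Q ≠ 0)
    (hne : P - (m.leadingCoeff P / m.leadingCoeff Q) • Q ≠ 0) :
    m.toSyn (m.degree (P - (m.leadingCoeff P / m.leadingCoeff Q) • Q)) < m.toSyn (m.degree P) := by
  refine lt_of_le_of_ne (m.degree_sub_le.trans (sup_le le_rfl ?_)) fun h => ?_
  · rw [hdeg]
    exact m.degree_smul_le
  · refine m.coeff_degree_ne_zero_iff.mpr hne ?_
    rw [m.toSyn.injective h, coeff_sub, coeff_smul, smul_eq_mul]
    nth_rw 2 [hdeg]
    change m.leadingCoeff P - m.leadingCoeff P / m.leadingCoeff Q * m.leadingCoeff Q = 0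
    rw [div_mul_cancel₀ _ (m.leadingCoeff_ne_zero_iff.mpr hQ), sub_self]

lemma linearIndependent_hasseJet_add_smul_iff {ι : Type*} (s : ℕ) (φ : ι → MvPolynomial σ K)
    {c : ι → K} {j : ι} (hc : c j = 0) :
    LinearIndependent (MvPolynomial σ K) (fun ν => hasseJet s (φ ν + c ν • φ j)) ↔
      LinearIndependent (MvPolynomial σ K) fun ν => hasseJet s (φ ν) := by
  rw [← linearIndependent_add_smul_iff (v := fun ν => hasseJet s (φ ν))
    (c := fun ν => (C (c ν) : MvPolynomial σ K)) (i := j) (by simp [hc])]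
  have hsmul (ν : ι) : hasseJet s (φ ν + c ν • φ j) =
      hasseJet s (φ ν) + (C (c ν) : MvPolynomial σ K) • hasseJet s (φ j) := by
    ext1 I
    simp [C_mul']
  simp only [hsmul]
  rfl

/-- Gaussian elimination on leading terms reduces to polynomials with distinct degrees. -/
lemma linearIndependent_hasseJet [Finite σ] [CharZero K] (m : MonomialOrder σ) {k : ℕ}
    {φ : Fin k → MvPolynomial σ K} (hφ : LinearIndependent K φ) :
    LinearIndependent (MvPolynomial σ K) fun ν => hasseJet (k - 1) (φ ν) := by
  classical
  induction hd : (fun ν => m.toSyn (m.degree (φ ν))) using WellFoundedLT.induction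
    generalizing φ with
  | ind d ih =>
    by_cases hinj : Function.Injective fun ν => m.degree (φ ν)
    · exact linearIndependent_hasseJet_of_injective_degree m (fun ν => hφ.ne_zero ν) hinj
    obtain ⟨i, j, hdeg, hij⟩ : ∃ i j, m.degree (φ i) = m.degree (φ j) ∧ i ≠ j := by
      simpa [Function.Injective] using hinj
    set c : Fin k → K := Pi.single i (-(m.leadingCoeff (φ i) / m.leadingCoeff (φ j))) with hc
    have hcj : c j = 0 := Pi.single_eq_of_ne hij.symm _
    have hφ' : LinearIndependent K (φ + (c · • φ j)) := (linearIndependent_add_smul_iff hcj).mpr hφ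
    have hφ'_i : (φ + (c · • φ j)) i =
        φ i - (m.leadingCoeff (φ i) / m.leadingCoeff (φ j)) • φ j := by
      simp [hc, sub_eq_add_neg]
    have hφ'_ne {ν : Fin k} (hν : ν ≠ i) : (φ + (c · • φ j)) ν = φ ν := by
      simp [hc, hν]
    have hlt : m.toSyn (m.degree ((φ + (c · • φ j)) i)) < m.toSyn (m.degree (φ i)) := by
      rw [hφ'_i]
      exact degree_sub_smul_lt m hdeg (hφ.ne_zero j) (hφ'_i ▸ hφ'.ne_zero i)
    refine (linearIndependent_hasseJet_add_smul_iff _ φ hcj).mp (ih _ ?_ hφ' rfl)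
    refine hd ▸ Pi.lt_def.mpr ⟨fun ν => ?_, i, hlt⟩
    obtain rfl | hν := eq_or_ne ν i
    · exact hlt.le
    · exact (congrArg (m.toSyn <| m.degree ·) (hφ'_ne hν)).le

lemma exists_det_ne_zero_of_linearIndependent {F J : Type*} [Field F] {k : ℕ} {w : Fin k → J → F}
    (hw : LinearIndependent F w) :
    ∃ i : Fin k → J, (Matrix.of fun μ ν => w ν (i μ)).det ≠ 0 := by
  classical
  have hspan : Submodule.span F (Set.range fun j ν => w ν j) = ⊤ := by
    by_contra hlt
    obtain ⟨g, hg_ne, hg⟩ := Submodule.exists_le_ker_of_lt_top _ (lt_top_iff_ne_top.mpr hlt)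
    refine hg_ne (LinearMap.pi_ext' fun ν => LinearMap.ext_ring ?_)
    refine Fintype.linearIndependent_iff.mp hw (fun ν => g (Pi.single ν 1)) ?_ ν
    funext j
    have hgj : g (fun ν => w ν j) = 0 := hg (Submodule.subset_span ⟨j, rfl⟩)
    rw [LinearMap.pi_apply_eq_sum_univ] at hgj
    have single_eq (ν : Fin k) : (Pi.single ν 1 : Fin k → F) = fun μ => if ν = μ then 1 else 0 := by
      funext μ
      simp [Pi.single_apply, eq_comm]
    simpa [single_eq, mul_comm] using hgj
  obtain ⟨κ, i, _, hi_span, hi_indep⟩ := exists_linearIndependent' F fun j ν => w ν j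
  let b := Module.Basis.mk hi_indep (hi_span.trans hspan).ge
  have : Finite κ := hi_indep.finite
  cases nonempty_fintype κ
  have hcard : Fintype.card κ = k := by
    rw [← Module.finrank_eq_card_basis b, Module.finrank_fin_fun]
  let E : Fin k ≃ κ := (Fintype.equivFinOfCardEq hcard).symm
  refine ⟨i ∘ E, ?_⟩
  rw [← isUnit_iff_ne_zero, ← Matrix.isUnit_iff_isUnit_det,
    ← Matrix.linearIndependent_rows_iff_isUnit]
  exact hi_indep.comp E E.injective

lemma exists_wronskian_ne_zero [Finite σ] [CharZero K] {k : ℕ} {φ : Fin k → MvPolynomial σ K}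
    (hφ : LinearIndependent K φ) :
    ∃ I : Fin k → (σ →₀ ℕ), (∀ μ, (I μ).degree ≤ k - 1) ∧
      (Matrix.of fun μ ν => hasseDeriv (I μ) (φ ν)).det ≠ 0 := by
  let F := FractionRing (MvPolynomial σ K)
  let := LinearOrder.lift' (Finite.equivFin σ) (Finite.equivFin σ).injective
  have hjet := (linearIndependent_hasseJet MonomialOrder.lex hφ).map'
    ((Algebra.linearMap (MvPolynomial σ K) F).compLeft _) <| LinearMap.ker_eq_bot.mpr <|
      (FaithfulSMul.algebraMap_injective (MvPolynomial σ K) F).comp_left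
  obtain ⟨I, hI⟩ := exists_det_ne_zero_of_linearIndependent
    ((LinearIndependent.iff_fractionRing (MvPolynomial σ K) F).mp hjet)
  refine ⟨fun μ => (I μ).1, fun μ => (I μ).2, fun h => hI ?_⟩
  have := congrArg (algebraMap (MvPolynomial σ K) F) h
  rw [RingHom.map_det, map_zero] at this
  exact this

end Wronskian

section ExternalProduct

open MvPolynomial

section RankFactorization

variable {ι K V : Type*} [Fintype ι] [Field K] [AddCommGroup V] [Module K V]

lemma exists_linearIndependent_rank_factorization (p : ι → V) :
    ∃ k ≤ Fintype.card ι, ∃ (φ : Fin k → V) (c : Fin k → ι → K),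
      LinearIndependent K φ ∧ LinearIndependent K c ∧ ∀ l, p l = ∑ j, c j l • φ j := by
  have finite_span : FiniteDimensional K (Submodule.span K (Set.range p)) :=
    FiniteDimensional.span_of_finite K (Set.finite_range p)
  set S := Submodule.span K (Set.range p)
  let b := Module.finBasis K S
  let p' : ι → S := fun l => ⟨p l, Submodule.subset_span ⟨l, rfl⟩⟩
  let evalAtFamily : Module.Dual K S →ₗ[K] ι → K := LinearMap.pi fun l => LinearMap.applyₗ (p' l)
  have evalAtFamily_ker : LinearMap.ker evalAtFamily = ⊥ := by
    refine LinearMap.ker_eq_bot'.mpr fun F hF => ?_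
    refine LinearMap.ext_on_range (v := p') ?_ fun l => congrFun hF l
    refine Submodule.map_injective_of_injective S.subtype_injective ?_
    rw [Submodule.map_span, ← Set.range_comp, Submodule.map_top, Submodule.range_subtype]
    rfl
  refine ⟨Module.finrank K S, finrank_range_le_card p, fun j => b j, fun j l => b.repr (p' l) j,
    b.linearIndependent.map' S.subtype S.ker_subtype, ?_, fun l => ?_⟩
  · have dual_indep := b.dualBasis.linearIndependent.map' evalAtFamily evalAtFamily_ker
    rwa [b.coe_dualBasis] at dual_indep
  · have sum_repr := congrArg S.subtype (b.sum_repr (p' l))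
    rw [map_sum] at sum_repr
    exact sum_repr.symm

end RankFactorization

variable {R : Type*} [CommRing R] {m : ℕ}

/-- A polynomial in `m` variables regarded as a polynomial in the last `m` of `m + 1` variables. -/
noncomputable def renameTail : MvPolynomial (Fin m) R →ₐ[R] MvPolynomial (Fin (m + 1)) R :=
  rename Fin.succ

/-- A polynomial in one variable regarded as a polynomial in the first of `m + 1` variables. The
external product of `φ` and `ψ` is then `renameTail φ * renameHead ψ`. -/
noncomputable def renameHead : MvPolynomial (Fin 1) R →ₐ[R] MvPolynomial (Fin (m + 1)) R :=
  rename fun _ => 0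

lemma single_zero_apply_zero (a : Fin 1 →₀ ℕ) : Finsupp.single 0 (a 0) = a :=
  Finsupp.ext fun x => by rw [Subsingleton.elim x 0, Finsupp.single_eq_same]

lemma mapDomain_succ_add_mapDomain_zero (a : Fin 1 →₀ ℕ) (b : Fin m →₀ ℕ) :
    b.mapDomain Fin.succ + a.mapDomain (fun _ => (0 : Fin (m + 1))) = Finsupp.cons (a 0) b := by
  rw [← single_zero_apply_zero a, Finsupp.mapDomain_single]
  ext x
  refine Fin.cases ?_ (fun x => ?_) x
  · rw [Finsupp.add_apply, Finsupp.mapDomain_of_notMem_range _ _ (by simp)]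
    simp
  · rw [Finsupp.add_apply, Finsupp.mapDomain_apply (Fin.succ_injective m)]
    simp

lemma cons_add_cons (a c : ℕ) (b d : Fin m →₀ ℕ) :
    (Finsupp.cons a b + Finsupp.cons c d : Fin (m + 1) →₀ ℕ) = Finsupp.cons (a + c) (b + d) := by
  ext x
  refine Fin.cases ?_ (fun x => ?_) x <;> simp

lemma multichoose_cons (a c : ℕ) (b d : Fin m →₀ ℕ) :
    multichoose (Finsupp.cons a b) (Finsupp.cons c d) = a.choose c * multichoose b d := by
  simp [multichoose, Fin.prod_univ_succ]

lemma coeff_cons_renameTail_mul_renameHead (φ : MvPolynomial (Fin m) R)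
    (ψ : MvPolynomial (Fin 1) R) (a : ℕ) (b : Fin m →₀ ℕ) :
    coeff (Finsupp.cons a b) (renameTail φ * renameHead ψ) =
      coeff b φ * coeff (Finsupp.single 0 a) ψ := by
  classical
  induction φ using MvPolynomial.induction_on' with
  | add p q hp hq => simp only [map_add, add_mul, coeff_add, hp, hq]
  | monomial b' c =>
    induction ψ using MvPolynomial.induction_on' with
    | add p q hp hq => simp only [map_add, mul_add, coeff_add, hp, hq]
    | monomial a' d =>
      have cons_eq_iff : Finsupp.cons (a' 0) b' = Finsupp.cons a b ↔
          b' = b ∧ a' = Finsupp.single 0 a := by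
        rw [Finsupp.cons_injective2.eq_iff, and_comm, ← single_zero_apply_zero a',
          (Finsupp.single_injective _).eq_iff, Finsupp.single_eq_same]
      rw [renameTail, renameHead, rename_monomial, rename_monomial, monomial_mul,
        mapDomain_succ_add_mapDomain_zero]
      simp only [coeff_monomial, cons_eq_iff, ite_and, ite_mul, zero_mul, mul_ite, mul_zero]
      split_ifs <;> rfl

lemma hasseDeriv_cons_renameTail_mul_renameHead (ν : Fin 1 →₀ ℕ) (i : Fin m →₀ ℕ)
    (φ : MvPolynomial (Fin m) R) (ψ : MvPolynomial (Fin 1) R) :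
    hasseDeriv (Finsupp.cons (ν 0) i) (renameTail φ * renameHead ψ) =
      renameTail (hasseDeriv i φ) * renameHead (hasseDeriv ν ψ) := by
  ext e
  obtain ⟨a, b, rfl⟩ : ∃ a b, e = Finsupp.cons a b := ⟨e 0, e.tail, (Finsupp.cons_tail e).symm⟩
  have single_add : (Finsupp.single 0 a + ν : Fin 1 →₀ ℕ) = Finsupp.single 0 (a + ν 0) := by
    rw [Finsupp.single_add, single_zero_apply_zero]
  simp only [coeff_hasseDeriv, cons_add_cons, coeff_cons_renameTail_mul_renameHead,
    multichoose_cons, single_add]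
  simp only [multichoose, Finset.univ_unique, Fin.default_eq_zero, Finset.prod_singleton,
    Finsupp.single_eq_same, Nat.cast_mul]
  ring

lemma translate_renameTail (β : Fin (m + 1) → R) (φ : MvPolynomial (Fin m) R) :
    translate β (renameTail φ) = renameTail (translate (fun h => β h.succ) φ) := by
  suffices h : (translate β).comp renameTail = renameTail.comp (translate fun h => β h.succ) from
    DFunLike.congr_fun h φ
  ext v
  simp [translate, renameTail]

lemma translate_renameHead (β : Fin (m + 1) → R) (ψ : MvPolynomial (Fin 1) R) :
    translate β (renameHead ψ) = renameHead (translate (fun _ => β 0) ψ) := by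
  suffices h : (translate β).comp renameHead = renameHead.comp (translate fun _ => β 0) from
    DFunLike.congr_fun h ψ
  ext v
  simp [translate, renameHead]

variable {K : Type*} [Field K]

lemma coeff_single_sum_monomial_single {r : ℕ} (c : Fin (r + 1) → K) (l : ℕ) :
    coeff (Finsupp.single (0 : Fin 1) l)
        (∑ a : Fin (r + 1), monomial (Finsupp.single 0 (a : ℕ)) (c a)) =
      if h : l < r + 1 then c ⟨l, h⟩ else 0 := by
  simp only [coeff_sum, coeff_monomial, (Finsupp.single_injective _).eq_iff]
  split_ifs with h
  · rw [Finset.sum_eq_single_of_mem ⟨l, h⟩ (Finset.mem_univ _) fun a _ ha =>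
      if_neg fun hl => ha (Fin.ext hl), if_pos rfl]
  · exact Finset.sum_eq_zero fun a _ => if_neg fun hl => h (lt_of_eq_of_lt hl.symm a.2)

lemma exists_linearIndependent_externalProduct_decomposition {P : MvPolynomial (Fin (m + 1)) K}
    (hP : P ≠ 0) {r : ℕ} (hr : P.degreeOf 0 ≤ r) :
    ∃ (k : ℕ) (φ : Fin k → MvPolynomial (Fin m) K) (ψ : Fin k → MvPolynomial (Fin 1) K),
      1 ≤ k ∧ k ≤ r + 1 ∧ LinearIndependent K φ ∧ LinearIndependent K ψ ∧
      P = ∑ j, renameTail (φ j) * renameHead (ψ j) := by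
  obtain ⟨k, hk, φ, c, hφ, hc, slice_eq⟩ := exists_linearIndependent_rank_factorization (K := K)
    fun a : Fin (r + 1) => (finSuccEquiv K m P).coeff a
  let ψ : Fin k → MvPolynomial (Fin 1) K := fun j =>
    ∑ a : Fin (r + 1), monomial (Finsupp.single 0 (a : ℕ)) (c j a)
  have coeff_ψ (j l) := coeff_single_sum_monomial_single (c j) l
  have P_eq : P = ∑ j, renameTail (φ j) * renameHead (ψ j) := by
    ext e
    obtain ⟨a, b, rfl⟩ : ∃ a b, e = Finsupp.cons a b := ⟨e 0, e.tail, (Finsupp.cons_tail e).symm⟩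
    simp_rw [coeff_sum, coeff_cons_renameTail_mul_renameHead, ψ, coeff_ψ]
    split_ifs with ha
    · rw [← finSuccEquiv_coeff_coeff, slice_eq ⟨a, ha⟩, coeff_sum]
      exact Finset.sum_congr rfl fun j _ => by rw [coeff_smul, smul_eq_mul, mul_comm]
    · simp only [mul_zero, Finset.sum_const_zero]
      by_contra hcoeff
      have := (degreeOf_le_iff.mp hr) _ (mem_support_iff.mpr hcoeff)
      rw [Finsupp.cons_zero] at this
      lia
  refine ⟨k, φ, ψ, ?_, by simpa using hk, hφ, ?_, P_eq⟩
  · refine Nat.one_le_iff_ne_zero.mpr fun hk0 => hP ?_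
    subst hk0
    simpa using P_eq
  · let coeffs : MvPolynomial (Fin 1) K →ₗ[K] Fin (r + 1) → K :=
      LinearMap.pi fun a => lcoeff K (Finsupp.single 0 (a : ℕ))
    refine LinearIndependent.of_comp coeffs ?_
    rwa [show coeffs ∘ ψ = c from funext₂ fun j a => (coeff_ψ j a).trans (dif_pos a.2)]

end ExternalProduct

section Index

open MvPolynomial

variable {σ : Type*} [Fintype σ] {r : σ → ℕ}

/-- The order of the multi-index `I` when the variable `h` has weight `1 / r h`. -/
noncomputable def weightedOrder (r : σ → ℕ) (I : σ →₀ ℕ) : ℝ := ∑ h, (I h : ℝ) / r h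

lemma weightedOrder_nonneg (r : σ → ℕ) (I : σ →₀ ℕ) : 0 ≤ weightedOrder r I :=
  Finset.sum_nonneg fun _ _ => by positivity

lemma weightedOrder_add (r : σ → ℕ) (I J : σ →₀ ℕ) :
    weightedOrder r (I + J) = weightedOrder r I + weightedOrder r J := by
  simp [weightedOrder, add_div, Finset.sum_add_distrib]

lemma weightedOrder_cons {m : ℕ} (r : Fin (m + 1) → ℕ) (a : ℕ) (b : Fin m →₀ ℕ) :
    weightedOrder r (Finsupp.cons a b) = a / r 0 + weightedOrder (fun h => r h.succ) b := by
  simp [weightedOrder, Fin.sum_univ_succ]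

variable {R : Type*} [CommRing R]

/-- `IndexGE r Q t` says that the index at the origin of `Q`, with respect to the weights `1 / r h`,
is at least `t`: only monomials of weighted order at least `t` occur in `Q`. -/
def IndexGE (r : σ → ℕ) (Q : MvPolynomial σ R) (t : ℝ) : Prop :=
  ∀ I, coeff I Q ≠ 0 → t ≤ weightedOrder r I

lemma indexGE_zero (r : σ → ℕ) (Q : MvPolynomial σ R) : IndexGE r Q 0 :=
  fun I _ => weightedOrder_nonneg r I

namespace IndexGE

variable {P Q : MvPolynomial σ R} {t u : ℝ}

lemma mono (hP : IndexGE r P t) (h : u ≤ t) : IndexGE r P u :=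
  fun I hI => h.trans (hP I hI)

lemma max_zero (hP : IndexGE r P t) : IndexGE r P (max 0 t) :=
  fun I hI => max_le (weightedOrder_nonneg r I) (hP I hI)

lemma neg (hP : IndexGE r P t) : IndexGE r (-P) t :=
  fun I hI => hP I (by simpa using hI)

lemma mul (hP : IndexGE r P t) (hQ : IndexGE r Q u) : IndexGE r (P * Q) (t + u) := by
  classical
  intro I hI
  rw [coeff_mul] at hI
  obtain ⟨⟨J, L⟩, hJL, hne⟩ := Finset.exists_ne_zero_of_sum_ne_zero hI
  rw [← Finset.HasAntidiagonal.mem_antidiagonal.mp hJL, weightedOrder_add]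
  exact add_le_add (hP _ (left_ne_zero_of_mul hne)) (hQ _ (right_ne_zero_of_mul hne))

lemma sum {ι : Type*} {s : Finset ι} {f : ι → MvPolynomial σ R}
    (h : ∀ i ∈ s, IndexGE r (f i) t) : IndexGE r (∑ i ∈ s, f i) t := by
  intro I hI
  rw [coeff_sum] at hI
  obtain ⟨i, hi, hne⟩ := Finset.exists_ne_zero_of_sum_ne_zero hI
  exact h i hi I hne

lemma prod {ι : Type*} {s : Finset ι} {f : ι → MvPolynomial σ R} {t : ι → ℝ}
    (h : ∀ i ∈ s, IndexGE r (f i) (t i)) : IndexGE r (∏ i ∈ s, f i) (∑ i ∈ s, t i) := by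
  classical
  induction s using Finset.induction_on with
  | empty => simpa using indexGE_zero r 1
  | insert a s ha ih =>
    rw [Finset.prod_insert ha, Finset.sum_insert ha]
    exact (h a (Finset.mem_insert_self a s)).mul
      (ih fun i hi => h i (Finset.mem_insert_of_mem hi))

lemma hasseDeriv (hP : IndexGE r P t) (I : σ →₀ ℕ) :
    IndexGE r (hasseDeriv I P) (t - weightedOrder r I) := by
  intro e he
  rw [sub_le_iff_le_add, ← weightedOrder_add]
  exact hP _ (coeff_ne_zero_of_coeff_hasseDeriv_ne_zero he)

lemma det {n : Type*} [Fintype n] [DecidableEq n] {M : Matrix n n (MvPolynomial σ R)} {t : n → ℝ}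
    (h : ∀ i j, IndexGE r (M i j) (t j)) : IndexGE r M.det (∑ j, t j) := by
  rw [Matrix.det_apply]
  refine IndexGE.sum fun s _ => ?_
  have index_prod := IndexGE.prod (s := Finset.univ) fun i _ => h (s i) i
  rcases Int.units_eq_one_or (Equiv.Perm.sign s) with hs | hs
  · simpa [hs] using index_prod
  · simpa [hs] using index_prod.neg

end IndexGE

end Index

section Determinant

open MvPolynomial

variable {σ n : Type*} [Fintype n] [DecidableEq n]

lemma l1Norm_det_le {M : Matrix n n (MvPolynomial σ ℤ)} {B : ℝ} (h : ∀ i j, l1Norm (M i j) ≤ B) :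
    l1Norm M.det ≤ (Fintype.card n).factorial * B ^ Fintype.card n := by
  have l1Norm_term_le (s : Equiv.Perm n) :
      l1Norm (Equiv.Perm.sign s • ∏ i, M (s i) i) ≤ B ^ Fintype.card n := by
    have l1Norm_prod_le : l1Norm (∏ i, M (s i) i) ≤ B ^ Fintype.card n := by
      refine (weightedL1Norm_prod_le zero_le_one _ _).trans ?_
      refine (Finset.prod_le_prod (fun i _ => l1Norm_nonneg _) fun i _ => h (s i) i).trans ?_
      simp
    rcases Int.units_eq_one_or (Equiv.Perm.sign s) with hs | hs
    · simpa [hs] using l1Norm_prod_le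
    · simpa [hs, l1Norm_neg] using l1Norm_prod_le
  rw [Matrix.det_apply]
  refine (weightedL1Norm_sum_le zero_le_one _ _).trans ?_
  refine (Finset.sum_le_sum fun s _ => l1Norm_term_le s).trans ?_
  simp [Fintype.card_perm]

lemma degreeOf_det_le {R : Type*} [CommRing R] {M : Matrix n n (MvPolynomial σ R)} {v : σ} {d : ℕ}
    (h : ∀ i j, degreeOf v (M i j) ≤ d) : degreeOf v M.det ≤ Fintype.card n * d := by
  rw [Matrix.det_apply]
  refine (degreeOf_sum_le v _ _).trans (Finset.sup_le fun s _ => ?_)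
  have degreeOf_prod_le' : degreeOf v (∏ i, M (s i) i) ≤ Fintype.card n * d :=
    (degreeOf_prod_le v _ _).trans (Finset.sum_le_card_nsmul _ _ _ fun i _ => h (s i) i)
  rcases Int.units_eq_one_or (Equiv.Perm.sign s) with hs | hs
  · simpa [hs] using degreeOf_prod_le'
  · simpa [hs, degreeOf_neg] using degreeOf_prod_le'

end Determinant

section RationalZero

open MvPolynomial

lemma isPrimitive_C_mul_X_sub_C {p q : ℤ} (hpq : IsCoprime p q) :
    (Polynomial.C q * Polynomial.X - Polynomial.C p).IsPrimitive := by
  intro d hd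
  rw [Polynomial.C_dvd_iff_dvd_coeff] at hd
  have hd1 := hd 1
  rw [Polynomial.coeff_sub, Polynomial.coeff_C_mul, Polynomial.coeff_C_succ] at hd1
  exact hpq.isUnit_of_dvd' (by simpa using hd 0) (by simpa using hd1)

lemma isPrimitive_pow {L : Polynomial ℤ} (hL : L.IsPrimitive) (n : ℕ) : (L ^ n).IsPrimitive := by
  induction n with
  | zero => exact pow_zero L ▸ Polynomial.isPrimitive_one
  | succ n ih => exact pow_succ L n ▸ ih.mul hL

lemma pow_rootMultiplicity_dvd_leadingCoeff {p q : ℤ} (hq : q ≠ 0) (hpq : IsCoprime p q)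
    (P : Polynomial ℤ) :
    q ^ (P.map (Int.castRingHom ℚ)).rootMultiplicity (p / q : ℚ) ∣ P.leadingCoeff := by
  set n := (P.map (Int.castRingHom ℚ)).rootMultiplicity (p / q : ℚ)
  let L : Polynomial ℤ := Polynomial.C q * Polynomial.X - Polynomial.C p
  have L_map_eq : L.map (Int.castRingHom ℚ) =
      Polynomial.C (q : ℚ) * (Polynomial.X - Polynomial.C (p / q : ℚ)) := by
    rw [mul_sub, ← Polynomial.C_mul, mul_div_cancel₀ _ (Int.cast_ne_zero.mpr hq)]
    simp [L]
  have L_pow_dvd_map : (L ^ n).map (Int.castRingHom ℚ) ∣ P.map (Int.castRingHom ℚ) := by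
    rw [Polynomial.map_pow, L_map_eq, mul_pow, ← Polynomial.C_pow]
    have C_isUnit : IsUnit (Polynomial.C (q ^ n : ℚ)) :=
      Polynomial.isUnit_C.mpr (pow_ne_zero n (Int.cast_ne_zero.mpr hq)).isUnit
    exact C_isUnit.mul_left_dvd.mpr (Polynomial.pow_rootMultiplicity_dvd _ _)
  have L_pow_dvd : L ^ n ∣ P :=
    (Polynomial.IsPrimitive.Int.dvd_iff_map_cast_dvd_map_cast _ _
      (isPrimitive_pow (isPrimitive_C_mul_X_sub_C hpq) n)).mpr L_pow_dvd_map
  have L_leadingCoeff : L.leadingCoeff = q := by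
    simpa [L, sub_eq_add_neg] using Polynomial.leadingCoeff_linear (b := -p) hq
  simpa [L_leadingCoeff] using Polynomial.leadingCoeff_dvd_leadingCoeff L_pow_dvd

lemma coeff_single_eq_coeff_uniqueAlgEquiv {R : Type*} [CommRing R] (Q : MvPolynomial (Fin 1) R)
    (e : ℕ) : coeff (Finsupp.single 0 e) Q = (uniqueAlgEquiv R (Fin 1) Q).coeff e :=
  (coeff_uniqueAlgEquiv R Q e).symm

lemma uniqueAlgEquiv_translate {R : Type*} [CommRing R] (β : R) (Q : MvPolynomial (Fin 1) R) :
    uniqueAlgEquiv R (Fin 1) (translate (fun _ => β) Q) =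
      Polynomial.taylor β (uniqueAlgEquiv R (Fin 1) Q) := by
  suffices h : (uniqueAlgEquiv R (Fin 1)).toAlgHom.comp (translate fun _ => β) =
      (Polynomial.taylorAlgHom β).comp (uniqueAlgEquiv R (Fin 1)).toAlgHom from
    DFunLike.congr_fun h Q
  ext v
  simp [translate, uniqueAlgEquiv]

lemma exists_coeff_translate_ne_zero_and_pow_dvd_leadingCoeff {V : MvPolynomial (Fin 1) ℚ}
    (hV : V ≠ 0) {p q : ℤ} (hq : q ≠ 0) (hpq : IsCoprime p q) {V' : Polynomial ℤ} {c : ℚ}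
    (hc : c ≠ 0) (hV' : ∀ e : ℕ, (V'.coeff e : ℚ) = c * coeff (Finsupp.single 0 e) V) :
    ∃ e : ℕ, coeff (Finsupp.single 0 e) (translate (fun _ => (p / q : ℚ)) V) ≠ 0 ∧
      q ^ e ∣ V'.leadingCoeff := by
  set f := uniqueAlgEquiv ℚ (Fin 1) V
  have map_eq : V'.map (Int.castRingHom ℚ) = Polynomial.C c * f := by
    ext e
    rw [Polynomial.coeff_map, Polynomial.coeff_C_mul, ← coeff_single_eq_coeff_uniqueAlgEquiv]
    exact hV' e
  have map_ne_zero : V'.map (Int.castRingHom ℚ) ≠ 0 := by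
    rw [map_eq]
    exact mul_ne_zero (Polynomial.C_ne_zero.mpr hc)
      ((map_ne_zero_iff _ (AlgEquiv.injective _)).mpr hV)
  have taylor_ne_zero : Polynomial.taylor (p / q : ℚ) (V'.map (Int.castRingHom ℚ)) ≠ 0 :=
    (Polynomial.taylor_eq_zero _ _).not.mpr map_ne_zero
  refine ⟨_, fun h => ?_, pow_rootMultiplicity_dvd_leadingCoeff hq hpq V'⟩
  refine Polynomial.coeff_natTrailingDegree_ne_zero.mpr taylor_ne_zero ?_
  rw [Polynomial.taylor_apply, ← Polynomial.rootMultiplicity_eq_natTrailingDegree,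
    ← Polynomial.taylor_apply]
  rw [coeff_single_eq_coeff_uniqueAlgEquiv, uniqueAlgEquiv_translate] at h
  nth_rw 1 [map_eq]
  rw [Polynomial.taylor_mul, Polynomial.taylor_C, Polynomial.coeff_C_mul, h, mul_zero]

end RationalZero

lemma sum_max_sub_div_ge {k r : ℕ} (hk : k ≤ r + 1) (hr : 1 ≤ r) {δ : ℝ} (hδ : 0 ≤ δ)
    (hδ1 : δ ≤ 1) : k * δ ^ 2 / 8 ≤ ∑ ν ∈ Finset.range k, max 0 (δ - ν / r) := by
  have r_pos : (0 : ℝ) < r := by exact_mod_cast hr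
  -- the `n` smallest indices satisfy `ν / r ≤ δ / 2`
  set n := min k (⌊r * δ / 2⌋₊ + 1) with n_def
  have n_ge : k * δ / 4 ≤ n := by
    have k_le : (k : ℝ) ≤ r + 1 := by exact_mod_cast hk
    have one_le_r : (1 : ℝ) ≤ r := by exact_mod_cast hr
    rw [n_def]
    push_cast
    refine le_min (by nlinarith [k.cast_nonneg (α := ℝ)]) ?_
    nlinarith [Nat.lt_floor_add_one (r * δ / 2), one_le_r]
  have half_le {ν : ℕ} (hν : ν ∈ Finset.range n) : δ / 2 ≤ max 0 (δ - ν / r) := by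
    have ν_le : ν ≤ ⌊r * δ / 2⌋₊ := by
      have := Finset.mem_range.mp hν
      lia
    have := (Nat.le_floor_iff (by positivity)).mp ν_le
    have : (ν : ℝ) / r ≤ δ / 2 := by
      rw [div_le_iff₀ r_pos]
      linarith
    exact le_max_of_le_right (by linarith)
  calc k * δ ^ 2 / 8 = (k * δ / 4) * (δ / 2) := by ring
    _ ≤ n * (δ / 2) := by gcongr
    _ = ∑ ν ∈ Finset.range n, δ / 2 := by simp
    _ ≤ ∑ ν ∈ Finset.range n, max 0 (δ - ν / r) := Finset.sum_le_sum fun ν hν => half_le hν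
    _ ≤ ∑ ν ∈ Finset.range k, max 0 (δ - ν / r) :=
      Finset.sum_le_sum_of_subset_of_nonneg (Finset.range_mono (min_le_left _ _))
        fun _ _ _ => le_max_left _ _

section SplitWronskian

open MvPolynomial

variable {m k : ℕ} {R : Type*} [CommRing R]

/-- The determinant of the Hasse derivatives of `P` whose order in the first variable is prescribed
by the column and whose order in the remaining variables is prescribed by the row. If `P` is a sum
of external products, it splits into an external product of two generalized Wronskians. -/
noncomputable def splitWronskian (i : Fin k → Fin m →₀ ℕ) (ν : Fin k → ℕ)
    (P : MvPolynomial (Fin (m + 1)) R) : MvPolynomial (Fin (m + 1)) R :=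
  (Matrix.of fun μ a => hasseDeriv (Finsupp.cons (ν a) (i μ)) P).det

lemma splitWronskian_map {S : Type*} [CommRing S] (g : R →+* S) (i : Fin k → Fin m →₀ ℕ)
    (ν : Fin k → ℕ) (P : MvPolynomial (Fin (m + 1)) R) :
    splitWronskian i ν (P.map g) = (splitWronskian i ν P).map g := by
  rw [splitWronskian, splitWronskian, RingHom.map_det]
  congr 1
  ext1 μ a
  exact hasseDeriv_map g _ P

lemma splitWronskian_translate (β : Fin (m + 1) → R) (i : Fin k → Fin m →₀ ℕ) (ν : Fin k → ℕ)
    (P : MvPolynomial (Fin (m + 1)) R) :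
    splitWronskian i ν (translate β P) = translate β (splitWronskian i ν P) := by
  rw [splitWronskian, splitWronskian, AlgHom.map_det]
  congr 1
  ext1 μ a
  exact hasseDeriv_translate β _ P

lemma splitWronskian_sum_externalProduct (i : Fin k → Fin m →₀ ℕ) (ν : Fin k → Fin 1 →₀ ℕ)
    (φ : Fin k → MvPolynomial (Fin m) R) (ψ : Fin k → MvPolynomial (Fin 1) R) :
    splitWronskian i (fun a => ν a 0) (∑ j, renameTail (φ j) * renameHead (ψ j)) =
      renameTail (Matrix.of fun μ j => hasseDeriv (i μ) (φ j)).det *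
        renameHead (Matrix.of fun a j => hasseDeriv (ν a) (ψ j)).det := by
  rw [AlgHom.map_det, AlgHom.map_det, ← Matrix.det_transpose (AlgHom.mapMatrix renameHead _),
    ← Matrix.det_mul, splitWronskian]
  congr 1
  ext1 μ a
  simp only [Matrix.of_apply, map_sum, hasseDeriv_cons_renameTail_mul_renameHead, Matrix.mul_apply,
    AlgHom.mapMatrix_apply, Matrix.map_apply, Matrix.transpose_apply]

lemma degreeOf_hasseDeriv_le {σ : Type*} [Finite σ] (I : σ →₀ ℕ) (P : MvPolynomial σ R) (v : σ) :
    degreeOf v (hasseDeriv I P) ≤ degreeOf v P := by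
  refine degreeOf_le_iff.mpr fun e he => ?_
  have he' := coeff_ne_zero_of_coeff_hasseDeriv_ne_zero (mem_support_iff.mp he)
  have := monomial_le_degreeOf v (mem_support_iff.mpr he')
  rw [Finsupp.add_apply] at this
  lia

lemma degreeOf_splitWronskian_le (i : Fin k → Fin m →₀ ℕ) (ν : Fin k → ℕ)
    (P : MvPolynomial (Fin (m + 1)) R) (v : Fin (m + 1)) :
    degreeOf v (splitWronskian i ν P) ≤ k * degreeOf v P := by
  have det_le := degreeOf_det_le fun μ a => degreeOf_hasseDeriv_le (Finsupp.cons (ν a) (i μ)) P v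
  rwa [Fintype.card_fin] at det_le

lemma l1Norm_splitWronskian_le (i : Fin k → Fin m →₀ ℕ) (ν : Fin k → ℕ)
    (P : MvPolynomial (Fin (m + 1)) ℤ) :
    l1Norm (splitWronskian i ν P) ≤ (k * (2 ^ P.totalDegree * l1Norm P)) ^ k := by
  have P_nonneg := l1Norm_nonneg P
  have factorial_le : (k.factorial : ℝ) ≤ (k : ℝ) ^ k := by exact_mod_cast Nat.factorial_le_pow k
  have det_le := l1Norm_det_le fun μ a => l1Norm_hasseDeriv_le (Finsupp.cons (ν a) (i μ)) P
  rw [Fintype.card_fin] at det_le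
  rw [mul_pow]
  exact det_le.trans (by gcongr)

lemma IndexGE.splitWronskian {r : Fin (m + 1) → ℕ} {P : MvPolynomial (Fin (m + 1)) R} {t ω : ℝ}
    (hP : IndexGE r P t) {i : Fin k → Fin m →₀ ℕ}
    (hi : ∀ μ, weightedOrder (fun h => r h.succ) (i μ) ≤ ω) (ν : Fin k → ℕ) :
    IndexGE r (splitWronskian i ν P) (∑ a, max 0 (t - ω - ν a / r 0)) := by
  refine IndexGE.det fun μ a => ((hP.hasseDeriv _).mono ?_).max_zero
  rw [weightedOrder_cons]
  linarith [hi μ]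

lemma exists_splitWronskian_map_eq {P : MvPolynomial (Fin (m + 1)) ℤ} (hP : P ≠ 0) {r : ℕ}
    (hr : degreeOf 0 P ≤ r) :
    ∃ k, 1 ≤ k ∧ k ≤ r + 1 ∧ ∃ (i : Fin k → Fin m →₀ ℕ) (ν : Fin k → ℕ)
      (U : MvPolynomial (Fin m) ℚ) (V : MvPolynomial (Fin 1) ℚ),
      (∀ μ, (i μ).degree ≤ k - 1) ∧ (∀ a, ν a ≤ k - 1) ∧ ν.Injective ∧ U ≠ 0 ∧ V ≠ 0 ∧
      (splitWronskian i ν P).map (Int.castRingHom ℚ) = renameTail U * renameHead V := by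
  set PQ := P.map (Int.castRingHom ℚ) with PQ_def
  have PQ_ne_zero : PQ ≠ 0 :=
    (map_ne_zero_iff _ (map_injective _ Int.cast_injective)).mpr hP
  have PQ_degreeOf : degreeOf 0 PQ ≤ r := degreeOf_le_iff.mpr fun e he =>
    (monomial_le_degreeOf 0 (support_map_subset _ _ he)).trans hr
  obtain ⟨k, φ, ψ, one_le_k, k_le, hφ, hψ, decomposition⟩ :=
    exists_linearIndependent_externalProduct_decomposition PQ_ne_zero PQ_degreeOf
  obtain ⟨i, hi, hU⟩ := exists_wronskian_ne_zero hφ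
  obtain ⟨ν, hν, hV⟩ := exists_wronskian_ne_zero hψ
  refine ⟨k, one_le_k, k_le, i, fun a => ν a 0, _, _, hi, fun a => ?_, fun a b hab => ?_, hU, hV,
    ?_⟩
  · simpa [Finsupp.degree_eq_sum] using hν a
  · by_contra hne
    have ν_eq : ν a = ν b := by
      rw [← single_zero_apply_zero (ν a), ← single_zero_apply_zero (ν b)]
      exact congrArg _ hab
    exact hV (Matrix.det_zero_of_row_eq hne (by ext1 j; simp [ν_eq]))
  · rw [← splitWronskian_map, ← PQ_def, decomposition, splitWronskian_sum_externalProduct]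

end SplitWronskian

section Slices

open MvPolynomial

variable {m : ℕ}

lemma l1Norm_coeff_finSuccEquiv_le (W : MvPolynomial (Fin (m + 1)) ℤ) (a : ℕ) :
    l1Norm ((finSuccEquiv ℤ m W).coeff a) ≤ l1Norm W := by
  classical
  rw [l1Norm_eq_sum subset_rfl, l1Norm_eq_sum subset_rfl]
  simp_rw [finSuccEquiv_coeff_coeff]
  rw [← Finset.sum_image (f := fun e => ‖coeff e W‖) (Finsupp.cons_right_injective a).injOn]
  refine Finset.sum_le_sum_of_subset_of_nonneg (fun e he => ?_) fun _ _ _ => norm_nonneg _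
  obtain ⟨b, hb, rfl⟩ := Finset.mem_image.mp he
  rwa [mem_support_iff, finSuccEquiv_coeff_coeff, ← mem_support_iff] at hb

lemma exists_polynomial_coeff_eq_coeff_cons {R : Type*} [CommRing R]
    (W : MvPolynomial (Fin (m + 1)) R) (b : Fin m →₀ ℕ) :
    ∃ f : Polynomial R, ∀ e, f.coeff e = coeff (Finsupp.cons e b) W := by
  refine ⟨∑ e ∈ Finset.range (degreeOf 0 W + 1),
    Polynomial.monomial e (coeff (Finsupp.cons e b) W), fun e => ?_⟩
  simp_rw [Polynomial.finsetSum_coeff, Polynomial.coeff_monomial, Finset.sum_ite_eq',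
    Finset.mem_range]
  refine ite_eq_left_iff.mpr fun he => ?_
  by_contra hcoeff
  have := monomial_le_degreeOf 0 (mem_support_iff.mpr (Ne.symm hcoeff))
  rw [Finsupp.cons_zero] at this
  lia

variable {W : MvPolynomial (Fin (m + 1)) ℤ} {U : MvPolynomial (Fin m) ℚ}
  {V : MvPolynomial (Fin 1) ℚ}

lemma exists_coeff_finSuccEquiv_map_eq_smul
    (hW : W.map (Int.castRingHom ℚ) = renameTail U * renameHead V) (hV : V ≠ 0) :
    ∃ a, ∃ c : ℚ, c ≠ 0 ∧ ((finSuccEquiv ℤ m W).coeff a).map (Int.castRingHom ℚ) = c • U := by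
  obtain ⟨a, ha⟩ := MvPolynomial.ne_zero_iff.mp hV
  refine ⟨a 0, _, ha, ?_⟩
  ext b
  rw [coeff_map, finSuccEquiv_coeff_coeff, ← coeff_map, hW, coeff_cons_renameTail_mul_renameHead,
    single_zero_apply_zero, coeff_smul, smul_eq_mul, mul_comm]

lemma exists_coeff_translate_ne_zero_and_mul_log_le
    (hW : W.map (Int.castRingHom ℚ) = renameTail U * renameHead V) (hU : U ≠ 0) (hV : V ≠ 0)
    {p q : ℤ} (hq : 1 ≤ q) (hpq : IsCoprime p q) :
    ∃ e : ℕ, coeff (Finsupp.single 0 e) (translate (fun _ => (p / q : ℚ)) V) ≠ 0 ∧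
      e * Real.log q ≤ Real.log (l1Norm W) := by
  obtain ⟨b, hb⟩ := MvPolynomial.ne_zero_iff.mp hU
  obtain ⟨a, ha⟩ := MvPolynomial.ne_zero_iff.mp hV
  obtain ⟨V', hV'⟩ := exists_polynomial_coeff_eq_coeff_cons W b
  have V'_eq (e : ℕ) : (V'.coeff e : ℚ) = coeff b U * coeff (Finsupp.single 0 e) V := by
    rw [hV', ← coeff_cons_renameTail_mul_renameHead, ← hW, coeff_map]
    rfl
  have V'_ne_zero : V' ≠ 0 := by
    rintro rfl
    have := V'_eq (a 0)
    simp [single_zero_apply_zero, ha, hb] at this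
  obtain ⟨e, coeff_ne_zero, pow_dvd⟩ :=
    exists_coeff_translate_ne_zero_and_pow_dvd_leadingCoeff hV (by lia) hpq hb V'_eq
  refine ⟨e, coeff_ne_zero, ?_⟩
  have q_pos : (0 : ℝ) < q := by exact_mod_cast hq
  have pow_le_abs : q ^ e ≤ |V'.leadingCoeff| :=
    Int.le_of_dvd (abs_pos.mpr (Polynomial.leadingCoeff_ne_zero.mpr V'_ne_zero))
      ((dvd_abs _ _).mpr pow_dvd)
  have pow_le_l1Norm : (q : ℝ) ^ e ≤ l1Norm W := by
    refine le_trans ?_ (norm_coeff_le_l1Norm W (Finsupp.cons V'.natDegree b))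
    rw [← hV', Int.norm_eq_abs]
    exact_mod_cast pow_le_abs
  simpa [Real.log_pow] using Real.log_le_log (pow_pos q_pos e) pow_le_l1Norm

end Slices

section RothLemma

open MvPolynomial

/-- The hypotheses of Roth's lemma, with smallness parameter `ω`: the degrees `r` decrease rapidly,
`E` is a common lower bound of the quantities `r h * log (q h)`, and both the degrees and the
logarithmic height of the polynomial `P` are small compared with `E`. -/
structure RothAdmissible {m : ℕ} (ω : ℝ) (r : Fin m → ℕ) (p q : Fin m → ℤ) (E : ℝ)
    (P : MvPolynomial (Fin m) ℤ) : Prop where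
  ne_zero : P ≠ 0
  degreeOf_le : ∀ h, degreeOf h P ≤ r h
  one_le_degree : ∀ h, 1 ≤ r h
  one_le_den : ∀ h, 1 ≤ q h
  isCoprime : ∀ h, IsCoprime (p h) (q h)
  degree_gap : ∀ i j, i < j → (r i : ℝ) ≤ ω * r j
  le_degree_mul_log : ∀ h, E ≤ r h * Real.log (q h)
  degree_le : ∀ h, (r h : ℝ) ≤ ω * E
  log_l1Norm_le : Real.log (l1Norm P) ≤ ω * E

lemma weightedOrder_const_mul {σ : Type*} [Fintype σ] (k : ℕ) (r : σ → ℕ) (I : σ →₀ ℕ) :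
    weightedOrder (fun h => k * r h) I = weightedOrder r I / k := by
  simp only [weightedOrder, Finset.sum_div, Nat.cast_mul, div_div, mul_comm]

lemma sum_comp_eq_sum_range_of_injective {k : ℕ} {ν : Fin k → ℕ} (hν : ∀ a, ν a ≤ k - 1)
    (hinj : ν.Injective) (F : ℕ → ℝ) : ∑ a, F (ν a) = ∑ n ∈ Finset.range k, F n := by
  have image_eq : Finset.univ.image ν = Finset.range k := by
    refine Finset.eq_of_subset_of_card_le (fun n hn => ?_) ?_
    · obtain ⟨a, -, rfl⟩ := Finset.mem_image.mp hn
      exact Finset.mem_range.mpr (by have := hν a; have := a.2; lia)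
    · rw [Finset.card_image_of_injective _ hinj, Finset.card_range, Finset.card_fin]
  rw [← image_eq, Finset.sum_image hinj.injOn]

namespace RothAdmissible

variable {m k : ℕ} {ω E : ℝ} {r : Fin (m + 1) → ℕ} {p q : Fin (m + 1) → ℤ}
  {P : MvPolynomial (Fin (m + 1)) ℤ}

lemma degree_pos (h : RothAdmissible ω r p q E P) (j : Fin (m + 1)) : (0 : ℝ) < r j := by
  exact_mod_cast h.one_le_degree j

lemma bound_pos (h : RothAdmissible ω r p q E P) (hω : 0 < ω) : 0 < E :=
  pos_of_mul_pos_right ((h.degree_pos 0).trans_le (h.degree_le 0)) hω.le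

lemma totalDegree_le (h : RothAdmissible ω r p q E P) :
    (P.totalDegree : ℝ) ≤ (m + 1) * (ω * E) := by
  have le_sum : P.totalDegree ≤ ∑ j, r j := by
    refine Finset.sup_le fun e he => ?_
    rw [Finsupp.sum_fintype _ _ fun _ => rfl]
    exact Finset.sum_le_sum fun j _ => (monomial_le_degreeOf j he).trans (h.degreeOf_le j)
  calc (P.totalDegree : ℝ) ≤ ∑ j, (r j : ℝ) := by exact_mod_cast le_sum
    _ ≤ ∑ _j : Fin (m + 1), ω * E := Finset.sum_le_sum fun j _ => h.degree_le j
    _ = (m + 1) * (ω * E) := by simp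

lemma log_l1Norm_splitWronskian_le (h : RothAdmissible ω r p q E P) (hk : 1 ≤ k)
    (hkr : k ≤ r 0 + 1) {i : Fin k → Fin m →₀ ℕ} {ν : Fin k → ℕ} (hW : splitWronskian i ν P ≠ 0) :
    Real.log (l1Norm (splitWronskian i ν P)) ≤ k * ((m + 3) * (ω * E)) := by
  have k_pos : (0 : ℝ) < k := by exact_mod_cast hk
  have P_pos := zero_lt_one.trans_le (one_le_l1Norm h.ne_zero)
  have W_pos := zero_lt_one.trans_le (one_le_l1Norm hW)
  have log_le := Real.log_le_log W_pos (l1Norm_splitWronskian_le i ν P)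
  rw [Real.log_pow, Real.log_mul k_pos.ne' (by positivity),
    Real.log_mul (by positivity) P_pos.ne', Real.log_pow] at log_le
  have log_k_le : Real.log k ≤ ω * E := by
    have : (k : ℝ) ≤ r 0 + 1 := by exact_mod_cast hkr
    linarith [Real.log_le_sub_one_of_pos k_pos, h.degree_le 0]
  have degree_term_le : P.totalDegree * Real.log 2 ≤ (m + 1) * (ω * E) :=
    (mul_le_of_le_one_right (by positivity) (by linarith [Real.log_two_lt_d9])).trans
      h.totalDegree_le
  refine log_le.trans (mul_le_mul_of_nonneg_left ?_ k_pos.le)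
  linarith [h.log_l1Norm_le]

lemma weightedOrder_tail_le (h : RothAdmissible ω r p q E P) {I : Fin m →₀ ℕ}
    (hI : I.degree ≤ r 0) (hω : 0 < ω) : weightedOrder (fun j => r j.succ) I ≤ ω := by
  have r0_pos := h.degree_pos 0
  have term_le (j : Fin m) : (I j : ℝ) / r j.succ ≤ I j * (ω / r 0) := by
    rw [div_eq_mul_one_div]
    refine mul_le_mul_of_nonneg_left ?_ (Nat.cast_nonneg _)
    rw [div_le_div_iff₀ (h.degree_pos _) r0_pos, one_mul]
    exact h.degree_gap 0 j.succ (Fin.succ_pos j)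
  have degree_le : ∑ j, (I j : ℝ) ≤ r 0 := by
    rw [Finsupp.degree_eq_sum] at hI
    exact_mod_cast hI
  calc weightedOrder (fun j => r j.succ) I ≤ (∑ j, (I j : ℝ)) * (ω / r 0) := by
        rw [Finset.sum_mul]
        exact Finset.sum_le_sum fun j _ => term_le j
    _ ≤ r 0 * (ω / r 0) := by gcongr
    _ = ω := mul_div_cancel₀ _ r0_pos.ne'

lemma coeff_finSuccEquiv_splitWronskian (h : RothAdmissible ω r p q E P) (hω : 0 < ω) {ω' : ℝ}
    (hω' : (m + 3) * ω ≤ ω') (hk : 1 ≤ k) (hkr : k ≤ r 0 + 1) {i : Fin k → Fin m →₀ ℕ}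
    {ν : Fin k → ℕ} {a : ℕ} (ha : (finSuccEquiv ℤ m (splitWronskian i ν P)).coeff a ≠ 0) :
    RothAdmissible ω' (fun j => k * r j.succ) (fun j => p j.succ) (fun j => q j.succ) (k * E)
      ((finSuccEquiv ℤ m (splitWronskian i ν P)).coeff a) where
  ne_zero := ha
  degreeOf_le j := by
    refine (degreeOf_coeff_finSuccEquiv _ _ _).trans ?_
    exact (degreeOf_splitWronskian_le i ν P _).trans (Nat.mul_le_mul_left k (h.degreeOf_le _))
  one_le_degree j := Nat.mul_pos hk (h.one_le_degree _)
  one_le_den j := h.one_le_den _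
  isCoprime j := h.isCoprime _
  degree_gap x y hxy := by
    have ω_le : ω ≤ ω' := by nlinarith [m.cast_nonneg (α := ℝ)]
    have gap := h.degree_gap _ _ (Fin.succ_lt_succ_iff.mpr hxy)
    push_cast
    calc (k : ℝ) * r x.succ ≤ k * (ω * r y.succ) := by gcongr
      _ ≤ k * (ω' * r y.succ) := by gcongr
      _ = ω' * (k * r y.succ) := by ring
  le_degree_mul_log j := by
    push_cast
    rw [mul_assoc]
    exact mul_le_mul_of_nonneg_left (h.le_degree_mul_log _) k.cast_nonneg
  degree_le j := by
    have ω_le : ω ≤ ω' := by nlinarith [m.cast_nonneg (α := ℝ)]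
    have E_pos := h.bound_pos hω
    push_cast
    calc (k : ℝ) * r j.succ ≤ k * (ω * E) := by gcongr; exact h.degree_le _
      _ ≤ k * (ω' * E) := by gcongr
      _ = ω' * (k * E) := by ring
  log_l1Norm_le := by
    have E_pos := h.bound_pos hω
    have W_ne_zero : splitWronskian i ν P ≠ 0 := by
      rintro h0
      simp [h0] at ha
    calc Real.log _ ≤ Real.log (l1Norm (splitWronskian i ν P)) :=
          Real.log_le_log (zero_lt_one.trans_le (one_le_l1Norm ha))
            (l1Norm_coeff_finSuccEquiv_le _ _)
      _ ≤ k * ((m + 3) * (ω * E)) := h.log_l1Norm_splitWronskian_le hk hkr W_ne_zero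
      _ = ((m + 3) * ω) * (k * E) := by ring
      _ ≤ ω' * (k * E) := by gcongr

lemma index_splitWronskian_ge (h : RothAdmissible ω r p q E P) (hω : 0 < ω) {ε : ℝ} (hε1 : ε ≤ 1)
    (hωε : ω ≤ ε) (hkr : k ≤ r 0 + 1) {i : Fin k → Fin m →₀ ℕ}
    (hi : ∀ μ, (i μ).degree ≤ k - 1) {ν : Fin k → ℕ} (hν : ∀ a, ν a ≤ k - 1) (hinj : ν.Injective)
    (hP : IndexGE r (translate (fun j => (p j / q j : ℚ)) (P.map (Int.castRingHom ℚ))) ε) :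
    IndexGE r (translate (fun j => (p j / q j : ℚ))
      ((splitWronskian i ν P).map (Int.castRingHom ℚ))) (k * (ε - ω) ^ 2 / 8) := by
  rw [← splitWronskian_map, ← splitWronskian_translate]
  refine (hP.splitWronskian (fun μ => h.weightedOrder_tail_le ((hi μ).trans ?_) hω) ν).mono ?_
  · lia
  · rw [sum_comp_eq_sum_range_of_injective hν hinj fun n => max 0 (ε - ω - n / r 0)]
    exact sum_max_sub_div_ge hkr (h.one_le_degree 0) (by linarith) (by linarith)

lemma head_exponent_le (h : RothAdmissible ω r p q E P) (hω : 0 < ω) {δ : ℝ}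
    (hδ : (m + 3) * ω ≤ δ) (hk : 1 ≤ k) (hkr : k ≤ r 0 + 1) {i : Fin k → Fin m →₀ ℕ}
    {ν : Fin k → ℕ} (hW : splitWronskian i ν P ≠ 0) {e : ℕ}
    (he : e * Real.log (q 0) ≤ Real.log (l1Norm (splitWronskian i ν P))) :
    (e : ℝ) / r 0 ≤ k * δ := by
  have r0_pos := h.degree_pos 0
  have E_pos := h.bound_pos hω
  have log_pos : 0 < Real.log (q 0) :=
    pos_of_mul_pos_right (E_pos.trans_le (h.le_degree_mul_log 0)) r0_pos.le
  rw [div_le_iff₀ r0_pos]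
  refine le_of_mul_le_mul_right ?_ log_pos
  have δ_nonneg : 0 ≤ δ := le_trans (by positivity) hδ
  calc (e : ℝ) * Real.log (q 0) ≤ k * ((m + 3) * (ω * E)) :=
        he.trans (h.log_l1Norm_splitWronskian_le hk hkr hW)
    _ = k * ((m + 3) * ω) * E := by ring
    _ ≤ k * δ * (r 0 * Real.log (q 0)) := by gcongr; exact h.le_degree_mul_log 0
    _ = k * δ * r 0 * Real.log (q 0) := by ring

lemma not_indexGE_of_induction (h : RothAdmissible ω r p q E P) (hω : 0 < ω) {ε ω' : ℝ}
    (hε1 : ε ≤ 1) (hωε : ω ≤ ε / 4) (hω' : (m + 3) * ω ≤ ω') (hωε2 : (m + 3) * ω ≤ ε ^ 2 / 64)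
    (ih : ∀ (r : Fin m → ℕ) (p q : Fin m → ℤ) (E : ℝ) (P : MvPolynomial (Fin m) ℤ),
      RothAdmissible ω' r p q E P → ¬IndexGE r
        (translate (fun j => (p j / q j : ℚ)) (P.map (Int.castRingHom ℚ))) (ε ^ 2 / 64)) :
    ¬IndexGE r (translate (fun j => (p j / q j : ℚ)) (P.map (Int.castRingHom ℚ))) ε := by
  intro hP
  obtain ⟨k, hk, hkr, i, ν, U, V, hi, hν, hinj, hU, hV, hW⟩ :=
    exists_splitWronskian_map_eq h.ne_zero (h.degreeOf_le 0)
  obtain ⟨a, c, hc, slice_eq⟩ := exists_coeff_finSuccEquiv_map_eq_smul hW hV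
  have slice_ne_zero : (finSuccEquiv ℤ m (splitWronskian i ν P)).coeff a ≠ 0 := fun h0 =>
    smul_ne_zero hc hU (by rw [← slice_eq, h0, map_zero])
  have W_ne_zero : splitWronskian i ν P ≠ 0 := fun h0 => slice_ne_zero (by simp [h0])
  obtain ⟨e, coeff_V_ne_zero, he⟩ := exists_coeff_translate_ne_zero_and_mul_log_le hW hU hV
    (h.one_le_den 0) (h.isCoprime 0)
  have slice_index := ih _ _ _ _ _
    (h.coeff_finSuccEquiv_splitWronskian hω hω' hk hkr slice_ne_zero)
  simp only [IndexGE, not_forall, not_le] at slice_index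
  obtain ⟨I, coeff_U_ne_zero, hI⟩ := slice_index
  rw [slice_eq, map_smul, coeff_smul] at coeff_U_ne_zero
  have coeff_W_ne_zero : coeff (Finsupp.cons e I) (translate (fun j => (p j / q j : ℚ))
      ((splitWronskian i ν P).map (Int.castRingHom ℚ))) ≠ 0 := by
    rw [hW, map_mul, translate_renameTail, translate_renameHead,
      coeff_cons_renameTail_mul_renameHead]
    exact mul_ne_zero (right_ne_zero_of_smul coeff_U_ne_zero) coeff_V_ne_zero
  have index_ge := h.index_splitWronskian_ge hω hε1 (by linarith) hkr hi hν hinj hP _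
    coeff_W_ne_zero
  have k_pos : (0 : ℝ) < k := by exact_mod_cast hk
  rw [weightedOrder_const_mul, div_lt_iff₀ k_pos] at hI
  rw [weightedOrder_cons] at index_ge
  have head_le := h.head_exponent_le hω hωε2 hk hkr W_ne_zero he
  have sq_ge : (9 / 16) * ε ^ 2 ≤ (ε - ω) ^ 2 := by nlinarith
  have : 0 < k * ε ^ 2 := by
    have : 0 < ε := by linarith
    positivity
  nlinarith

end RothAdmissible

lemma not_indexGE_translate_of_isEmpty {σ R : Type*} [IsEmpty σ] [Fintype σ] [CommRing R]
    (r : σ → ℕ) (β : σ → R) {P : MvPolynomial σ R} (hP : P ≠ 0) {ε : ℝ} (hε : 0 < ε) :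
    ¬IndexGE r (translate β P) ε := by
  intro hindex
  obtain ⟨I, hI⟩ := MvPolynomial.ne_zero_iff.mp
    ((map_ne_zero_iff _ (translate_injective β)).mpr hP)
  have order_eq_zero : weightedOrder r I = 0 := by simp [weightedOrder]
  linarith [hindex I hI]

theorem roth_lemma (m : ℕ) {ε : ℝ} (hε : 0 < ε) : ∃ ω, 0 < ω ∧
    ∀ (r : Fin m → ℕ) (p q : Fin m → ℤ) (E : ℝ) (P : MvPolynomial (Fin m) ℤ),
      RothAdmissible ω r p q E P → ¬IndexGE r
        (translate (fun j => (p j / q j : ℚ)) (P.map (Int.castRingHom ℚ))) ε := by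
  induction m generalizing ε with
  | zero =>
    refine ⟨1, one_pos, fun r p q E P h => not_indexGE_translate_of_isEmpty r _ ?_ hε⟩
    exact (map_ne_zero_iff _ (map_injective _ Int.cast_injective)).mpr h.ne_zero
  | succ m ih =>
    set ε₁ := min ε 1
    have : 0 < ε₁ := lt_min hε one_pos
    obtain ⟨ω', ω'_pos, ih⟩ := ih (ε := ε₁ ^ 2 / 64) (by positivity)
    set ω := min (ε₁ / 4) (min ω' (ε₁ ^ 2 / 64) / (m + 3))
    have mul_ω_le : (m + 3) * ω ≤ min ω' (ε₁ ^ 2 / 64) := by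
      rw [mul_comm, ← le_div_iff₀ (by positivity)]
      exact min_le_right _ _
    refine ⟨ω, by positivity, fun r p q E P h hindex => ?_⟩
    exact h.not_indexGE_of_induction (by positivity) (min_le_right _ _) (min_le_left _ _)
      (mul_ω_le.trans (min_le_left _ _)) (mul_ω_le.trans (min_le_right _ _)) ih
      (hindex.mono (min_le_left _ _))

end RothLemma

section EigenvectorOfIntMatrix

open Matrix

theorem exists_intMatrix_mulVec_eq_smul {K : Type*} [Field K] [CharZero K] {α : K}
    (hα : IsAlgebraic ℤ α) :
    ∃ (n : ℕ) (D : ℤ) (A : Matrix (Fin n) (Fin n) ℤ) (e : Fin n → K) (i₀ : Fin n),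
      D ≠ 0 ∧ e i₀ = 1 ∧ LinearIndependent ℤ e ∧ A.map (Int.cast : ℤ → K) *ᵥ e = (D * α) • e := by
  obtain ⟨D, D_ne_zero, hD⟩ := hα.exists_integral_multiple
  let pb := Algebra.adjoin.powerBasis' hD
  have pb_gen : (pb.gen : K) = D * α := by simp [pb, zsmul_eq_mul]
  refine ⟨pb.dim, D, (Algebra.leftMulMatrix pb.basis pb.gen)ᵀ, fun i => pb.basis i,
    ⟨0, pb.dim_pos⟩, D_ne_zero, by simp, ?_, ?_⟩
  · exact pb.basis.linearIndependent.map' (Algebra.adjoin ℤ {D • α}).toSubmodule.subtype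
      (Submodule.ker_subtype _)
  · funext j
    have expansion := congrArg (Subtype.val : Algebra.adjoin ℤ {D • α} → K)
      (pb.basis.sum_repr (pb.gen * pb.basis j))
    simpa [mulVec, dotProduct, Algebra.leftMulMatrix_eq_repr_mul, zsmul_eq_mul, pb_gen]
      using expansion

variable {n : Type*} [Fintype n] [DecidableEq n]

lemma pow_mulVec_eq_smul {R : Type*} [CommSemiring R] {M : Matrix n n R} {μ : R} {e : n → R}
    (h : M *ᵥ e = μ • e) (k : ℕ) : M ^ k *ᵥ e = μ ^ k • e := by
  induction k with
  | zero => simp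
  | succ k ih => rw [pow_succ, ← mulVec_mulVec, h, mulVec_smul, ih, smul_smul, pow_succ']

lemma abs_pow_apply_le {A : Matrix n n ℤ} {c : ℝ} (hA : ∀ i j, |(A i j : ℝ)| ≤ c) (k : ℕ)
    (i j : n) : |((A ^ k) i j : ℝ)| ≤ (Fintype.card n * c) ^ k := by
  induction k generalizing i with
  | zero =>
    rw [pow_zero, pow_zero, one_apply]
    split_ifs <;> simp
  | succ k ih =>
    rw [pow_succ', mul_apply, Int.cast_sum]
    calc |∑ l, ((A i l * (A ^ k) l j : ℤ) : ℝ)|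
        ≤ ∑ l, |(A i l : ℝ)| * |((A ^ k) l j : ℝ)| := by
          simpa only [Int.cast_mul, abs_mul] using Finset.abs_sum_le_sum_abs
            (fun l => ((A i l * (A ^ k) l j : ℤ) : ℝ)) Finset.univ
      _ ≤ ∑ _l : n, c * (Fintype.card n * c) ^ k := by
          gcongr with l
          · exact (abs_nonneg _).trans (hA i l)
          · exact hA i l
          · exact ih l
      _ = (Fintype.card n * c) ^ (k + 1) := by
          rw [Finset.sum_const, Finset.card_univ, nsmul_eq_mul, pow_succ']
          ring

lemma abs_adjugate_apply_le {M : Matrix n n ℤ} {T : ℝ} (hT : 1 ≤ T)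
    (hM : ∀ i j, |(M i j : ℝ)| ≤ T) (i j : n) :
    |(M.adjugate i j : ℝ)| ≤ (Fintype.card n).factorial * T ^ Fintype.card n := by
  have entries_le (k l : n) :
      |((M.updateRow j (Pi.single i 1)).map (Int.cast : ℤ → ℝ) k l)| ≤ T := by
    rw [map_apply, updateRow_apply]
    split_ifs
    · rw [Pi.single_apply]
      split_ifs <;> simp [hT, zero_le_one.trans hT]
    · exact hM k l
  have det_le := Matrix.det_le (abv := AbsoluteValue.abs) entries_le
  rw [← Int.cast_det] at det_le
  simpa [adjugate_apply] using det_le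

lemma det_ne_zero_of_mulVec_eq_smul {K : Type*} [Field K] {M : Matrix n n ℤ} {e : n → K} {μ : K}
    (he : LinearIndependent ℤ e) (hμ : μ ≠ 0) (h : M.map (Int.cast : ℤ → K) *ᵥ e = μ • e) :
    M.det ≠ 0 := by
  intro det_eq_zero
  obtain ⟨x, x_ne_zero, hx⟩ := exists_vecMul_eq_zero_iff.mpr det_eq_zero
  have vecMul_cast : (fun i => (x i : K)) ᵥ* M.map Int.cast = 0 := by
    funext j
    have hxj := (Int.castRingHom K).map_vecMul M x j
    rw [hx] at hxj
    simpa [Function.comp_def] using hxj.symm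
  have dot_eq_zero : (fun i => (x i : K)) ⬝ᵥ e = 0 := by
    have scaled := dotProduct_mulVec (fun i => (x i : K)) (M.map Int.cast) e
    rw [h, vecMul_cast, zero_dotProduct, dotProduct_smul, smul_eq_mul] at scaled
    exact (mul_eq_zero.mp scaled).resolve_left hμ
  refine x_ne_zero (funext fun i => Fintype.linearIndependent_iff.mp he x ?_ i)
  simpa [dotProduct, zsmul_eq_mul] using dot_eq_zero

lemma one_le_abs_eigenvalue_mul {n : Type*} [Fintype n] {M : Matrix n n ℤ} {e : n → ℝ}
    {μ T B : ℝ} {i₀ : n} (he : LinearIndependent ℤ e) (he₀ : e i₀ = 1) (hB : ∀ i, |e i| ≤ B)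
    (hT : 1 ≤ T) (hM : ∀ i j, |(M i j : ℝ)| ≤ T) (hμ : μ ≠ 0)
    (h : M.map (Int.cast : ℤ → ℝ) *ᵥ e = μ • e) :
    1 ≤ |μ| * (Fintype.card n *
      ((Fintype.card n).factorial * T ^ Fintype.card n * B)) := by
  classical
  have det_eq : (M.det : ℝ) = μ * ∑ j, (M.adjugate i₀ j : ℝ) * e j := by
    have adjugate_mulVec : (M.adjugate.map (Int.cast : ℤ → ℝ)) *ᵥ (μ • e) = (M.det : ℝ) • e := by
      rw [← h, mulVec_mulVec, ← Matrix.map_mul_intCast, adjugate_mul]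
      have map_smul_one : (M.det • (1 : Matrix n n ℤ)).map (Int.cast : ℤ → ℝ) =
          (M.det : ℝ) • 1 := by
        ext s t
        simp only [map_apply, Matrix.smul_apply, one_apply, smul_eq_mul, Int.cast_mul,
          Int.cast_ite, Int.cast_one, Int.cast_zero]
      rw [map_smul_one, smul_mulVec, one_mulVec]
    have at_i₀ := congrFun adjugate_mulVec i₀
    rw [mulVec_smul] at at_i₀
    simpa [he₀, mulVec, dotProduct] using at_i₀.symm
  calc (1 : ℝ) ≤ |(M.det : ℝ)| := by
        exact_mod_cast Int.one_le_abs (det_ne_zero_of_mulVec_eq_smul he hμ h)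
    _ = |μ| * |∑ j, (M.adjugate i₀ j : ℝ) * e j| := by rw [det_eq, abs_mul]
    _ ≤ |μ| * ∑ j, |(M.adjugate i₀ j : ℝ)| * |e j| := by
        gcongr
        simpa only [abs_mul] using Finset.abs_sum_le_sum_abs
          (fun j => (M.adjugate i₀ j : ℝ) * e j) Finset.univ
    _ ≤ |μ| * ∑ _j : n, (Fintype.card n).factorial * T ^ Fintype.card n * B := by
        gcongr with j
        · exact abs_adjugate_apply_le hT hM i₀ j
        · exact hB j
    _ = _ := by rw [Finset.sum_const, Finset.card_univ, nsmul_eq_mul]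

lemma sum_smul_pow_mulVec {ι : Type*} [Fintype ι] {K : Type*} [Field K] {A : Matrix n n ℤ}
    {e : n → K} {D : ℤ} {α : K} (hA : A.map (Int.cast : ℤ → K) *ᵥ e = (D * α) • e)
    {k : ℕ} {w : ι → ℕ} (hw : ∀ i, w i ≤ k) (c : ι → ℤ) :
    (∑ i, (c i * D ^ (k - w i)) • A ^ w i).map (Int.cast : ℤ → K) *ᵥ e =
      (D ^ k * ∑ i, c i * α ^ w i) • e := by
  have map_eq : (∑ i, (c i * D ^ (k - w i)) • A ^ w i).map (Int.cast : ℤ → K) =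
      ∑ i, (c i * (D : K) ^ (k - w i)) • A.map (Int.cast : ℤ → K) ^ w i := by
    have map_pow (j : ℕ) : (A ^ j).map (Int.cast : ℤ → K) = A.map (Int.cast : ℤ → K) ^ j :=
      _root_.map_pow (Int.castRingHom K).mapMatrix A j
    ext s t
    simp only [map_apply, Matrix.sum_apply, Matrix.smul_apply, smul_eq_mul, Int.cast_sum,
      Int.cast_mul, Int.cast_pow, ← map_pow]
  rw [map_eq, sum_mulVec, Finset.mul_sum, Finset.sum_smul]
  refine Finset.sum_congr rfl fun i _ => ?_
  rw [smul_mulVec, pow_mulVec_eq_smul hA, smul_smul, ← pow_sub_mul_pow (D : K) (hw i)]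
  congr 1
  ring

lemma abs_sum_smul_pow_apply_le {k : ℕ} {A : Matrix n n ℤ} {a : ℝ}
    (hA : ∀ i j, |(A i j : ℝ)| ≤ a) (D : ℤ) {H : ℝ} {c : Fin k → ℤ}
    (hc : ∀ i, |(c i : ℝ)| ≤ H) (s t : n) :
    |((∑ i : Fin k, (c i * D ^ (k - i)) • A ^ (i : ℕ)) s t : ℝ)| ≤
      (∑ i : Fin k, |(D : ℝ)| ^ (k - i) * (Fintype.card n * a) ^ (i : ℕ)) * H := by
  have _ : 0 ≤ a := (abs_nonneg _).trans (hA s s)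
  calc |((∑ i : Fin k, (c i * D ^ (k - i)) • A ^ (i : ℕ)) s t : ℝ)|
      = |∑ i : Fin k, (c i : ℝ) * (D ^ (k - i) * ((A ^ (i : ℕ)) s t : ℝ))| := by
        simp only [Matrix.sum_apply, Matrix.smul_apply, smul_eq_mul, Int.cast_sum, Int.cast_mul,
          Int.cast_pow, mul_assoc]
    _ ≤ ∑ i : Fin k, |(c i : ℝ) * (D ^ (k - i) * ((A ^ (i : ℕ)) s t : ℝ))| :=
        Finset.abs_sum_le_sum_abs _ _
    _ ≤ ∑ i : Fin k, H * (|(D : ℝ)| ^ (k - i) * (Fintype.card n * a) ^ (i : ℕ)) := by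
        gcongr with i
        rw [abs_mul, abs_mul, abs_pow]
        gcongr
        · exact (abs_nonneg _).trans (hc i)
        · exact hc i
        · exact abs_pow_apply_le hA i s t
    _ = _ := by rw [← Finset.mul_sum, mul_comm]

/-- Liouville's inequality. -/
theorem exists_one_le_mul_abs_sum_mul_pow {α : ℝ} (hα : IsAlgebraic ℤ α) (k : ℕ) :
    ∃ (d : ℕ) (κ : ℝ), 0 < κ ∧ ∀ (c : Fin k → ℤ) (H : ℝ), 1 ≤ H → (∀ i, |(c i : ℝ)| ≤ H) →
      ∑ i, c i * α ^ (i : ℕ) ≠ 0 → 1 ≤ κ * H ^ d * |∑ i, c i * α ^ (i : ℕ)| := by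
  obtain ⟨d, D, A, e, i₀, D_ne_zero, he₀, he, hA⟩ := exists_intMatrix_mulVec_eq_smul hα
  obtain ⟨B, hB⟩ := Finite.exists_le fun i => |e i|
  have one_le_B : 1 ≤ B := by simpa [he₀] using hB i₀
  obtain ⟨a, ha⟩ := Finite.exists_le fun ij : Fin d × Fin d => |(A ij.1 ij.2 : ℝ)|
  have a_nonneg : 0 ≤ a := (abs_nonneg _).trans (ha (i₀, i₀))
  have d_pos : 0 < d := i₀.pos
  set T : ℝ := 1 + ∑ i : Fin k, |(D : ℝ)| ^ (k - i) * (d * a) ^ (i : ℕ)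
  have one_le_T : 1 ≤ T := le_add_of_nonneg_right (by positivity)
  refine ⟨d, |(D : ℝ)| ^ k * (d * (d.factorial * T ^ d * B)), by positivity, ?_⟩
  intro c H one_le_H hc hne
  have entries_le (s t) :
      |((∑ i : Fin k, (c i * D ^ (k - i)) • A ^ (i : ℕ)) s t : ℝ)| ≤ T * H := by
    refine (abs_sum_smul_pow_apply_le (fun i j => ha (i, j)) D hc s t).trans ?_
    rw [Fintype.card_fin]
    gcongr
    exact le_add_of_nonneg_left zero_le_one
  have key := one_le_abs_eigenvalue_mul he he₀ hB (one_le_mul_of_one_le_of_one_le one_le_T one_le_H)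
    entries_le (mul_ne_zero (pow_ne_zero _ (Int.cast_ne_zero.mpr D_ne_zero)) hne)
    (sum_smul_pow_mulVec hA (fun i => i.2.le) c)
  rw [Fintype.card_fin, abs_mul, abs_pow] at key
  generalize |∑ i, c i * α ^ (i : ℕ)| = y at key ⊢
  rw [mul_pow] at key
  linarith only [key]

end EigenvectorOfIntMatrix

section ShortLatticeVectors

lemma exists_ne_zero_natAbs_le_dvd {q s t : ℕ} (hq : 0 < q) (h : q < (s + 1) * (t + 1))
    (x y : ℤ) :
    ∃ b c : ℤ, (b ≠ 0 ∨ c ≠ 0) ∧ b.natAbs ≤ s ∧ c.natAbs ≤ t ∧ (q : ℤ) ∣ b * x + c * y := by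
  have : NeZero q := ⟨hq.ne'⟩
  obtain ⟨⟨b₁, c₁⟩, mem₁, ⟨b₂, c₂⟩, mem₂, hne, heq⟩ :=
    Finset.exists_ne_map_eq_of_card_lt_of_maps_to
      (s := Finset.range (s + 1) ×ˢ Finset.range (t + 1)) (t := (Finset.univ : Finset (ZMod q)))
      (f := fun bc => ((bc.1 * x + bc.2 * y : ℤ) : ZMod q))
      (by simpa [ZMod.card] using h) (fun _ _ => Finset.mem_coe.mpr (Finset.mem_univ _))
  simp only [Finset.mem_product, Finset.mem_range] at mem₁ mem₂
  simp only [ne_eq, Prod.mk.injEq] at hne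
  refine ⟨b₂ - b₁, c₂ - c₁, by omega, by omega, by omega, ?_⟩
  convert (ZMod.intCast_eq_intCast_iff_dvd_sub _ _ q).mp heq using 1
  ring

/-- Minimality of `max |b₁| |c₁| = |b₁|` forbids the short vector `(b₂, c₂)` provided by the
pigeonhole principle, whose first entry is smaller than `|b₁|`, from being parallel to
`(b₁, c₁)`. -/
lemma exists_independent_of_minimal {q : ℕ} (hq : 0 < q) {x y b₁ c₁ : ℤ} (b₁_ne_zero : b₁ ≠ 0)
    (hc₁ : c₁.natAbs ≤ b₁.natAbs)
    (minimal : ∀ b c : ℤ, (b ≠ 0 ∨ c ≠ 0) → (q : ℤ) ∣ b * x + c * y →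
      b₁.natAbs ≤ max b.natAbs c.natAbs) :
    ∃ b₂ c₂ : ℤ, (q : ℤ) ∣ b₂ * x + c₂ * y ∧ b₁ * c₂ - c₁ * b₂ ≠ 0 ∧
      b₂.natAbs ≤ b₁.natAbs ∧ c₂.natAbs * b₁.natAbs ≤ q := by
  have b₁_pos : 0 < b₁.natAbs := Int.natAbs_pos.mpr b₁_ne_zero
  obtain ⟨b₂, c₂, hne, hb₂, hc₂, hdvd⟩ := exists_ne_zero_natAbs_le_dvd hq
    (s := b₁.natAbs - 1) (t := q / b₁.natAbs)
    (by rw [Nat.sub_add_cancel b₁_pos]; exact Nat.lt_mul_div_succ q b₁_pos) x y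
  refine ⟨b₂, c₂, hdvd, fun det_eq_zero => ?_, by omega,
    (Nat.mul_le_mul_right _ hc₂).trans (Nat.div_mul_le_self q _)⟩
  have natAbs_eq : b₁.natAbs * c₂.natAbs = c₁.natAbs * b₂.natAbs := by
    rw [← Int.natAbs_mul, ← Int.natAbs_mul, sub_eq_zero.mp det_eq_zero]
  have c₂_le : c₂.natAbs ≤ b₂.natAbs :=
    Nat.le_of_mul_le_mul_left (natAbs_eq.trans_le (Nat.mul_le_mul_right _ hc₁)) b₁_pos
  have := minimal b₂ c₂ hne hdvd
  omega

lemma exists_minimal_natAbs_dvd {q : ℕ} (hq : 0 < q) (x y : ℤ) :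
    ∃ b₁ c₁ : ℤ, (b₁ ≠ 0 ∨ c₁ ≠ 0) ∧ (q : ℤ) ∣ b₁ * x + c₁ * y ∧
      (max b₁.natAbs c₁.natAbs) ^ 2 ≤ q ∧
      ∀ b c : ℤ, (b ≠ 0 ∨ c ≠ 0) → (q : ℤ) ∣ b * x + c * y →
        max b₁.natAbs c₁.natAbs ≤ max b.natAbs c.natAbs := by
  obtain ⟨b, c, hne, hb, hc, hdvd⟩ := exists_ne_zero_natAbs_le_dvd hq (Nat.lt_succ_sqrt q) x y
  let solutions : Set (ℤ × ℤ) :=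
    {bc | (bc.1 ≠ 0 ∨ bc.2 ≠ 0) ∧ (q : ℤ) ∣ bc.1 * x + bc.2 * y}
  obtain ⟨⟨b₁, c₁⟩, ⟨hne₁, hdvd₁⟩, minimal⟩ :=
    exists_minimalFor_of_wellFoundedLT (· ∈ solutions) (fun bc => max bc.1.natAbs bc.2.natAbs)
      ⟨(b, c), hne, hdvd⟩
  have max_le (b c : ℤ) (hne : b ≠ 0 ∨ c ≠ 0) (hdvd : (q : ℤ) ∣ b * x + c * y) :
      max b₁.natAbs c₁.natAbs ≤ max b.natAbs c.natAbs :=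
    (le_total _ _).elim id (minimal (j := (b, c)) ⟨hne, hdvd⟩)
  refine ⟨b₁, c₁, hne₁, hdvd₁, ?_, max_le⟩
  calc (max b₁.natAbs c₁.natAbs) ^ 2 ≤ q.sqrt ^ 2 := by
        gcongr
        exact (max_le b c hne hdvd).trans (max_le_iff.mpr ⟨hb, hc⟩)
    _ ≤ q := Nat.sqrt_le' q

theorem exists_short_independent_pair {q : ℕ} (hq : 0 < q) (x y : ℤ) :
    ∃ (u v : Fin 2 → ℤ) (Y : Fin 2 → ℝ), (q : ℤ) ∣ u 0 * x + u 1 * y ∧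
      (q : ℤ) ∣ v 0 * x + v 1 * y ∧ u 0 * v 1 - u 1 * v 0 ≠ 0 ∧ (∀ i, 1 ≤ Y i) ∧
      Y 0 * Y 1 = q ∧ (∀ i j, |(u i : ℝ)| ≤ Y j) ∧ ∀ i, |(v i : ℝ)| ≤ Y i := by
  obtain ⟨b₁, c₁, hne, hdvd, sq_le, minimal⟩ := exists_minimal_natAbs_dvd hq x y
  wlog c₁_le : c₁.natAbs ≤ b₁.natAbs generalizing x y b₁ c₁
  · have minimal_swap (b c : ℤ) (hne : b ≠ 0 ∨ c ≠ 0) (hdvd : (q : ℤ) ∣ b * y + c * x) :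
        max c₁.natAbs b₁.natAbs ≤ max b.natAbs c.natAbs := by
      simpa only [max_comm] using minimal c b hne.symm (by rwa [add_comm])
    obtain ⟨u, v, Y, hu, hv, det_ne_zero, one_le_Y, Y_mul_Y, u_le, v_le⟩ := this y x c₁ b₁ hne.symm
      (by rwa [add_comm]) (by rwa [max_comm]) minimal_swap (le_of_not_ge c₁_le)
    refine ⟨![u 1, u 0], ![v 1, v 0], ![Y 1, Y 0], ?_⟩
    simp only [Fin.forall_fin_two, Matrix.cons_val_zero, Matrix.cons_val_one] at *
    refine ⟨by rwa [add_comm], by rwa [add_comm], fun h => det_ne_zero ?_, one_le_Y.symm,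
      (mul_comm _ _).trans Y_mul_Y, ⟨u_le.2.symm, u_le.1.symm⟩, v_le.symm⟩
    linarith only [h]
  rw [max_eq_left c₁_le] at sq_le minimal
  have b₁_ne_zero : b₁ ≠ 0 := by omega
  obtain ⟨b₂, c₂, hdvd₂, det_ne_zero, b₂_le, c₂_mul_le⟩ :=
    exists_independent_of_minimal hq b₁_ne_zero c₁_le minimal
  set B := b₁.natAbs
  have B_pos : (0 : ℝ) < B := by simpa [B] using b₁_ne_zero
  have one_le_B : (1 : ℝ) ≤ B := by exact_mod_cast Int.natAbs_pos.mpr b₁_ne_zero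
  have B_le : (B : ℝ) ≤ q / B := by
    rw [le_div_iff₀ B_pos, ← sq]
    exact_mod_cast sq_le
  have abs_le {z : ℤ} (hz : z.natAbs ≤ B) : |(z : ℝ)| ≤ B := by
    rw [← Int.cast_abs, ← Nat.cast_natAbs]
    exact_mod_cast hz
  have abs_c₂_le : |(c₂ : ℝ)| ≤ q / B := by
    rw [le_div_iff₀ B_pos, ← Int.cast_abs, ← Nat.cast_natAbs]
    exact_mod_cast c₂_mul_le
  refine ⟨![b₁, c₁], ![b₂, c₂], ![B, q / B], hdvd, hdvd₂, det_ne_zero, ?_,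
    mul_div_cancel₀ _ B_pos.ne', ?_, ?_⟩ <;>
    simp only [Fin.forall_fin_two, Matrix.cons_val_zero, Matrix.cons_val_one]
  · exact ⟨one_le_B, one_le_B.trans B_le⟩
  · exact ⟨⟨abs_le le_rfl, (abs_le le_rfl).trans B_le⟩, abs_le c₁_le, (abs_le c₁_le).trans B_le⟩
  · exact ⟨abs_le b₂_le, abs_c₂_le⟩

end ShortLatticeVectors

section ShortSolutionPair

variable {α : ℝ}

/-- The values at `u` of the linear forms `u₀ + u₁ α + u₂ α²`, `u₁` and `u₂`; the first of them is
small at integer vectors orthogonal to a triple `(q, p, s)` nearly proportional to `(1, α, α²)`. -/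
noncomputable def adaptedCoords (α : ℝ) (u : Fin 3 → ℤ) : Fin 3 → ℝ :=
  ![∑ i, u i * α ^ (i : ℕ), u 1, u 2]

/-- Two integer vectors `u`, `v` orthogonal to `(q, p, s)`, whose adapted coordinates are bounded
by `exp (l i)`. -/
structure IsShortSolutionPair (α : ℝ) (q p s : ℤ) (l : Fin 3 → ℝ) (u v : Fin 3 → ℤ) : Prop where
  left_orthogonal : q * u 0 + p * u 1 + s * u 2 = 0
  right_orthogonal : q * v 0 + p * v 1 + s * v 2 = 0
  minor_ne_zero : u 1 * v 2 - u 2 * v 1 ≠ 0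
  left_le : ∀ i, |adaptedCoords α u i| ≤ Real.exp (l i)
  right_le : ∀ i, |adaptedCoords α v i| ≤ Real.exp (l i)

lemma abs_sum_mul_pow_le_of_orthogonal (hα₀ : 0 ≤ α) (hα₁ : α ≤ 1) {q : ℕ} (hq : 0 < q) {p s : ℤ}
    (hp : |q * α - p| ≤ 1 / q) (hs : |p * α - s| ≤ 1 / q) {u : Fin 3 → ℤ}
    (hu : q * u 0 + p * u 1 + s * u 2 = 0) {X : ℝ} (hu₁ : |(u 1 : ℝ)| ≤ X)
    (hu₂ : |(u 2 : ℝ)| ≤ X) :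
    |∑ i, u i * α ^ (i : ℕ)| ≤ 3 * X / q ^ 2 := by
  have q_pos : (0 : ℝ) < q := Nat.cast_pos.mpr hq
  have sq_approx : |q * α ^ 2 - s| ≤ 2 / q := by
    calc |q * α ^ 2 - s| = |(q * α - p) * α + (p * α - s)| := by ring_nf
      _ ≤ |q * α - p| * |α| + |p * α - s| := (abs_add_le _ _).trans_eq (by rw [abs_mul])
      _ ≤ 1 / q * 1 + 1 / q := by
          gcongr
          rwa [abs_of_nonneg hα₀]
      _ = 2 / q := by ring
  have sum_eq : ∑ i, u i * α ^ (i : ℕ) = (u 1 * (q * α - p) + u 2 * (q * α ^ 2 - s)) / q := by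
    have hu_real : (q : ℝ) * u 0 + p * u 1 + s * u 2 = 0 := by exact_mod_cast hu
    rw [Fin.sum_univ_three, eq_div_iff q_pos.ne', Fin.val_zero, Fin.val_one, Fin.val_two]
    linear_combination hu_real
  rw [sum_eq, abs_div, abs_of_pos q_pos, div_le_iff₀ q_pos]
  calc |u 1 * (q * α - p) + u 2 * (q * α ^ 2 - s)|
      ≤ |(u 1 : ℝ)| * |q * α - p| + |(u 2 : ℝ)| * |q * α ^ 2 - s| :=
        (abs_add_le _ _).trans_eq (by rw [abs_mul, abs_mul])
    _ ≤ X * (1 / q) + X * (2 / q) := by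
        gcongr
        all_goals exact (abs_nonneg _).trans hu₁
    _ = 3 * X / q ^ 2 * q := by
        field_simp
        ring

lemma abs_coord_zero_le (hα₀ : 0 ≤ α) (hα₁ : α ≤ 1) {u : Fin 3 → ℤ} {B : ℝ}
    (hu₁ : |(u 1 : ℝ)| ≤ B) (hu₂ : |(u 2 : ℝ)| ≤ B) :
    |(u 0 : ℝ)| ≤ |∑ i, u i * α ^ (i : ℕ)| + 2 * B := by
  have u₀_eq : (u 0 : ℝ) = ∑ i, u i * α ^ (i : ℕ) - u 1 * α - u 2 * α ^ 2 := by
    rw [Fin.sum_univ_three, Fin.val_zero, Fin.val_one, Fin.val_two]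
    ring
  calc |(u 0 : ℝ)|
      ≤ |∑ i, u i * α ^ (i : ℕ)| + |(u 1 : ℝ)| * α + |(u 2 : ℝ)| * α ^ 2 := by
        rw [u₀_eq]
        refine (abs_sub _ _).trans (add_le_add ((abs_sub _ _).trans_eq ?_) (le_of_eq ?_))
        · rw [abs_mul, abs_of_nonneg hα₀]
        · rw [abs_mul, abs_of_nonneg (pow_nonneg hα₀ 2)]
    _ ≤ |∑ i, u i * α ^ (i : ℕ)| + B * 1 + B * 1 := by
        gcongr
        · exact (abs_nonneg _).trans hu₁
        · exact (abs_nonneg _).trans hu₂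
        · exact pow_le_one₀ hα₀ hα₁
    _ = _ := by ring

lemma exists_le_mul_pow_of_abs_sum_mul_pow_le (hα : IsAlgebraic ℤ α)
    (hindep : LinearIndependent ℤ fun i : Fin 3 => α ^ (i : ℕ)) (hα₀ : 0 ≤ α) (hα₁ : α ≤ 1) :
    ∃ (d : ℕ) (K : ℝ), 0 < K ∧ ∀ (u : Fin 3 → ℤ) (q B : ℝ), u ≠ 0 → 1 ≤ q → 1 ≤ B →
      |(u 1 : ℝ)| ≤ B → |(u 2 : ℝ)| ≤ B → |∑ i, u i * α ^ (i : ℕ)| ≤ 3 / (q * B) →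
      q ≤ K * B ^ d := by
  obtain ⟨d, κ, κ_pos, liouville⟩ := exists_one_le_mul_abs_sum_mul_pow hα 3
  refine ⟨d, κ * 5 ^ d * 3, by positivity, fun u q B u_ne_zero hq hB hu₁ hu₂ hsum => ?_⟩
  have q_pos : 0 < q := zero_lt_one.trans_le hq
  have sum_ne_zero : ∑ i, u i * α ^ (i : ℕ) ≠ 0 := fun h => u_ne_zero <| funext <|
    Fintype.linearIndependent_iff.mp hindep u (by simpa [zsmul_eq_mul] using h)
  have sum_le_three : |∑ i, u i * α ^ (i : ℕ)| ≤ 3 :=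
    hsum.trans (div_le_self zero_le_three (one_le_mul_of_one_le_of_one_le hq hB))
  have u_le (i : Fin 3) : |(u i : ℝ)| ≤ 5 * B := by
    have u₀_le := abs_coord_zero_le hα₀ hα₁ hu₁ hu₂
    fin_cases i <;> simp only [Fin.zero_eta, Fin.mk_one, Fin.reduceFinMk] <;> linarith
  have one_le := liouville u (5 * B) (by linarith only [hB]) u_le sum_ne_zero
  rw [mul_pow] at one_le
  calc q ≤ q * (κ * (5 ^ d * B ^ d) * |∑ i, u i * α ^ (i : ℕ)|) :=
        le_mul_of_one_le_right q_pos.le one_le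
    _ ≤ q * (κ * (5 ^ d * B ^ d) * (3 / q)) := by
        gcongr
        exact hsum.trans (div_le_div_of_nonneg_left zero_le_three q_pos
          (le_mul_of_one_le_right q_pos.le hB))
    _ = κ * 5 ^ d * 3 * B ^ d := by
        field_simp

lemma IsShortSolutionPair.of_short_pair (hα₀ : 0 ≤ α) (hα₁ : α ≤ 1) {q : ℕ} (hq : 0 < q)
    {p s : ℤ} (hp : |q * α - p| ≤ 1 / q) (hs : |p * α - s| ≤ 1 / q) {u v : Fin 3 → ℤ}
    (hu : q * u 0 + p * u 1 + s * u 2 = 0) (hv : q * v 0 + p * v 1 + s * v 2 = 0)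
    (hminor : u 1 * v 2 - u 2 * v 1 ≠ 0) {Y Z B : ℝ} (hB : 1 ≤ B) (hY : B ≤ Y) (hZ : B ≤ Z)
    (hYZ : Y * Z = q) (hu₁ : |(u 1 : ℝ)| ≤ B) (hu₂ : |(u 2 : ℝ)| ≤ B) (hv₁ : |(v 1 : ℝ)| ≤ Y)
    (hv₂ : |(v 2 : ℝ)| ≤ Z) :
    |∑ i, u i * α ^ (i : ℕ)| ≤ 3 / (q * B) ∧
      IsShortSolutionPair α q p s ![Real.log 3 - Real.log q - Real.log B, Real.log Y, Real.log Z]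
        u v := by
  have B_pos : 0 < B := zero_lt_one.trans_le hB
  have q_pos : (0 : ℝ) < q := Nat.cast_pos.mpr hq
  have Y_le : Y ≤ q / B := by
    rw [le_div_iff₀ B_pos, ← hYZ]
    exact mul_le_mul_of_nonneg_left hZ (B_pos.le.trans hY)
  have Z_le : Z ≤ q / B := by
    rw [le_div_iff₀' B_pos, ← hYZ]
    exact mul_le_mul_of_nonneg_right hY (B_pos.le.trans hZ)
  have sum_le {w : Fin 3 → ℤ} (hw : q * w 0 + p * w 1 + s * w 2 = 0) (hw₁ : |(w 1 : ℝ)| ≤ Y)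
      (hw₂ : |(w 2 : ℝ)| ≤ Z) : |∑ i, w i * α ^ (i : ℕ)| ≤ 3 / (q * B) :=
    calc |∑ i, w i * α ^ (i : ℕ)| ≤ 3 * (q / B) / q ^ 2 :=
          abs_sum_mul_pow_le_of_orthogonal hα₀ hα₁ hq hp hs hw (hw₁.trans Y_le) (hw₂.trans Z_le)
      _ = 3 / (q * B) := by field_simp
  have exp_eq : Real.exp (Real.log 3 - Real.log q - Real.log B) = 3 / (q * B) := by
    rw [Real.exp_sub, Real.exp_sub, Real.exp_log q_pos, Real.exp_log B_pos,
      Real.exp_log zero_lt_three, div_div]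
  have sum_u_le := sum_le hu (hu₁.trans hY) (hu₂.trans hZ)
  have coords_le {w : Fin 3 → ℤ} (hw : |∑ i, w i * α ^ (i : ℕ)| ≤ 3 / (q * B))
      (hw₁ : |(w 1 : ℝ)| ≤ Y) (hw₂ : |(w 2 : ℝ)| ≤ Z) (i : Fin 3) : |adaptedCoords α w i| ≤
        Real.exp (![Real.log 3 - Real.log q - Real.log B, Real.log Y, Real.log Z] i) := by
    fin_cases i
    · exact hw.trans_eq exp_eq.symm
    · exact hw₁.trans_eq (Real.exp_log (B_pos.trans_le hY)).symm
    · exact hw₂.trans_eq (Real.exp_log (B_pos.trans_le hZ)).symm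
  exact ⟨sum_u_le, hu, hv, hminor, coords_le sum_u_le (hu₁.trans hY) (hu₂.trans hZ),
    coords_le (sum_le hv hv₁ hv₂) hv₁ hv₂⟩

lemma log_three_sub_log_le {d : ℕ} {K q B : ℝ} (hK : 0 < K) (hq : 0 < q) (hB : 1 ≤ B)
    (q_le : q ≤ K * B ^ d) (le_log_q : 2 * (Real.log K + (d + 1) * Real.log 3) ≤ Real.log q) :
    Real.log 3 - Real.log B ≤ -(1 / (2 * (d + 1))) * Real.log q := by
  have log_q_le : Real.log q ≤ Real.log K + d * Real.log B := by
    calc Real.log q ≤ Real.log (K * B ^ d) := Real.log_le_log hq q_le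
      _ = Real.log K + d * Real.log B := by
        rw [Real.log_mul hK.ne' (pow_pos (zero_lt_one.trans_le hB) d).ne', Real.log_pow]
  have log_B_nonneg : 0 ≤ Real.log B := Real.log_nonneg hB
  rw [neg_mul, le_neg, one_div, ← div_eq_inv_mul, div_le_iff₀ (by positivity)]
  linarith only [log_q_le, log_B_nonneg, le_log_q]

lemma abs_log_bounds_le {Y Z B q : ℝ} (hB : 1 ≤ B) (hY : B ≤ Y) (hZ : B ≤ Z) (hYZ : Y * Z = q)
    (hq : 3 ≤ q) (i : Fin 3) :
    |![Real.log 3 - Real.log q - Real.log B, Real.log Y, Real.log Z] i| ≤ 2 * Real.log q := by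
  have B_pos : 0 < B := zero_lt_one.trans_le hB
  have log_B_nonneg : 0 ≤ Real.log B := Real.log_nonneg hB
  have log_B_le_Y : Real.log B ≤ Real.log Y := Real.log_le_log B_pos hY
  have log_B_le_Z : Real.log B ≤ Real.log Z := Real.log_le_log B_pos hZ
  have log_Y_add : Real.log Y + Real.log Z = Real.log q := by
    rw [← Real.log_mul (B_pos.trans_le hY).ne' (B_pos.trans_le hZ).ne', hYZ]
  have log_three_nonneg : 0 ≤ Real.log 3 := Real.log_nonneg (by norm_num)
  have log_three_le : Real.log 3 ≤ Real.log q := Real.log_le_log zero_lt_three hq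
  rw [abs_le]
  fin_cases i <;> simp only [Fin.zero_eta, Fin.mk_one, Fin.reduceFinMk, Matrix.cons_val_zero,
    Matrix.cons_val_one, Matrix.cons_val] <;> constructor <;>
    linarith only [log_B_nonneg, log_B_le_Y, log_B_le_Z, log_Y_add, log_three_le,
      log_three_nonneg]

theorem exists_isShortSolutionPair (hα : IsAlgebraic ℤ α)
    (hindep : LinearIndependent ℤ fun i : Fin 3 => α ^ (i : ℕ)) (hα₀ : 0 ≤ α) (hα₁ : α ≤ 1) :
    ∃ τ : ℝ, 0 < τ ∧ τ ≤ 1 ∧ ∀ᶠ q : ℕ in atTop, ∀ p s : ℤ,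
      |q * α - p| ≤ 1 / q → |p * α - s| ≤ 1 / q → ∃ l u v, IsShortSolutionPair α q p s l u v ∧
        ∑ i, l i ≤ -τ * Real.log q ∧ ∀ i, |l i| ≤ 2 * Real.log q := by
  obtain ⟨d, K, K_pos, le_mul_pow⟩ :=
    exists_le_mul_pow_of_abs_sum_mul_pow_le hα hindep hα₀ hα₁
  refine ⟨1 / (2 * (d + 1)), by positivity, ?_, ?_⟩
  · rw [div_le_one (by positivity)]
    have : (0 : ℝ) ≤ d := d.cast_nonneg
    linarith only [this]
  filter_upwards [eventually_ge_atTop 3, (Real.tendsto_log_atTop.comp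
    tendsto_natCast_atTop_atTop).eventually_ge_atTop (2 * (Real.log K + (d + 1) * Real.log 3))]
    with q three_le_q le_log_q p s hp hs
  obtain ⟨u, v, Y, ⟨a, ha⟩, ⟨b, hb⟩, det_ne_zero, one_le_Y, Y_mul_Y, u_le, v_le⟩ :=
    exists_short_independent_pair (zero_lt_three.trans_le three_le_q) p s
  have hu : (q : ℤ) * -a + p * u 0 + s * u 1 = 0 := by linear_combination ha
  have hv : (q : ℤ) * -b + p * v 0 + s * v 1 = 0 := by linear_combination hb
  set B := min (Y 0) (Y 1)
  have one_le_B : 1 ≤ B := le_min (one_le_Y 0) (one_le_Y 1)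
  obtain ⟨sum_le, short⟩ := IsShortSolutionPair.of_short_pair hα₀ hα₁
    (zero_lt_three.trans_le three_le_q) hp hs (u := ![-a, u 0, u 1]) (v := ![-b, v 0, v 1])
    hu hv det_ne_zero one_le_B (min_le_left _ _)
    (min_le_right _ _) Y_mul_Y (le_min (u_le 0 0) (u_le 0 1)) (le_min (u_le 1 0) (u_le 1 1))
    (v_le 0) (v_le 1)
  have q_pos : (0 : ℝ) < q := Nat.cast_pos.mpr (zero_lt_three.trans_le three_le_q)
  have u_ne_zero : ![-a, u 0, u 1] ≠ 0 := by
    intro h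
    have hu₀ : u 0 = 0 := congrFun h 1
    have hu₁ : u 1 = 0 := congrFun h 2
    simp [hu₀, hu₁] at det_ne_zero
  have q_le : q ≤ K * B ^ d := le_mul_pow _ q B u_ne_zero (by exact_mod_cast by omega) one_le_B
    (le_min (u_le 0 0) (u_le 0 1)) (le_min (u_le 1 0) (u_le 1 1)) sum_le
  refine ⟨_, _, _, short, ?_, abs_log_bounds_le one_le_B (min_le_left _ _) (min_le_right _ _)
    Y_mul_Y (by exact_mod_cast three_le_q)⟩
  calc ∑ i, ![Real.log 3 - Real.log q - Real.log B, Real.log (Y 0), Real.log (Y 1)] i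
      = Real.log 3 - Real.log q - Real.log B + Real.log (Y 0) + Real.log (Y 1) :=
        Fin.sum_univ_three _
    _ = Real.log 3 - Real.log B := by
        rw [← Y_mul_Y, Real.log_mul (zero_lt_one.trans_le (one_le_Y 0)).ne'
          (zero_lt_one.trans_le (one_le_Y 1)).ne']
        ring
    _ ≤ _ := log_three_sub_log_le K_pos q_pos one_le_B q_le le_log_q

end ShortSolutionPair

section Multidegrees

variable {ι : Type*} [Fintype ι] [DecidableEq ι]

lemma le_of_mem_piAntidiag {r : ℕ} {e : ι → ℕ} (he : e ∈ Finset.piAntidiag Finset.univ r) (i : ι) :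
    e i ≤ r :=
  (Finset.single_le_sum_of_canonicallyOrdered (Finset.mem_univ i)).trans_eq
    (Finset.mem_piAntidiag.mp he).1

lemma card_piAntidiag_univ_le (r : ℕ) :
    (Finset.piAntidiag (Finset.univ : Finset ι) r).card ≤ (2 ^ Fintype.card ι) ^ r := by
  have subset : Finset.piAntidiag (Finset.univ : Finset ι) r ⊆
      Fintype.piFinset fun _ => Finset.range (r + 1) := fun e he =>
    Fintype.mem_piFinset.mpr fun i => Finset.mem_range_succ_iff.mpr (le_of_mem_piAntidiag he i)
  calc (Finset.piAntidiag (Finset.univ : Finset ι) r).card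
      ≤ (r + 1) ^ Fintype.card ι := by simpa using Finset.card_le_card subset
    _ ≤ (2 ^ r) ^ Fintype.card ι := Nat.pow_le_pow_left Nat.lt_two_pow_self _
    _ = (2 ^ Fintype.card ι) ^ r := pow_right_comm _ _ _

lemma sum_apply_piAntidiag_univ (r : ℕ) (i : ι) :
    ∑ e ∈ Finset.piAntidiag Finset.univ r, (e i : ℝ) =
      (Finset.piAntidiag (Finset.univ : Finset ι) r).card * (r / Fintype.card ι : ℝ) := by
  have card_pos : (0 : ℝ) < Fintype.card ι := by exact_mod_cast Fintype.card_pos_iff.mpr ⟨i⟩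
  have sum_eq_sum (j : ι) : ∑ e ∈ Finset.piAntidiag Finset.univ r, (e j : ℝ) =
      ∑ e ∈ Finset.piAntidiag Finset.univ r, (e i : ℝ) := by
    have swap_mem (e : ι → ℕ) (he : e ∈ Finset.piAntidiag Finset.univ r) :
        e ∘ Equiv.swap i j ∈ Finset.piAntidiag Finset.univ r := by
      rw [Finset.mem_piAntidiag] at he ⊢
      exact ⟨(Equiv.sum_comp (Equiv.swap i j) e).trans he.1, fun _ _ => Finset.mem_univ _⟩
    refine Finset.sum_nbij' (· ∘ Equiv.swap i j) (· ∘ Equiv.swap i j) swap_mem swap_mem ?_ ?_ ?_ <;>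
      intro e _
    · simp [Function.comp_assoc, ← Equiv.coe_trans]
    · simp [Function.comp_assoc, ← Equiv.coe_trans]
    · simp
  have sum_sum : ∑ j : ι, ∑ e ∈ Finset.piAntidiag Finset.univ r, (e j : ℝ) =
      (Finset.piAntidiag (Finset.univ : Finset ι) r).card * r := by
    rw [Finset.sum_comm, ← nsmul_eq_mul, ← Finset.sum_const]
    refine Finset.sum_congr rfl fun e he => ?_
    exact_mod_cast (Finset.mem_piAntidiag.mp he).1
  rw [Finset.sum_congr rfl fun j _ => sum_eq_sum j, Finset.sum_const, nsmul_eq_mul,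
    Finset.card_univ] at sum_sum
  rw [← mul_div_assoc, eq_div_iff card_pos.ne', ← sum_sum, mul_comm]

lemma abs_sum_mul_le_of_mem_piAntidiag {r : ℕ} {y : ι → ℝ} {b : ℝ} (hb : 0 ≤ b)
    (hy : ∀ i, r * |y i| ≤ b) {e : ι → ℕ} (he : e ∈ Finset.piAntidiag Finset.univ r) :
    |∑ i, y i * e i| ≤ b := by
  have sum_e : ∑ i, (e i : ℝ) = r := by exact_mod_cast (Finset.mem_piAntidiag.mp he).1
  calc |∑ i, y i * e i| ≤ ∑ i, |y i * e i| := Finset.abs_sum_le_sum_abs _ _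
    _ ≤ ∑ i, b * (e i / r) := by
        refine Finset.sum_le_sum fun i _ => ?_
        rcases r.eq_zero_or_pos with rfl | r_pos
        · simp [Nat.le_zero.mp (le_of_mem_piAntidiag he i)]
        · have r_pos' : (0 : ℝ) < r := Nat.cast_pos.mpr r_pos
          rw [abs_mul, Nat.abs_cast, ← mul_div_assoc, le_div_iff₀ r_pos']
          calc |y i| * e i * r = r * |y i| * e i := by ring
            _ ≤ b * e i := by gcongr; exact hy i
    _ = b * (r / r) := by rw [← Finset.mul_sum, ← Finset.sum_div, sum_e]
    _ ≤ b := mul_le_of_le_one_right hb (div_self_le_one _)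

lemma exp_le_one_add_add_sq {x : ℝ} (hx : |x| ≤ 1) : Real.exp x ≤ 1 + x + x ^ 2 := by
  linarith only [(abs_le.mp (Real.abs_exp_sub_one_sub_id_le hx)).2]

lemma sum_exp_piAntidiag_le {r : ℕ} {y : ι → ℝ} {b : ℝ} (hb₀ : 0 ≤ b) (hb₁ : b ≤ 1)
    (hy : ∀ i, r * |y i| ≤ b) :
    ∑ e ∈ Finset.piAntidiag Finset.univ r, Real.exp (∑ i, y i * e i) ≤
      (Finset.piAntidiag (Finset.univ : Finset ι) r).card *
        Real.exp (r * (∑ i, y i) / Fintype.card ι + b ^ 2) := by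
  calc ∑ e ∈ Finset.piAntidiag Finset.univ r, Real.exp (∑ i, y i * e i)
      ≤ ∑ e ∈ Finset.piAntidiag Finset.univ r, (1 + ∑ i, y i * e i + b ^ 2) := by
        refine Finset.sum_le_sum fun e he => ?_
        have abs_le_b := abs_sum_mul_le_of_mem_piAntidiag hb₀ hy he
        refine (exp_le_one_add_add_sq (abs_le_b.trans hb₁)).trans ?_
        exact add_le_add_right (sq_le_sq' (abs_le.mp abs_le_b).1 (abs_le.mp abs_le_b).2) _
    _ = (Finset.piAntidiag (Finset.univ : Finset ι) r).card *
          (r * (∑ i, y i) / Fintype.card ι + b ^ 2 + 1) := by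
        rw [Finset.sum_add_distrib, Finset.sum_add_distrib, Finset.sum_comm]
        simp only [← Finset.mul_sum, sum_apply_piAntidiag_univ, Finset.sum_const, nsmul_eq_mul]
        rw [← Finset.sum_mul]
        ring
    _ ≤ _ := by
        gcongr
        exact Real.add_one_le_exp _

lemma card_filter_le_sum_mul_exp_le {η β : Type*} [Fintype η] [DecidableEq η]
    (S : η → Finset β) (f : η → β → ℝ) (c : ℝ) :
    ((Fintype.piFinset S).filter fun t => c ≤ ∑ h, f h (t h)).card * Real.exp c ≤
      ∏ h, ∑ e ∈ S h, Real.exp (f h e) := by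
  calc ((Fintype.piFinset S).filter fun t => c ≤ ∑ h, f h (t h)).card * Real.exp c
      = ∑ _t ∈ (Fintype.piFinset S).filter fun t => c ≤ ∑ h, f h (t h), Real.exp c := by
        rw [Finset.sum_const, nsmul_eq_mul]
    _ ≤ ∑ t ∈ (Fintype.piFinset S).filter fun t => c ≤ ∑ h, f h (t h),
          ∏ h, Real.exp (f h (t h)) := by
        refine Finset.sum_le_sum fun t ht => ?_
        rw [← Real.exp_sum]
        exact Real.exp_le_exp.mpr (Finset.mem_filter.mp ht).2
    _ ≤ ∑ t ∈ Fintype.piFinset S, ∏ h, Real.exp (f h (t h)) :=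
        Finset.sum_le_sum_of_subset_of_nonneg (Finset.filter_subset _ _) fun t _ _ => by positivity
    _ = ∏ h, ∑ e ∈ S h, Real.exp (f h e) := by rw [Finset.prod_univ_sum]

/-- The exponents of the monomials in `m` triples of variables which are homogeneous of degree
`r h` in the `h`-th triple. -/
def multidegrees {m : ℕ} (r : Fin m → ℕ) : Finset (Fin m → Fin 3 → ℕ) :=
  Fintype.piFinset fun h => Finset.piAntidiag Finset.univ (r h)

variable {m : ℕ} {r : Fin m → ℕ}

lemma mem_multidegrees {t : Fin m → Fin 3 → ℕ} :
    t ∈ multidegrees r ↔ ∀ h, ∑ i, t h i = r h := by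
  simp [multidegrees]

lemma card_multidegrees (r : Fin m → ℕ) : (multidegrees r).card =
    ∏ h, (Finset.piAntidiag (Finset.univ : Finset (Fin 3)) (r h)).card :=
  Fintype.card_piFinset _

lemma card_multidegrees_pos (r : Fin m → ℕ) : 0 < (multidegrees r).card :=
  Finset.card_pos.mpr ⟨fun h => Pi.single 0 (r h), mem_multidegrees.mpr fun h => by simp⟩

lemma card_multidegrees_le (r : Fin m → ℕ) : (multidegrees r).card ≤ 8 ^ ∑ h, r h := by
  rw [card_multidegrees, ← Finset.prod_pow_eq_pow_sum]
  exact Finset.prod_le_prod' fun h _ => card_piAntidiag_univ_le (r h)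

lemma sum_exp_piAntidiag_three_le {r : ℕ} {l : Fin 3 → ℝ} {R τ lam : ℝ} (hR : 0 < R)
    (lam_nonneg : 0 ≤ lam) (lam_le : 4 * lam ≤ 1) (hl : ∀ i, r * |l i| ≤ 4 * R)
    (hsum : r * (∑ i, l i) ≤ -τ * R) :
    ∑ e ∈ Finset.piAntidiag Finset.univ r, Real.exp (∑ i, lam / R * l i * e i) ≤
      (Finset.piAntidiag (Finset.univ : Finset (Fin 3)) r).card *
        Real.exp (-(lam * τ / 3) + 16 * lam ^ 2) := by
  have abs_le (i) : r * |lam / R * l i| ≤ 4 * lam := by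
    calc r * |lam / R * l i| = lam / R * (r * |l i|) := by
          rw [abs_mul, abs_of_nonneg (by positivity)]
          ring
      _ ≤ lam / R * (4 * R) := by
          gcongr lam / R * ?_
          exact hl i
      _ = 4 * lam := by field_simp
  refine (sum_exp_piAntidiag_le (by positivity) lam_le abs_le).trans ?_
  gcongr _ * Real.exp ?_
  calc r * (∑ i, lam / R * l i) / Fintype.card (Fin 3) + (4 * lam) ^ 2
      = lam / R * (r * ∑ i, l i) / 3 + 16 * lam ^ 2 := by
        rw [← Finset.mul_sum, Fintype.card_fin, Nat.cast_ofNat]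
        ring
    _ ≤ lam / R * (-τ * R) / 3 + 16 * lam ^ 2 := by gcongr lam / R * ?_ / 3 + _
    _ = -(lam * τ / 3) + 16 * lam ^ 2 := by field_simp

/-- The average of `∑ h, ∑ i, l h i * t h i` over all `t` is at most `-τ m R / 3`; by Chernoff's
bound only an exponentially small proportion of the `t` exceed half of that. -/
lemma card_filter_multidegrees_le {l : Fin m → Fin 3 → ℝ} {R τ : ℝ} (hR : 0 < R) (hτ₀ : 0 ≤ τ)
    (hτ₁ : τ ≤ 1) (hl : ∀ h i, r h * |l h i| ≤ 4 * R)
    (hsum : ∀ h, r h * (∑ i, l h i) ≤ -τ * R) :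
    (((multidegrees r).filter fun t => -(τ / 6) * m * R ≤ ∑ h, ∑ i, l h i * t h i).card : ℝ) ≤
      (multidegrees r).card * Real.exp (-m * τ ^ 2 / 2304) := by
  set lam : ℝ := τ / 192 with lam_def
  have lam_nonneg : 0 ≤ lam := by positivity
  have chernoff := (card_filter_le_sum_mul_exp_le
    (fun h => Finset.piAntidiag Finset.univ (r h)) (fun h e => ∑ i, lam / R * l h i * e i)
    (lam / R * (-(τ / 6) * m * R))).trans
      (Finset.prod_le_prod (fun h _ => by positivity) fun h _ =>
        sum_exp_piAntidiag_three_le hR lam_nonneg (by linarith) (hl h) (hsum h))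
  rw [Finset.prod_mul_distrib, Finset.prod_const, Finset.card_univ, Fintype.card_fin,
    ← Nat.cast_prod, ← card_multidegrees, ← Real.exp_nat_mul, ← le_div_iff₀ (Real.exp_pos _),
    mul_div_assoc, ← Real.exp_sub] at chernoff
  refine (Nat.cast_le.mpr (Finset.card_le_card ?_)).trans (chernoff.trans_eq ?_)
  · refine Finset.monotone_filter_right _ fun t _ ht => ?_
    simpa only [mul_assoc, Finset.mul_sum] using
      mul_le_mul_of_nonneg_left ht (show 0 ≤ lam / R by positivity)
  · rw [lam_def]
    congr 2
    field_simp
    ring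

end Multidegrees

section SiegelLemma

open Matrix

section IntMatrix

attribute [local instance] Matrix.seminormedAddCommGroup

lemma exists_ne_zero_int_vec_of_two_mul_card_le {ι κ : Type*} [Fintype ι] [Fintype κ] [Nonempty ι]
    (M : Matrix κ ι ℤ) {H : ℝ} (hH : 1 ≤ H) (hM : ∀ k i, |(M k i : ℝ)| ≤ H)
    (hcard : 2 * Fintype.card κ ≤ Fintype.card ι) :
    ∃ x : ι → ℤ, x ≠ 0 ∧ (∀ i, |(x i : ℝ)| ≤ Fintype.card ι * H) ∧ M *ᵥ x = 0 := by
  have card_ι_pos : 0 < Fintype.card ι := Fintype.card_pos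
  have one_le_card_ι : (1 : ℝ) ≤ Fintype.card ι := by exact_mod_cast card_ι_pos
  rcases isEmpty_or_nonempty κ with _ | _
  · refine ⟨1, one_ne_zero, fun i => ?_, Subsingleton.elim _ _⟩
    simpa using one_le_mul_of_one_le_of_one_le one_le_card_ι hH
  have card_κ_pos : 0 < Fintype.card κ := Fintype.card_pos
  obtain ⟨x, x_ne_zero, hx, norm_x_le⟩ :=
    Int.Matrix.exists_ne_zero_int_vec_norm_le M (by lia) card_κ_pos
  refine ⟨x, x_ne_zero, fun i => ?_, hx⟩
  have norm_M_le : ‖M‖ ≤ H :=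
    (Matrix.norm_le_iff (zero_le_one.trans hH)).mpr fun k i => (Int.norm_eq_abs _).trans_le (hM k i)
  have two_mul_card_le : (2 : ℝ) * Fintype.card κ ≤ Fintype.card ι := by exact_mod_cast hcard
  have card_κ_pos' : (0 : ℝ) < Fintype.card κ := by exact_mod_cast card_κ_pos
  calc |(x i : ℝ)| ≤ ‖x‖ := (Int.norm_eq_abs _).symm.trans_le (norm_le_pi_norm x i)
    _ ≤ (Fintype.card ι * max 1 ‖M‖) ^
          ((Fintype.card κ : ℝ) / (Fintype.card ι - Fintype.card κ)) := norm_x_le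
    _ ≤ (Fintype.card ι * max 1 ‖M‖) ^ (1 : ℝ) := by
        refine Real.rpow_le_rpow_of_exponent_le
          (one_le_mul_of_one_le_of_one_le one_le_card_ι (le_max_left _ _)) ?_
        rw [div_le_one] <;> linarith only [two_mul_card_le, card_κ_pos']
    _ ≤ Fintype.card ι * H := by
        rw [Real.rpow_one]
        gcongr
        exact max_le hH norm_M_le

end IntMatrix

lemma abs_mul_pow_mul_pow_apply_le {n : Type*} [Fintype n] [DecidableEq n] {A : Matrix n n ℤ}
    {a : ℝ} (hA : ∀ i j, |(A i j : ℝ)| ≤ a) {D : ℤ} (hD : D ≠ 0) {w W : ℕ} (hw : w ≤ W) {b : ℤ}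
    {H : ℝ} (hb : |(b : ℝ)| ≤ H) (i j : n) :
    |((b * (D ^ (W - w) * (A ^ w) i j) : ℤ) : ℝ)| ≤
      (|(D : ℝ)| * max 1 (Fintype.card n * a)) ^ W * H := by
  have a_nonneg : 0 ≤ a := (abs_nonneg _).trans (hA i i)
  have one_le_D : 1 ≤ |(D : ℝ)| := by exact_mod_cast Int.one_le_abs hD
  have power_entry_le : |((A ^ w) i j : ℝ)| ≤ max 1 (Fintype.card n * a) ^ W := by
    calc |((A ^ w) i j : ℝ)| ≤ (Fintype.card n * a) ^ w := abs_pow_apply_le hA w i j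
      _ ≤ max 1 (Fintype.card n * a) ^ w := by
          gcongr
          exact le_max_right _ _
      _ ≤ max 1 (Fintype.card n * a) ^ W := pow_le_pow_right₀ (le_max_left _ _) hw
  push_cast
  rw [abs_mul, abs_mul, abs_pow, mul_pow, mul_comm |(b : ℝ)|]
  gcongr
  exact Nat.sub_le _ _

/-- Multiplication by an integer multiple of `α` on a lattice of rank `d` containing `1` turns each
linear equation with coefficients in `ℤ[α]` into `d` linear equations over `ℤ`. -/
theorem exists_ne_zero_int_vec_sum_mul_pow_eq_zero {K : Type*} [Field K] [CharZero K] {α : K}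
    (hα : IsAlgebraic ℤ α) :
    ∃ (d : ℕ) (c : ℝ), 1 ≤ c ∧ ∀ {ι κ : Type} [Fintype ι] [Fintype κ] [Nonempty ι]
      (n : κ → ι → ℤ) (w : ι → ℕ) (W : ℕ) (H : ℝ), 1 ≤ H → (∀ i, w i ≤ W) →
      (∀ k i, |(n k i : ℝ)| ≤ H) → 2 * (Fintype.card κ * d) ≤ Fintype.card ι →
      ∃ x : ι → ℤ, x ≠ 0 ∧ (∀ i, |(x i : ℝ)| ≤ Fintype.card ι * (c ^ W * H)) ∧
        ∀ k, ∑ i, x i * (n k i * α ^ w i) = 0 := by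
  obtain ⟨d, D, A, e, i₀, D_ne_zero, he₀, -, hA⟩ := exists_intMatrix_mulVec_eq_smul hα
  obtain ⟨a, ha⟩ := Finite.exists_le fun ij : Fin d × Fin d => |(A ij.1 ij.2 : ℝ)|
  have one_le_c : 1 ≤ |(D : ℝ)| * max 1 (d * a) :=
    one_le_mul_of_one_le_of_one_le (by exact_mod_cast Int.one_le_abs D_ne_zero) (le_max_left _ _)
  refine ⟨d, |(D : ℝ)| * max 1 (d * a), one_le_c,
    fun {ι κ} _ _ _ n w W H hH hw hn hcard => ?_⟩
  obtain ⟨x, x_ne_zero, x_le, hx⟩ := exists_ne_zero_int_vec_of_two_mul_card_le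
    (fun (k : κ × Fin d) i => n k.1 i * (D ^ (W - w i) * (A ^ w i) i₀ k.2))
    (one_le_mul_of_one_le_of_one_le (one_le_pow₀ one_le_c) hH)
    (fun k i => by
      simpa using abs_mul_pow_mul_pow_apply_le (fun i j => ha (i, j)) D_ne_zero (hw i) (hn k.1 i)
        i₀ k.2)
    (by simpa using hcard)
  refine ⟨x, x_ne_zero, x_le, fun k => ?_⟩
  have row_eq_zero (j : Fin d) :
      (∑ i, (x i * n k i * D ^ (W - w i)) • A ^ w i) i₀ j = 0 := by
    refine Eq.trans ?_ (congrFun hx (k, j))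
    simp only [Matrix.sum_apply, Matrix.smul_apply, smul_eq_mul, mulVec, dotProduct]
    exact Finset.sum_congr rfl fun i _ => by ring
  have at_i₀ := congrFun (sum_smul_pow_mulVec hA hw fun i => x i * n k i) i₀
  simp only [mulVec, dotProduct, map_apply, row_eq_zero, Int.cast_zero, zero_mul,
    Finset.sum_const_zero, Pi.smul_apply, he₀, smul_eq_mul, mul_one, Int.cast_mul] at at_i₀
  simpa [D_ne_zero, mul_assoc] using at_i₀.symm

end SiegelLemma

section Shear

open MvPolynomial

/-- The polynomial `(X₀ - X₁ - X₂) ^ e₀ * X₁ ^ e₁ * X₂ ^ e₂`, whose coefficients describe the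
effect on a monomial of the change of variables `X₀ ↦ X₀ - X₁ - X₂`. -/
noncomputable def shearMonomial (e : Fin 3 → ℕ) : MvPolynomial (Fin 3) ℤ :=
  (X 0 - X 1 - X 2) ^ e 0 * X 1 ^ e 1 * X 2 ^ e 2

lemma isHomogeneous_shearMonomial (e : Fin 3 → ℕ) :
    (shearMonomial e).IsHomogeneous (∑ i, e i) := by
  have isHomogeneous_sub : (X 0 - X 1 - X 2 : MvPolynomial (Fin 3) ℤ).IsHomogeneous 1 :=
    ((isHomogeneous_X ℤ 0).sub (isHomogeneous_X ℤ 1)).sub (isHomogeneous_X ℤ 2)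
  simpa [shearMonomial, Fin.sum_univ_three] using
    ((isHomogeneous_sub.pow (e 0)).mul (isHomogeneous_X_pow 1 (e 1))).mul
      (isHomogeneous_X_pow 2 (e 2))

lemma l1Norm_shearMonomial_le (e : Fin 3 → ℕ) : l1Norm (shearMonomial e) ≤ 3 ^ ∑ i, e i := by
  have norm_sub_le : weightedL1Norm 1 (X 0 - X 1 - X 2 : MvPolynomial (Fin 3) ℤ) ≤ 3 := by
    rw [sub_eq_add_neg, sub_eq_add_neg]
    refine (weightedL1Norm_add_le zero_le_one _ _).trans ?_
    grw [weightedL1Norm_add_le zero_le_one]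
    simp only [weightedL1Norm_neg, weightedL1Norm_X, Pi.one_apply]
    norm_num
  have norm_X_pow_le (i : Fin 3) (k : ℕ) :
      weightedL1Norm 1 (X i ^ k : MvPolynomial (Fin 3) ℤ) ≤ 1 := by
    simpa [weightedL1Norm_X] using
      weightedL1Norm_pow_le zero_le_one (X i : MvPolynomial (Fin 3) ℤ) k
  have norm_sub_pow_le :
      weightedL1Norm 1 ((X 0 - X 1 - X 2 : MvPolynomial (Fin 3) ℤ) ^ e 0) ≤ 3 ^ e 0 :=
    (weightedL1Norm_pow_le zero_le_one _ _).trans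
      (pow_le_pow_left₀ (weightedL1Norm_nonneg zero_le_one _) norm_sub_le _)
  calc l1Norm (shearMonomial e)
      ≤ weightedL1Norm 1 ((X 0 - X 1 - X 2 : MvPolynomial (Fin 3) ℤ) ^ e 0) *
          weightedL1Norm 1 (X 1 ^ e 1 : MvPolynomial (Fin 3) ℤ) *
            weightedL1Norm 1 (X 2 ^ e 2 : MvPolynomial (Fin 3) ℤ) := by
        refine (weightedL1Norm_mul_le zero_le_one _ _).trans ?_
        gcongr ?_ * _
        · exact weightedL1Norm_nonneg zero_le_one _
        · exact weightedL1Norm_mul_le zero_le_one _ _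
    _ ≤ 3 ^ e 0 * 1 * 1 := by
        gcongr
        · exact weightedL1Norm_nonneg zero_le_one _
        · exact weightedL1Norm_nonneg zero_le_one _
        · exact norm_X_pow_le 1 _
        · exact norm_X_pow_le 2 _
    _ ≤ 3 ^ ∑ i, e i := by
        rw [mul_one, mul_one]
        exact pow_le_pow_right₀ (by norm_num)
          (Finset.single_le_sum_of_canonicallyOrdered (Finset.mem_univ 0))

lemma aeval_shearMonomial {A : Type*} [CommRing A] (e : Fin 3 → ℕ) (z : Fin 3 → A) :
    aeval z (shearMonomial e) = ∑ e' ∈ Finset.piAntidiag Finset.univ (∑ i, e i),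
      ((coeff (Finsupp.equivFunOnFinite.symm e') (shearMonomial e) : ℤ) : A) * ∏ i, z i ^ e' i := by
  have support_subset : (shearMonomial e).support ⊆
      (Finset.piAntidiag Finset.univ (∑ i, e i)).map Finsupp.equivFunOnFinite.symm.toEmbedding := by
    intro d hd
    rw [Finset.mem_map_equiv, Finset.mem_piAntidiag]
    refine ⟨?_, fun _ _ => Finset.mem_univ _⟩
    simpa [Finsupp.weight_apply, Finsupp.sum_fintype] using
      isHomogeneous_shearMonomial e (mem_support_iff.mp hd)
  rw [aeval_def, eval₂_eq', Finset.sum_subset support_subset, Finset.sum_map]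
  · simp
  · intro d _ hd
    simp [notMem_support_iff.mp hd]

variable {m : ℕ} {r : Fin m → ℕ}

/-- The coefficient of the monomial with exponents `t'` in the monomial with exponents `t` after
replacing `X₀` by `X₀ - X₁ - X₂` in each triple of variables. -/
noncomputable def shearCoeff (t t' : Fin m → Fin 3 → ℕ) : ℤ :=
  ∏ h, coeff (Finsupp.equivFunOnFinite.symm (t' h)) (shearMonomial (t h))

lemma abs_shearCoeff_le {t : Fin m → Fin 3 → ℕ} (ht : t ∈ multidegrees r)
    (t' : Fin m → Fin 3 → ℕ) : |(shearCoeff t t' : ℝ)| ≤ 3 ^ ∑ h, r h := by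
  rw [shearCoeff, Int.cast_prod, Finset.abs_prod, ← Finset.prod_pow_eq_pow_sum]
  refine Finset.prod_le_prod (fun _ _ => abs_nonneg _) fun h _ => ?_
  rw [← mem_multidegrees.mp ht h]
  simpa [Int.norm_eq_abs] using
    (norm_coeff_le_l1Norm (shearMonomial (t h)) _).trans (l1Norm_shearMonomial_le (t h))

/-- The weight for which `X i` in each triple of variables has weight `i`. -/
def shearWeight (t : Fin m → Fin 3 → ℕ) : ℕ :=
  ∑ h, ∑ i : Fin 3, i * t h i

lemma shearWeight_le {t : Fin m → Fin 3 → ℕ} (ht : t ∈ multidegrees r) :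
    shearWeight t ≤ 2 * ∑ h, r h := by
  rw [shearWeight, Finset.mul_sum]
  refine Finset.sum_le_sum fun h _ => ?_
  rw [← mem_multidegrees.mp ht h, Finset.mul_sum]
  gcongr with i
  exact Nat.le_of_lt_succ i.2

/-- The value at `L` of the form with coefficients `x` which is homogeneous of degree `r h` in the
`h`-th triple of variables. -/
noncomputable def evalMultiform {R A : Type*} [CommSemiring R] [CommSemiring A] [Algebra R A]
    (r : Fin m → ℕ) (x : (Fin m → Fin 3 → ℕ) → R) (L : Fin m → Fin 3 → A) : A :=
  ∑ t ∈ multidegrees r, x t • ∏ h, ∏ i, L h i ^ t h i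

lemma map_evalMultiform {A B : Type*} [CommRing A] [CommRing B] (f : A →+* B)
    (x : (Fin m → Fin 3 → ℕ) → ℤ) (L : Fin m → Fin 3 → A) :
    f (evalMultiform r x L) = evalMultiform r x fun h i => f (L h i) := by
  simp [evalMultiform]

/-- The coefficients of the form with coefficients `x`, expressed in the variables
`X₀ + α X₁ + α² X₂`, `α X₁`, `α² X₂` of each triple. -/
noncomputable def shearedCoeff {K : Type*} [Field K] (α : K) (r : Fin m → ℕ)
    (x : (Fin m → Fin 3 → ℕ) → ℤ) (t' : Fin m → Fin 3 → ℕ) : K :=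
  ∑ t ∈ multidegrees r, x t * (α⁻¹ ^ shearWeight t * shearCoeff t t')

lemma prod_pow_eq_smul_sum_shear {K A : Type*} [Field K] [CommRing A] [Algebra K A] {α : K}
    (hα : α ≠ 0) (e : Fin 3 → ℕ) (L : Fin 3 → A) :
    ∏ i, L i ^ e i = α⁻¹ ^ (∑ i : Fin 3, i * e i) • ∑ e' ∈ Finset.piAntidiag Finset.univ (∑ i, e i),
      ((coeff (Finsupp.equivFunOnFinite.symm e') (shearMonomial e) : ℤ) : A) *
        ∏ i : Fin 3, (α ^ (i : ℕ) • ![∑ j : Fin 3, α ^ (j : ℕ) • L j, L 1, L 2] i) ^ e' i := by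
  have scalar_eq : α⁻¹ ^ (e 1 + 2 * e 2) * α ^ (2 * e 2) * α ^ e 1 = 1 := by
    rw [mul_assoc, ← pow_add, add_comm (2 * e 2), ← mul_pow, inv_mul_cancel₀ hα, one_pow]
  rw [← aeval_shearMonomial]
  simp only [shearMonomial, map_mul, map_pow, map_sub, aeval_X, Fin.prod_univ_three,
    Fin.sum_univ_three, Matrix.cons_val_zero, Matrix.cons_val_one, Matrix.cons_val, Fin.val_zero,
    Fin.val_one, Fin.val_two, pow_zero, one_smul, pow_one]
  have head_eq : L 0 + α • L 1 + α ^ 2 • L 2 - α • L 1 - α ^ 2 • L 2 = L 0 := by abel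
  rw [head_eq, smul_pow, smul_pow, mul_smul_comm, mul_smul_comm, smul_mul_assoc, smul_smul,
    smul_smul, zero_mul, zero_add, one_mul, ← pow_mul, scalar_eq, one_smul, mul_assoc]

lemma evalMultiform_eq_evalMultiform_shearedCoeff {K A : Type*} [Field K] [CommRing A]
    [Algebra K A] {α : K} (hα : α ≠ 0) (x : (Fin m → Fin 3 → ℕ) → ℤ) (L : Fin m → Fin 3 → A) :
    evalMultiform r x L = evalMultiform r (shearedCoeff α r x) fun h i =>
      α ^ (i : ℕ) • ![∑ j : Fin 3, α ^ (j : ℕ) • L h j, L h 1, L h 2] i := by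
  have prod_eq (t) (ht : t ∈ multidegrees r) : ∏ h, ∏ i, L h i ^ t h i =
      ∑ t' ∈ multidegrees r, (α⁻¹ ^ shearWeight t * shearCoeff t t') •
        ∏ h, ∏ i : Fin 3,
          (α ^ (i : ℕ) • ![∑ j : Fin 3, α ^ (j : ℕ) • L h j, L h 1, L h 2] i) ^ t' h i := by
    rw [Finset.prod_congr rfl fun h _ => prod_pow_eq_smul_sum_shear hα (t h) (L h),
      Finset.prod_smul, Finset.prod_pow_eq_pow_sum, ← shearWeight]
    simp only [mem_multidegrees.mp ht]
    rw [Finset.prod_univ_sum, ← multidegrees, Finset.smul_sum]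
    refine Finset.sum_congr rfl fun t' _ => ?_
    rw [mul_smul, Finset.prod_mul_distrib, shearCoeff, ← Int.cast_prod, Int.cast_smul_eq_zsmul,
      zsmul_eq_mul]
  rw [evalMultiform, Finset.sum_congr rfl fun t ht => congrArg (x t • ·) (prod_eq t ht)]
  simp only [evalMultiform, shearedCoeff, Finset.smul_sum, Finset.sum_smul]
  rw [Finset.sum_comm]
  refine Finset.sum_congr rfl fun t' _ => Finset.sum_congr rfl fun t _ => ?_
  rw [mul_smul (x t : K), Int.cast_smul_eq_zsmul]

end Shear

section AuxiliaryCoefficients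

theorem exists_shearedCoeff_eq_zero {K : Type*} [Field K] [CharZero K] {α : K}
    (hα : IsAlgebraic ℤ α) (hα₀ : α ≠ 0) :
    ∃ (d : ℕ) (c : ℝ), 1 ≤ c ∧ ∀ {m : ℕ} (r : Fin m → ℕ) (B : Finset (Fin m → Fin 3 → ℕ)),
      2 * (B.card * d) ≤ (multidegrees r).card → ∃ x : (Fin m → Fin 3 → ℕ) → ℤ,
        (∃ t ∈ multidegrees r, x t ≠ 0) ∧ (∀ t ∈ multidegrees r, |(x t : ℝ)| ≤ c ^ ∑ h, r h) ∧
          ∀ t' ∈ B, shearedCoeff α r x t' = 0 := by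
  obtain ⟨d, c, one_le_c, exists_vec⟩ := exists_ne_zero_int_vec_sum_mul_pow_eq_zero hα
  refine ⟨d, 8 * (c ^ 2 * 3), by nlinarith, fun {m} r B card_le => ?_⟩
  have : Nonempty (multidegrees r) := (Finset.card_pos.mp (card_multidegrees_pos r)).to_subtype
  set S := ∑ h, r h
  obtain ⟨y, y_ne_zero, abs_y_le, sum_eq_zero⟩ := exists_vec
    (fun (t' : B) (t : multidegrees r) => shearCoeff t.1 t'.1)
    (fun t : multidegrees r => 2 * S - shearWeight t.1) (2 * S) (3 ^ S)
    (one_le_pow₀ (by norm_num)) (fun _ => Nat.sub_le _ _)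
    (fun t' t => abs_shearCoeff_le t.2 t'.1) (by simpa only [Fintype.card_coe] using card_le)
  obtain ⟨x, rfl⟩ := Subtype.val_injective.surjective_comp_right y
  obtain ⟨t, x_t_ne_zero⟩ := Function.ne_iff.mp y_ne_zero
  refine ⟨x, ⟨t, t.2, x_t_ne_zero⟩, fun t ht => ?_, fun t' ht' => ?_⟩
  · have card_le_pow : ((multidegrees r).card : ℝ) ≤ 8 ^ S := mod_cast card_multidegrees_le r
    rw [mul_pow, mul_pow, ← pow_mul]
    refine (abs_y_le ⟨t, ht⟩).trans ?_
    rw [Fintype.card_coe]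
    gcongr
  · have pow_mul_eq_zero : α ^ (2 * S) * shearedCoeff α r x t' = 0 := by
      rw [← sum_eq_zero ⟨t', ht'⟩, shearedCoeff, ← Finset.sum_coe_sort, Finset.mul_sum]
      refine Finset.sum_congr rfl fun t _ => ?_
      have pow_sub_eq : α ^ (2 * S - shearWeight t.1) = α ^ (2 * S) * (α ^ shearWeight t.1)⁻¹ :=
        pow_sub₀ α hα₀ (shearWeight_le t.2)
      simp only [Function.comp_apply, pow_sub_eq, inv_pow]
      ring
    exact (mul_eq_zero.mp pow_mul_eq_zero).resolve_left (pow_ne_zero _ hα₀)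

variable {m : ℕ} {r : Fin m → ℕ} {α c τ R : ℝ} {l : Fin m → Fin 3 → ℝ}

lemma abs_shearedCoeff_le {x : (Fin m → Fin 3 → ℕ) → ℤ} (hα₀ : 0 < α) (hα₁ : α ≤ 1)
    (hx : ∀ t ∈ multidegrees r, |(x t : ℝ)| ≤ c ^ ∑ h, r h) (t' : Fin m → Fin 3 → ℕ) :
    |shearedCoeff α r x t'| ≤ (8 * (c * (α⁻¹ ^ 2 * 3))) ^ ∑ h, r h := by
  set S := ∑ h, r h
  have one_le_inv : 1 ≤ α⁻¹ := (one_le_inv₀ hα₀).mpr hα₁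
  have term_le (t) (ht : t ∈ multidegrees r) :
      |x t * (α⁻¹ ^ shearWeight t * shearCoeff t t')| ≤ c ^ S * (α⁻¹ ^ (2 * S) * 3 ^ S) := by
    rw [abs_mul, abs_mul, abs_of_pos (by positivity : 0 < α⁻¹ ^ shearWeight t)]
    have shearWeight_le_two_mul : shearWeight t ≤ 2 * S := shearWeight_le ht
    have abs_coeff_le := abs_shearCoeff_le ht t'
    have abs_x_le := hx t ht
    have pow_nonneg : 0 ≤ c ^ S := (abs_nonneg _).trans abs_x_le
    gcongr
  have card_le : ((multidegrees r).card : ℝ) ≤ 8 ^ S := mod_cast card_multidegrees_le r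
  obtain ⟨t, ht⟩ := Finset.card_pos.mp (card_multidegrees_pos r)
  have bound_nonneg : 0 ≤ c ^ S * (α⁻¹ ^ (2 * S) * 3 ^ S) := (abs_nonneg _).trans (term_le t ht)
  calc |shearedCoeff α r x t'|
      ≤ ∑ t ∈ multidegrees r, |x t * (α⁻¹ ^ shearWeight t * shearCoeff t t')| :=
        Finset.abs_sum_le_sum_abs _ _
    _ ≤ (multidegrees r).card • (c ^ S * (α⁻¹ ^ (2 * S) * 3 ^ S)) :=
        Finset.sum_le_card_nsmul _ _ _ term_le
    _ ≤ 8 ^ S * (c ^ S * (α⁻¹ ^ (2 * S) * 3 ^ S)) := by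
        rw [nsmul_eq_mul]
        gcongr
    _ = (8 * (c * (α⁻¹ ^ 2 * 3))) ^ S := by rw [mul_pow, mul_pow, mul_pow, ← pow_mul]

/-- Integer coefficients of an auxiliary form of degree `r h` in the `h`-th triple of variables:
they are not all zero, they are small, and after the shear at `α` all coefficients vanish at the
monomials which are not small at the point whose `i`-th coordinate in the `h`-th triple is
`exp (l h i)`. -/
structure IsAuxiliaryForm (α c τ R : ℝ) (r : Fin m → ℕ) (l : Fin m → Fin 3 → ℝ)
    (x : (Fin m → Fin 3 → ℕ) → ℤ) : Prop where
  exists_ne_zero : ∃ t ∈ multidegrees r, x t ≠ 0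
  abs_le : ∀ t ∈ multidegrees r, |(x t : ℝ)| ≤ c ^ ∑ h, r h
  abs_shearedCoeff_le : ∀ t, |shearedCoeff α r x t| ≤ c ^ ∑ h, r h
  shearedCoeff_eq_zero : ∀ t ∈ multidegrees r,
    -(τ / 6) * m * R ≤ ∑ h, ∑ i, l h i * t h i → shearedCoeff α r x t = 0

theorem exists_isAuxiliaryForm (hα : IsAlgebraic ℤ α) (hα₀ : 0 < α) (hα₁ : α ≤ 1)
    (hτ₀ : 0 < τ) (hτ₁ : τ ≤ 1) :
    ∃ (m : ℕ) (c : ℝ), 1 ≤ m ∧ 1 ≤ c ∧ ∀ (r : Fin m → ℕ) (l : Fin m → Fin 3 → ℝ) (R : ℝ), 0 < R →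
      (∀ h i, r h * |l h i| ≤ 4 * R) → (∀ h, r h * ∑ i, l h i ≤ -τ * R) →
        ∃ x, IsAuxiliaryForm α c τ R r l x := by
  obtain ⟨d, c, one_le_c, exists_coeffs⟩ := exists_shearedCoeff_eq_zero hα hα₀.ne'
  obtain ⟨m, le_m⟩ := exists_nat_ge (max 1 (2 * d * (2304 / τ ^ 2)))
  obtain ⟨one_le_m, le_m⟩ := max_le_iff.mp le_m
  have exp_mul_le_one : Real.exp (-m * τ ^ 2 / 2304) * (2 * d) ≤ 1 := by
    rw [neg_mul, neg_div, Real.exp_neg, inv_mul_le_iff₀ (Real.exp_pos _), mul_one]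
    calc 2 * (d : ℝ) = 2 * d * (2304 / τ ^ 2) * (τ ^ 2 / 2304) := by field_simp
      _ ≤ m * τ ^ 2 / 2304 := by
        rw [mul_div_assoc]
        gcongr
      _ ≤ Real.exp (m * τ ^ 2 / 2304) :=
        (le_add_of_nonneg_right zero_le_one).trans (Real.add_one_le_exp _)
  have one_le_inv_sq : 1 ≤ α⁻¹ ^ 2 := one_le_pow₀ ((one_le_inv₀ hα₀).mpr hα₁)
  have c_le : c ≤ 8 * (c * (α⁻¹ ^ 2 * 3)) := by nlinarith
  refine ⟨m, 8 * (c * (α⁻¹ ^ 2 * 3)), mod_cast one_le_m, one_le_c.trans c_le,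
    fun r l R R_pos abs_le sum_le => ?_⟩
  have two_mul_card_le : 2 * (((multidegrees r).filter fun t =>
      -(τ / 6) * m * R ≤ ∑ h, ∑ i, l h i * t h i).card * d) ≤
        (multidegrees r).card := by
    have card_filter_le := card_filter_multidegrees_le R_pos hτ₀.le hτ₁ abs_le sum_le
    rify
    calc 2 * ((((multidegrees r).filter fun t =>
          -(τ / 6) * m * R ≤ ∑ h, ∑ i, l h i * t h i).card : ℝ) * d)
        ≤ 2 * (((multidegrees r).card *
            Real.exp (-m * τ ^ 2 / 2304)) * d) := by gcongr
      _ = (multidegrees r).card * (Real.exp (-m * τ ^ 2 / 2304) * (2 * d)) := by ring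
      _ ≤ (multidegrees r).card := mul_le_of_le_one_right (Nat.cast_nonneg _) exp_mul_le_one
  obtain ⟨x, x_ne_zero, abs_x_le, x_vanishes⟩ := exists_coeffs r _ two_mul_card_le
  exact ⟨x, x_ne_zero, fun t ht => (abs_x_le t ht).trans (by gcongr),
    abs_shearedCoeff_le hα₀ hα₁ abs_x_le,
    fun t ht h => x_vanishes t (Finset.mem_filter.mpr ⟨ht, h⟩)⟩

end AuxiliaryCoefficients

section RestrictedForm

open MvPolynomial

variable {m : ℕ} {r : Fin m → ℕ}

/-- The `i`-th coordinate of the generic combination `X₀ e₀ + X₁ u + X₂ v` of the first standard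
basis vector and the vectors `u`, `v`, written in the `h`-th triple of variables. -/
noncomputable def genericCoord {R : Type*} [CommSemiring R] (h : Fin m) (u v : Fin 3 → R)
    (i : Fin 3) : MvPolynomial (Fin m × Fin 3) R :=
  C (![1, 0, 0] i) * X (h, 0) + C (u i) * X (h, 1) + C (v i) * X (h, 2)

lemma map_genericCoord {R S : Type*} [CommSemiring R] [CommSemiring S] (f : R →+* S) (h : Fin m)
    (u v : Fin 3 → R) (i : Fin 3) :
    map f (genericCoord h u v i) = genericCoord h (fun j => f (u j)) (fun j => f (v j)) i := by
  fin_cases i <;> simp [genericCoord]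

lemma adapted_genericCoord (α : ℝ) (h : Fin m) (u v : Fin 3 → ℤ) (i : Fin 3) :
    ![∑ j : Fin 3, α ^ (j : ℕ) • genericCoord h (fun k => (u k : ℝ)) (fun k => (v k : ℝ)) j,
      genericCoord h (fun k => (u k : ℝ)) (fun k => (v k : ℝ)) 1,
      genericCoord h (fun k => (u k : ℝ)) (fun k => (v k : ℝ)) 2] i =
      genericCoord h (adaptedCoords α u) (adaptedCoords α v) i := by
  fin_cases i
  · simp only [Fin.zero_eta, Matrix.cons_val, genericCoord, adaptedCoords, Fin.sum_univ_three,
      Fin.val_zero, Fin.val_one, Fin.val_two, smul_eq_C_mul, C_add, C_mul, C_pow, C_1, C_0]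
    ring
  · simp [genericCoord, adaptedCoords]
  · simp [genericCoord, adaptedCoords]

lemma weightedL1Norm_genericCoord_le {ρ : Fin m × Fin 3 → ℝ} (hρ : 0 ≤ ρ) (h : Fin m)
    (u v : Fin 3 → ℝ) (i : Fin 3) :
    weightedL1Norm ρ (genericCoord h u v i) ≤
      |![1, 0, 0] i| * ρ (h, 0) + |u i| * ρ (h, 1) + |v i| * ρ (h, 2) := by
  have term_le (a : ℝ) (w : Fin m × Fin 3) : weightedL1Norm ρ (C a * X w) ≤ |a| * ρ w := by
    simpa [weightedL1Norm_C, weightedL1Norm_X] using weightedL1Norm_mul_le hρ (C a) (X w)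
  grw [genericCoord, weightedL1Norm_add_le hρ, weightedL1Norm_add_le hρ, term_le, term_le, term_le]

lemma weightedL1Norm_evalMultiform_le {σ : Type*} {ρ : σ → ℝ} (hρ : 0 ≤ ρ)
    (x : (Fin m → Fin 3 → ℕ) → ℝ) {L : Fin m → Fin 3 → MvPolynomial σ ℝ} {B : Fin m → Fin 3 → ℝ}
    (hL : ∀ h i, weightedL1Norm ρ (L h i) ≤ B h i) :
    weightedL1Norm ρ (evalMultiform r x L) ≤
      ∑ t ∈ multidegrees r, |x t| * ∏ h, ∏ i, B h i ^ t h i := by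
  refine (weightedL1Norm_sum_le hρ _ _).trans (Finset.sum_le_sum fun t _ => ?_)
  rw [smul_eq_C_mul]
  refine (weightedL1Norm_mul_le hρ _ _).trans ?_
  rw [weightedL1Norm_C, Real.norm_eq_abs]
  gcongr
  refine (weightedL1Norm_prod_le hρ _ _).trans
    (Finset.prod_le_prod (fun _ _ => weightedL1Norm_nonneg hρ _) fun h _ => ?_)
  refine (weightedL1Norm_prod_le hρ _ _).trans
    (Finset.prod_le_prod (fun _ _ => weightedL1Norm_nonneg hρ _) fun i _ => ?_)
  exact (weightedL1Norm_pow_le hρ _ _).trans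
    (pow_le_pow_left₀ (weightedL1Norm_nonneg hρ _) (hL h i) _)

/-- The form with coefficients `x`, evaluated in its `h`-th triple of variables at the generic
combination of the first standard basis vector, `u h` and `v h`. Its terms of low degree in the
variables `X (h, 0)` record the behaviour of the form near the planes spanned by `u h` and `v h`. -/
noncomputable def restrictedForm (r : Fin m → ℕ) (x : (Fin m → Fin 3 → ℕ) → ℤ)
    (u v : Fin m → Fin 3 → ℤ) : MvPolynomial (Fin m × Fin 3) ℤ :=
  evalMultiform r x fun h => genericCoord h (u h) (v h)

lemma map_restrictedForm {α : ℝ} (hα : α ≠ 0) (x : (Fin m → Fin 3 → ℕ) → ℤ)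
    (u v : Fin m → Fin 3 → ℤ) :
    map (Int.castRingHom ℝ) (restrictedForm r x u v) = evalMultiform r (shearedCoeff α r x)
      fun h i =>
        α ^ (i : ℕ) • genericCoord h (adaptedCoords α (u h)) (adaptedCoords α (v h)) i := by
  refine (map_evalMultiform (map (Int.castRingHom ℝ)) x _).trans
    ((evalMultiform_eq_evalMultiform_shearedCoeff hα x _).trans ?_)
  simp only [map_genericCoord, Int.coe_castRingHom, adapted_genericCoord]

variable {α c τ R : ℝ} {l : Fin m → Fin 3 → ℝ} {x : (Fin m → Fin 3 → ℕ) → ℤ}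
  {u v : Fin m → Fin 3 → ℤ}

/-- Radii for the variables `X (h, i)`, chosen so that the generic combinations of two vectors
with adapted coordinates at most `exp (l h i)` have the same order of magnitude. -/
noncomputable def adaptedRadius (l : Fin m → Fin 3 → ℝ) (w : Fin m × Fin 3) : ℝ :=
  ![Real.exp (l w.1 0), 1, 1] w.2

lemma adaptedRadius_nonneg (l : Fin m → Fin 3 → ℝ) : 0 ≤ adaptedRadius l := by
  rintro ⟨h, i⟩
  fin_cases i <;> simp [adaptedRadius, Real.exp_nonneg]

lemma weightedL1Norm_pow_smul_genericCoord_le (hα₀ : 0 ≤ α) (hα₁ : α ≤ 1) {h : Fin m}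
    {u v : Fin 3 → ℝ} (hu : ∀ i, |u i| ≤ Real.exp (l h i)) (hv : ∀ i, |v i| ≤ Real.exp (l h i))
    (i : Fin 3) :
    weightedL1Norm (adaptedRadius l) (α ^ (i : ℕ) • genericCoord h u v i) ≤
      3 * Real.exp (l h i) := by
  have radius_nonneg := adaptedRadius_nonneg l
  have unit_mul_le : |![1, 0, 0] i| * Real.exp (l h 0) ≤ Real.exp (l h i) := by
    fin_cases i <;> simp [Real.exp_nonneg]
  calc weightedL1Norm (adaptedRadius l) (α ^ (i : ℕ) • genericCoord h u v i)
      ≤ α ^ (i : ℕ) * weightedL1Norm (adaptedRadius l) (genericCoord h u v i) := by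
        rw [smul_eq_C_mul]
        refine (weightedL1Norm_mul_le radius_nonneg _ _).trans_eq ?_
        rw [weightedL1Norm_C, Real.norm_of_nonneg (pow_nonneg hα₀ _)]
    _ ≤ weightedL1Norm (adaptedRadius l) (genericCoord h u v i) :=
        mul_le_of_le_one_left (weightedL1Norm_nonneg radius_nonneg _) (pow_le_one₀ hα₀ hα₁)
    _ ≤ |![1, 0, 0] i| * Real.exp (l h 0) + |u i| + |v i| := by
        simpa [adaptedRadius] using weightedL1Norm_genericCoord_le radius_nonneg h u v i
    _ ≤ 3 * Real.exp (l h i) := by linarith [hu i, hv i]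

lemma prod_prod_three_mul_exp_pow {t : Fin m → Fin 3 → ℕ} (ht : t ∈ multidegrees r) :
    ∏ h, ∏ i, (3 * Real.exp (l h i)) ^ t h i =
      3 ^ (∑ h, r h) * Real.exp (∑ h, ∑ i, l h i * t h i) := by
  simp_rw [mul_pow, Finset.prod_mul_distrib, Finset.prod_pow_eq_pow_sum, mem_multidegrees.mp ht,
    Real.exp_sum, mul_comm (l _ _), Real.exp_nat_mul]

lemma weightedL1Norm_map_restrictedForm_le (hα₀ : 0 < α) (hα₁ : α ≤ 1)
    (hx : IsAuxiliaryForm α c τ R r l x)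
    (hu : ∀ h i, |adaptedCoords α (u h) i| ≤ Real.exp (l h i))
    (hv : ∀ h i, |adaptedCoords α (v h) i| ≤ Real.exp (l h i)) :
    weightedL1Norm (adaptedRadius l) (map (Int.castRingHom ℝ) (restrictedForm r x u v)) ≤
      (24 * c) ^ (∑ h, r h) * Real.exp (-(τ / 6) * m * R) := by
  set S := ∑ h, r h
  have pow_nonneg : 0 ≤ c ^ S := (abs_nonneg _).trans (hx.abs_shearedCoeff_le 0)
  have card_le : ((multidegrees r).card : ℝ) ≤ 8 ^ S := mod_cast card_multidegrees_le r
  have term_le (t) (ht : t ∈ multidegrees r) :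
      |shearedCoeff α r x t| * ∏ h, ∏ i, (3 * Real.exp (l h i)) ^ t h i ≤
        c ^ S * (3 ^ S * Real.exp (-(τ / 6) * m * R)) := by
    by_cases heavy : -(τ / 6) * m * R ≤ ∑ h, ∑ i, l h i * t h i
    · rw [hx.shearedCoeff_eq_zero t ht heavy, abs_zero, zero_mul]
      positivity
    · rw [prod_prod_three_mul_exp_pow ht]
      gcongr
      · exact hx.abs_shearedCoeff_le t
      · exact (not_le.mp heavy).le
  rw [map_restrictedForm hα₀.ne']
  calc _ ≤ ∑ t ∈ multidegrees r,
          |shearedCoeff α r x t| * ∏ h, ∏ i, (3 * Real.exp (l h i)) ^ t h i :=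
        weightedL1Norm_evalMultiform_le (adaptedRadius_nonneg l) _ fun h =>
          weightedL1Norm_pow_smul_genericCoord_le hα₀.le hα₁ (hu h) (hv h)
    _ ≤ (multidegrees r).card • (c ^ S * (3 ^ S * Real.exp (-(τ / 6) * m * R))) :=
        Finset.sum_le_card_nsmul _ _ _ term_le
    _ ≤ 8 ^ S * (c ^ S * (3 ^ S * Real.exp (-(τ / 6) * m * R))) := by
        rw [nsmul_eq_mul]
        gcongr
    _ = (24 * c) ^ S * Real.exp (-(τ / 6) * m * R) := by
        rw [show 24 * c = 8 * (c * 3) by ring, mul_pow, mul_pow]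
        ring

lemma exp_neg_le_prod_adaptedRadius (hr : ∀ h, 1 ≤ r h) (hl : ∀ h i, r h * |l h i| ≤ 4 * R)
    (e : Fin m × Fin 3 →₀ ℕ) :
    Real.exp (-(4 * R * ∑ h, (e (h, 0) : ℝ) / r h)) ≤
      e.prod fun w k => adaptedRadius l w ^ k := by
  have prod_eq : (e.prod fun w k => adaptedRadius l w ^ k) =
      Real.exp (∑ h, e (h, 0) * l h 0) := by
    rw [Finsupp.prod_fintype _ _ fun _ => pow_zero _, Fintype.prod_prod_type, Real.exp_sum]
    simp [Fin.prod_univ_three, adaptedRadius, Real.exp_nat_mul]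
  rw [prod_eq, Real.exp_le_exp, Finset.mul_sum, ← Finset.sum_neg_distrib]
  refine Finset.sum_le_sum fun h _ => ?_
  have r_pos : (0 : ℝ) < r h := Nat.cast_pos.mpr (hr h)
  have le_l : -(4 * R) / r h ≤ l h 0 := by
    rw [div_le_iff₀ r_pos, mul_comm (l h 0)]
    refine le_trans (neg_le_neg (hl h 0)) ?_
    rw [← mul_neg]
    exact mul_le_mul_of_nonneg_left (neg_abs_le _) r_pos.le
  calc -(4 * R * (e (h, 0) / r h)) = e (h, 0) * (-(4 * R) / r h) := by ring
    _ ≤ e (h, 0) * l h 0 := by gcongr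

theorem le_sum_div_of_coeff_restrictedForm_ne_zero (hα₀ : 0 < α) (hα₁ : α ≤ 1) (hm : 1 ≤ m)
    (hr : ∀ h, 1 ≤ r h) (hR : 0 < R) (hτ : 0 < τ) (hc : 1 ≤ c)
    (hx : IsAuxiliaryForm α c τ R r l x) (hl : ∀ h i, r h * |l h i| ≤ 4 * R)
    (hu : ∀ h i, |adaptedCoords α (u h) i| ≤ Real.exp (l h i))
    (hv : ∀ h i, |adaptedCoords α (v h) i| ≤ Real.exp (l h i))
    (hlog : (∑ h, r h : ℕ) * Real.log (24 * c) < τ * m * R / 12)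
    {e : Fin m × Fin 3 →₀ ℕ} (he : coeff e (restrictedForm r x u v) ≠ 0) :
    τ / 48 ≤ ∑ h, (e (h, 0) : ℝ) / r h := by
  have radius_nonneg := adaptedRadius_nonneg l
  have one_le_norm : 1 ≤ ‖coeff e (map (Int.castRingHom ℝ) (restrictedForm r x u v))‖ := by
    rw [coeff_map, eq_intCast, Real.norm_eq_abs]
    exact_mod_cast Int.one_le_abs he
  have exp_le : Real.exp (-(4 * R * ∑ h, (e (h, 0) : ℝ) / r h)) ≤
      Real.exp ((∑ h, r h : ℕ) * Real.log (24 * c) + -(τ / 6) * m * R) := by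
    calc _ ≤ e.prod fun w k => adaptedRadius l w ^ k := exp_neg_le_prod_adaptedRadius hr hl e
      _ ≤ ‖coeff e (map (Int.castRingHom ℝ) (restrictedForm r x u v))‖ *
            e.prod fun w k => adaptedRadius l w ^ k :=
          le_mul_of_one_le_left (monomialWeight_nonneg radius_nonneg e) one_le_norm
      _ ≤ weightedL1Norm (adaptedRadius l) (map (Int.castRingHom ℝ) (restrictedForm r x u v)) :=
          norm_coeff_mul_le_weightedL1Norm radius_nonneg _ e
      _ ≤ (24 * c) ^ (∑ h, r h) * Real.exp (-(τ / 6) * m * R) :=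
          weightedL1Norm_map_restrictedForm_le hα₀ hα₁ hx hu hv
      _ = _ := by rw [Real.exp_add, Real.exp_nat_mul, Real.exp_log (by linarith)]
  have tau_mul_le : τ * R ≤ τ * m * R := by
    gcongr
    exact le_mul_of_one_le_right hτ.le (mod_cast hm)
  have four_mul_ge : τ * R / 12 ≤ 4 * R * ∑ h, (e (h, 0) : ℝ) / r h := by
    linarith [Real.exp_le_exp.mp exp_le]
  nlinarith

end RestrictedForm

section Dehomogenization

open MvPolynomial

variable {m : ℕ} {r : Fin m → ℕ}

/-- Substitution in the polynomials in `m` triples of variables which keeps the first variable of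
each triple as a new variable `X h` of the coefficient ring, and replaces the other two by
polynomials `g h 0`, `g h 1` in the outer variables. -/
noncomputable def dehomogenize (g : Fin m → Fin 2 → MvPolynomial (Fin m) ℚ) :
    MvPolynomial (Fin m × Fin 3) ℤ →+* MvPolynomial (Fin m) (MvPolynomial (Fin m) ℚ) :=
  eval₂Hom (Int.castRingHom _) fun w =>
    ![C (X w.1), MvPolynomial.map C (g w.1 0), MvPolynomial.map C (g w.1 1)] w.2

lemma monomial_equivFunOnFinite_symm {σ R : Type*} [Fintype σ] [CommSemiring R] (f : σ → ℕ) :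
    (monomial (Finsupp.equivFunOnFinite.symm f) 1 : MvPolynomial σ R) = ∏ i, X i ^ f i := by
  rw [monomial_eq, C_1, one_mul, Finsupp.prod_fintype _ _ fun _ => pow_zero _]
  rfl

lemma dehomogenize_monomial (g : Fin m → Fin 2 → MvPolynomial (Fin m) ℚ)
    (e : Fin m × Fin 3 →₀ ℕ) (a : ℤ) :
    dehomogenize g (monomial e a) =
      MvPolynomial.map C (C (a : ℚ) * ∏ h, (g h 0 ^ e (h, 1) * g h 1 ^ e (h, 2))) *
        C (monomial (Finsupp.equivFunOnFinite.symm fun h => e (h, 0)) 1) := by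
  rw [dehomogenize, coe_eval₂Hom, eval₂_monomial, Finsupp.prod_fintype _ _ fun _ => pow_zero _,
    Fintype.prod_prod_type, monomial_equivFunOnFinite_symm, map_mul, map_prod, map_prod, mul_assoc,
    ← Finset.prod_mul_distrib]
  refine congrArg₂ _ ?_ (Finset.prod_congr rfl fun h _ => ?_)
  · simp
  · simp only [Fin.prod_univ_three, Matrix.cons_val, map_mul, map_pow]
    ring

lemma exists_coeff_ne_zero_of_coeff_dehomogenize_ne_zero
    {g : Fin m → Fin 2 → MvPolynomial (Fin m) ℚ} {G : MvPolynomial (Fin m × Fin 3) ℤ}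
    {κ I : Fin m →₀ ℕ} (hI : coeff I (coeff κ (dehomogenize g G)) ≠ 0) :
    ∃ e : Fin m × Fin 3 →₀ ℕ, coeff e G ≠ 0 ∧ ∀ h, e (h, 0) = I h := by
  rw [G.as_sum, map_sum, coeff_sum, coeff_sum] at hI
  obtain ⟨e, he, term_ne_zero⟩ := Finset.exists_ne_zero_of_sum_ne_zero hI
  refine ⟨e, mem_support_iff.mp he, fun h => ?_⟩
  rw [dehomogenize_monomial, mul_comm, coeff_C_mul, coeff_map, mul_comm, coeff_C_mul,
    coeff_monomial] at term_ne_zero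
  rw [← (ite_ne_right_iff.mp (right_ne_zero_of_mul term_ne_zero)).1]
  rfl

lemma dehomogenize_genericCoord (g : Fin m → Fin 2 → MvPolynomial (Fin m) ℚ) (h : Fin m)
    (u v : Fin 3 → ℤ) (i : Fin 3) :
    dehomogenize g (genericCoord h u v i) =
      ((![1, 0, 0] i : ℤ) : MvPolynomial (Fin m) (MvPolynomial (Fin m) ℚ)) * C (X h) +
        MvPolynomial.map C (C (u i : ℚ) * g h 0 + C (v i : ℚ) * g h 1) := by
  simp only [genericCoord, dehomogenize, map_add, map_mul, coe_eval₂Hom, eval₂_C, eval₂_X,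
    Int.coe_castRingHom, map_intCast, Matrix.cons_val, add_assoc]

lemma exists_coordinates {u v : Fin 3 → ℤ} {q p s : ℤ} (hq : q ≠ 0)
    (hu : q * u 0 + p * u 1 + s * u 2 = 0) (hv : q * v 0 + p * v 1 + s * v 2 = 0)
    (huv : u 1 * v 2 - u 2 * v 1 ≠ 0) (Y : MvPolynomial (Fin m) ℚ) :
    ∃ g : Fin 2 → MvPolynomial (Fin m) ℚ, ∀ i, C (u i : ℚ) * g 0 + C (v i : ℚ) * g 1 =
      ![-C (p / q : ℚ) - C (s / q : ℚ) * Y, 1, Y] i := by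
  set δ : ℚ := ((u 1 * v 2 - u 2 * v 1 : ℤ) : ℚ)
  have δ_ne_zero : δ ≠ 0 := Int.cast_ne_zero.mpr huv
  have q_ne_zero : (q : ℚ) ≠ 0 := by exact_mod_cast hq
  have inv_mul_δ : (C δ⁻¹ * C δ : MvPolynomial (Fin m) ℚ) = 1 := by
    rw [← C_mul, inv_mul_cancel₀ δ_ne_zero, C_1]
  have C_δ : (C δ : MvPolynomial (Fin m) ℚ) =
      C (u 1 : ℚ) * C (v 2 : ℚ) - C (u 2 : ℚ) * C (v 1 : ℚ) := by
    simp only [δ, Int.cast_sub, Int.cast_mul, C_sub, C_mul]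
  set g : Fin 2 → MvPolynomial (Fin m) ℚ :=
    ![C δ⁻¹ * (C (v 2 : ℚ) - C (v 1 : ℚ) * Y), C δ⁻¹ * (C (u 1 : ℚ) * Y - C (u 2 : ℚ))]
  have coord_one : C (u 1 : ℚ) * g 0 + C (v 1 : ℚ) * g 1 = 1 := by
    simp only [g, Matrix.cons_val]
    linear_combination inv_mul_δ - C δ⁻¹ * C_δ
  have coord_two : C (u 2 : ℚ) * g 0 + C (v 2 : ℚ) * g 1 = Y := by
    simp only [g, Matrix.cons_val]
    linear_combination Y * inv_mul_δ - Y * C δ⁻¹ * C_δ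
  have head_eq {w : Fin 3 → ℤ} (hw : q * w 0 + p * w 1 + s * w 2 = 0) :
      (C (w 0 : ℚ) : MvPolynomial (Fin m) ℚ) =
        -C (p / q : ℚ) * C (w 1 : ℚ) - C (s / q : ℚ) * C (w 2 : ℚ) := by
    have hw' : (q : ℚ) * w 0 + p * w 1 + s * w 2 = 0 := by exact_mod_cast hw
    rw [← C_neg, ← C_mul, ← C_mul, ← C_sub]
    congr 1
    field_simp
    linarith
  refine ⟨g, fun i => ?_⟩
  fin_cases i
  · simp only [Fin.zero_eta, Matrix.cons_val]
    rw [head_eq hu, head_eq hv]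
    linear_combination -C (p / q : ℚ) * coord_one - C (s / q : ℚ) * coord_two
  · exact coord_one
  · exact coord_two

lemma exists_dehomogenize_restrictedForm_eq {u v : Fin m → Fin 3 → ℤ} {q p s : Fin m → ℤ}
    (hq : ∀ h, q h ≠ 0) (hu : ∀ h, q h * u h 0 + p h * u h 1 + s h * u h 2 = 0)
    (hv : ∀ h, q h * v h 0 + p h * v h 1 + s h * v h 2 = 0)
    (huv : ∀ h, u h 1 * v h 2 - u h 2 * v h 1 ≠ 0) (x : (Fin m → Fin 3 → ℕ) → ℤ) :
    ∃ g, dehomogenize g (restrictedForm r x u v) = evalMultiform r x fun h =>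
      ![C (X h + C ((-p h : ℤ) / q h : ℚ)) + C (C (-s h / q h : ℚ)) * X h, 1, X h] := by
  choose g hg using fun h => exists_coordinates (hq h) (hu h) (hv h) (huv h) (X h)
  refine ⟨g, (map_evalMultiform (dehomogenize g) x _).trans ?_⟩
  congr 1
  ext1 h
  ext1 i
  rw [dehomogenize_genericCoord, hg]
  fin_cases i
  · simp [neg_div]
    ring
  · simp
  · simp

end Dehomogenization

section SlicePolynomial

open MvPolynomial

variable {m : ℕ} {r : Fin m → ℕ} {x : (Fin m → Fin 3 → ℕ) → ℤ} {κ : Fin m → ℕ}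

/-- The coefficient of `∏ h, X (h, 2) ^ κ h` in the multihomogeneous form with multidegree `r` and
coefficients `x`, dehomogenized by `X (h, 1) = 1` and written in the variables `X h = X (h, 0)`. -/
noncomputable def slicePolynomial (r : Fin m → ℕ) (x : (Fin m → Fin 3 → ℕ) → ℤ) (κ : Fin m → ℕ) :
    MvPolynomial (Fin m) ℤ :=
  ∑ t ∈ multidegrees r with (fun h => t h 2) = κ,
    monomial (Finsupp.equivFunOnFinite.symm fun h => t h 0) (x t)

lemma eq_of_mem_multidegrees {t t' : Fin m → Fin 3 → ℕ} (ht : t ∈ multidegrees r)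
    (ht' : t' ∈ multidegrees r) (h₀ : ∀ h, t h 0 = t' h 0) (h₂ : ∀ h, t h 2 = t' h 2) : t = t' := by
  rw [mem_multidegrees] at ht ht'
  simp only [Fin.sum_univ_three] at ht ht'
  funext h i
  have h₁ : t h 1 = t' h 1 := by linarith only [ht h, ht' h, h₀ h, h₂ h]
  fin_cases i
  exacts [h₀ h, h₁, h₂ h]

lemma coeff_slicePolynomial {t : Fin m → Fin 3 → ℕ} (ht : t ∈ multidegrees r) :
    coeff (Finsupp.equivFunOnFinite.symm fun h => t h 0)
      (slicePolynomial r x fun h => t h 2) = x t := by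
  rw [slicePolynomial, coeff_sum, Finset.sum_eq_single t]
  · rw [coeff_monomial, if_pos rfl]
  · intro t' ht' t'_ne
    rw [Finset.mem_filter] at ht'
    rw [coeff_monomial, if_neg]
    intro exponents_eq
    have h₀ (h : Fin m) : t' h 0 = t h 0 := by simpa using DFunLike.congr_fun exponents_eq h
    exact t'_ne (eq_of_mem_multidegrees ht'.1 ht h₀ (congrFun ht'.2))
  · intro t_notMem
    simp [ht] at t_notMem

lemma degreeOf_slicePolynomial_le (x : (Fin m → Fin 3 → ℕ) → ℤ) (κ : Fin m → ℕ) (h : Fin m) :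
    degreeOf h (slicePolynomial r x κ) ≤ r h := by
  refine (degreeOf_sum_le _ _ _).trans (Finset.sup_le fun t ht => ?_)
  by_cases x_eq : x t = 0
  · simp [x_eq]
  · rw [degreeOf_monomial_eq _ _ x_eq]
    exact (Finset.single_le_sum_of_canonicallyOrdered (Finset.mem_univ 0)).trans
      (mem_multidegrees.mp (Finset.mem_filter.mp ht).1 h).le

lemma l1Norm_slicePolynomial_le {B : ℝ} (hB : 0 ≤ B) (hx : ∀ t ∈ multidegrees r, |(x t : ℝ)| ≤ B)
    (κ : Fin m → ℕ) : l1Norm (slicePolynomial r x κ) ≤ 8 ^ (∑ h, r h) * B := by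
  calc l1Norm (slicePolynomial r x κ)
      ≤ ∑ t ∈ multidegrees r with (fun h => t h 2) = κ, B := by
        refine (weightedL1Norm_sum_le zero_le_one _ _).trans (Finset.sum_le_sum fun t ht => ?_)
        refine (l1Norm_monomial _ _).trans_le ?_
        exact hx t (Finset.mem_filter.mp ht).1
    _ ≤ ∑ _t ∈ multidegrees r, B :=
        Finset.sum_le_sum_of_subset_of_nonneg (Finset.filter_subset _ _) fun _ _ _ => hB
    _ ≤ 8 ^ (∑ h, r h) * B := by
        rw [Finset.sum_const, nsmul_eq_mul]
        gcongr
        exact_mod_cast card_multidegrees_le r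

lemma exists_minimal_slice (hx : ∃ t ∈ multidegrees r, x t ≠ 0) :
    ∃ κ, Minimal (fun κ => ∃ t ∈ multidegrees r, x t ≠ 0 ∧ (fun h => t h 2) = κ) κ := by
  obtain ⟨t, ht, t_ne⟩ := hx
  exact exists_minimal_of_wellFoundedLT _ ⟨_, t, ht, t_ne, rfl⟩

lemma slicePolynomial_ne_zero
    (hκ : Minimal (fun κ => ∃ t ∈ multidegrees r, x t ≠ 0 ∧ (fun h => t h 2) = κ) κ) :
    slicePolynomial r x κ ≠ 0 := by
  obtain ⟨t, ht, t_ne, rfl⟩ := hκ.prop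
  exact ne_zero_iff.mpr ⟨_, (coeff_slicePolynomial ht).trans_ne t_ne⟩

lemma coeff_evalMultiform_of_minimal {A : Type*} [CommRing A]
    (hκ : Minimal (fun κ => ∃ t ∈ multidegrees r, x t ≠ 0 ∧ (fun h => t h 2) = κ) κ)
    (a b : Fin m → A) :
    coeff (Finsupp.equivFunOnFinite.symm κ)
        (evalMultiform r x fun h => ![C (a h) + C (b h) * X h, 1, X h]) =
      ∑ t ∈ multidegrees r with (fun h => t h 2) = κ, x t • ∏ h, a h ^ t h 0 := by
  rw [evalMultiform, coeff_sum, Finset.sum_filter]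
  refine Finset.sum_congr rfl fun t ht => ?_
  have prod_eq : ∏ h, ∏ i, ![C (a h) + C (b h) * X h, 1, X h] i ^ t h i =
      (∏ h, (C (a h) + C (b h) * X h) ^ t h 0) *
        monomial (Finsupp.equivFunOnFinite.symm fun h => t h 2) 1 := by
    rw [monomial_equivFunOnFinite_symm, ← Finset.prod_mul_distrib]
    exact Finset.prod_congr rfl fun h _ => by simp [Fin.prod_univ_three]
  rw [prod_eq, coeff_smul, coeff_mul_monomial']
  by_cases t_eq : (fun h => t h 2) = κ
  · rw [if_pos t_eq, t_eq, if_pos le_rfl, tsub_self, mul_one, ← constantCoeff_eq]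
    simp
  rw [if_neg t_eq]
  by_cases t_le : (fun h => t h 2) ≤ κ
  · have x_eq : x t = 0 := by
      by_contra t_ne
      exact t_eq (hκ.eq_of_le ⟨t, ht, t_ne, rfl⟩ t_le)
    rw [x_eq, zero_smul]
  · exact (congrArg _ (if_neg t_le)).trans (smul_zero _)

lemma translate_slicePolynomial (β : Fin m → ℚ) :
    translate β ((slicePolynomial r x κ).map (Int.castRingHom ℚ)) =
      ∑ t ∈ multidegrees r with (fun h => t h 2) = κ, x t • ∏ h, (X h + C (β h)) ^ t h 0 := by
  rw [slicePolynomial, map_sum, map_sum]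
  refine Finset.sum_congr rfl fun t _ => ?_
  rw [map_monomial, ← mul_one (Int.castRingHom ℚ (x t)), ← smul_eq_mul, ← smul_monomial,
    monomial_equivFunOnFinite_symm, map_smul, map_prod]
  simp [translate, ← Int.cast_smul_eq_zsmul ℚ]

theorem indexGE_slicePolynomial {ε : ℝ} {u v : Fin m → Fin 3 → ℤ} {q p s : Fin m → ℤ}
    (hκ : Minimal (fun κ => ∃ t ∈ multidegrees r, x t ≠ 0 ∧ (fun h => t h 2) = κ) κ)
    (hq : ∀ h, q h ≠ 0) (hu : ∀ h, q h * u h 0 + p h * u h 1 + s h * u h 2 = 0)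
    (hv : ∀ h, q h * v h 0 + p h * v h 1 + s h * v h 2 = 0)
    (huv : ∀ h, u h 1 * v h 2 - u h 2 * v h 1 ≠ 0)
    (hε : ∀ e, coeff e (restrictedForm r x u v) ≠ 0 → ε ≤ ∑ h, (e (h, 0) : ℝ) / r h) :
    IndexGE r (translate (fun h => ((-p h : ℤ) / q h : ℚ))
      ((slicePolynomial r x κ).map (Int.castRingHom ℚ))) ε := by
  intro I hI
  obtain ⟨g, hg⟩ := exists_dehomogenize_restrictedForm_eq (r := r) hq hu hv huv x
  rw [translate_slicePolynomial] at hI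
  have coeff_eq := (congrArg (coeff (Finsupp.equivFunOnFinite.symm κ)) hg).trans
    (coeff_evalMultiform_of_minimal hκ _ _)
  obtain ⟨e, he, e_eq⟩ := exists_coeff_ne_zero_of_coeff_dehomogenize_ne_zero
    ((congrArg (coeff I) coeff_eq).trans_ne hI)
  simpa only [weightedOrder, e_eq] using hε e he

end SlicePolynomial

section SimultaneousApproximation

open MvPolynomial

variable {m : ℕ} {α B R : ℝ}

/-- The fractions `p / q` and `s / q` approximate `α` and `α ^ 2` within a constant multiple of
`1 / q ^ 2`. The second condition is expressed through `p * α - s`, which is the form in which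
approximations arise from palindromes. -/
structure IsSimultaneousApproximation (α : ℝ) (q : ℕ) (p s : ℤ) : Prop where
  isCoprime : IsCoprime p q
  abs_mul_sub_le : |q * α - p| ≤ 1 / q
  abs_num_mul_sub_le : |p * α - s| ≤ 1 / q

lemma exists_seq_mul_log_le {S : ℕ → Prop} (hS : ∃ᶠ q in atTop, S q) (G : ℝ) :
    ∃ f : ℕ → ℕ, (∀ k, S (f k)) ∧ ∀ k, G * Real.log (f k) ≤ Real.log (f (k + 1)) := by
  choose next le_next S_next using frequently_atTop.mp hS
  set step : ℕ → ℕ := fun q => next ⌈Real.exp (G * Real.log q)⌉₊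
  refine ⟨fun k => step^[k] (next 0), fun k => ?_, fun k => ?_⟩
  · cases k with
    | zero => exact S_next 0
    | succ k => simpa only [Function.iterate_succ_apply'] using S_next _
  · set q := step^[k] (next 0)
    have exp_le : Real.exp (G * Real.log q) ≤ step q := Nat.ceil_le.mp (le_next _)
    simp only [Function.iterate_succ_apply']
    exact (Real.le_log_iff_exp_le ((Real.exp_pos _).trans_le exp_le)).mpr exp_le

lemma exists_fin_mul_log_le {S : ℕ → Prop} (hS : ∃ᶠ q in atTop, S q) (m : ℕ) (G : ℝ) :
    ∃ q : Fin m → ℕ, (∀ h, S (q h)) ∧ ∀ i j, i < j → G * Real.log (q j) ≤ Real.log (q i) := by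
  obtain ⟨f, S_f, mul_log_le⟩ := exists_seq_mul_log_le hS (max 1 G)
  have monotone_log : Monotone fun k => Real.log (f k) := monotone_nat_of_le_succ fun k =>
    (le_mul_of_one_le_left (Real.log_natCast_nonneg _) (le_max_left _ _)).trans (mul_log_le k)
  refine ⟨fun h => f h.rev, fun h => S_f _, fun i j hij => ?_⟩
  calc G * Real.log (f j.rev)
      ≤ max 1 G * Real.log (f j.rev) := by gcongr; exact le_max_right _ _
    _ ≤ Real.log (f (j.rev + 1)) := mul_log_le _
    _ ≤ Real.log (f i.rev) := monotone_log (Nat.succ_le_of_lt (Fin.rev_lt_rev.mpr hij))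

/-- Numbers `q h` with logarithms at least `B`, and degrees `r h` such that the numbers
`r h * log (q h)` are all comparable to `R`. -/
structure IsBalanced (B R : ℝ) (q r : Fin m → ℕ) : Prop where
  le_log : ∀ h, B ≤ Real.log (q h)
  le_mul_log : ∀ h, R ≤ r h * Real.log (q h)
  mul_log_le : ∀ h, r h * Real.log (q h) ≤ 2 * R

lemma exists_isBalanced {q : Fin m → ℕ} (hB : 0 < B) (hq : ∀ h, B ≤ Real.log (q h)) :
    ∃ R r, 0 < R ∧ IsBalanced B R q r := by
  obtain ⟨R₀, hR₀⟩ := (Set.finite_range fun h => Real.log (q h)).bddAbove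
  have log_le (h : Fin m) : Real.log (q h) ≤ max B R₀ :=
    (hR₀ (Set.mem_range_self h)).trans (le_max_right _ _)
  refine ⟨max B R₀, fun h => ⌈max B R₀ / Real.log (q h)⌉₊, lt_max_of_lt_left hB, hq, fun h => ?_,
    fun h => ?_⟩
  · exact (div_le_iff₀ (hB.trans_le (hq h))).mp (Nat.le_ceil _)
  · have log_pos := hB.trans_le (hq h)
    have ceil_le := (Nat.ceil_lt_add_one (a := max B R₀ / Real.log (q h)) (by positivity)).le
    calc _ ≤ (max B R₀ / Real.log (q h) + 1) * Real.log (q h) := by gcongr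
      _ = max B R₀ + Real.log (q h) := by field_simp
      _ ≤ 2 * max B R₀ := by linarith only [log_le h]

namespace IsBalanced

variable {q r : Fin m → ℕ}

lemma log_pos (h : IsBalanced B R q r) (hB : 0 < B) (k : Fin m) : 0 < Real.log (q k) :=
  hB.trans_le (h.le_log k)

lemma one_le_base (h : IsBalanced B R q r) (hB : 0 < B) (k : Fin m) : 1 ≤ q k := by
  by_contra! q_lt
  have log_pos := h.log_pos hB k
  simp [Nat.lt_one_iff.mp q_lt] at log_pos

lemma one_le_degree (h : IsBalanced B R q r) (hR : 0 < R) (k : Fin m) : 1 ≤ r k := by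
  by_contra! r_lt
  have le_mul_log := h.le_mul_log k
  rw [Nat.lt_one_iff.mp r_lt, Nat.cast_zero, zero_mul] at le_mul_log
  exact hR.not_ge le_mul_log

lemma degree_mul_le (h : IsBalanced B R q r) (k : Fin m) : r k * B ≤ 2 * R :=
  (mul_le_mul_of_nonneg_left (h.le_log k) (r k).cast_nonneg).trans (h.mul_log_le k)

lemma sum_degree_mul_le (h : IsBalanced B R q r) : (∑ k, r k : ℕ) * B ≤ 2 * m * R := by
  rw [Nat.cast_sum, Finset.sum_mul]
  refine (Finset.sum_le_sum fun k _ => h.degree_mul_le k).trans_eq ?_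
  simp only [Finset.sum_const, Finset.card_univ, Fintype.card_fin, nsmul_eq_mul]
  ring

lemma degree_le_mul (h : IsBalanced B R q r) (hB : 0 < B) {ω : ℝ} (hω : 0 < ω) {i j : Fin m}
    (hij : 2 / ω * Real.log (q j) ≤ Real.log (q i)) : (r i : ℝ) ≤ ω * r j := by
  refine le_of_mul_le_mul_right ?_ (h.log_pos hB i)
  calc r i * Real.log (q i)
      ≤ 2 * (r j * Real.log (q j)) := by linarith only [h.mul_log_le i, h.le_mul_log j]
    _ = ω * r j * (2 / ω * Real.log (q j)) := by field_simp
    _ ≤ ω * r j * Real.log (q i) := by gcongr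

lemma mul_sum_le (h : IsBalanced B R q r) {τ : ℝ} (hτ : 0 ≤ τ) {l : Fin 3 → ℝ} {k : Fin m}
    (hl : ∑ i, l i ≤ -τ * Real.log (q k)) : r k * ∑ i, l i ≤ -τ * R := by
  calc r k * ∑ i, l i ≤ r k * (-τ * Real.log (q k)) := by gcongr
    _ = -(τ * (r k * Real.log (q k))) := by ring
    _ ≤ -(τ * R) := neg_le_neg (mul_le_mul_of_nonneg_left (h.le_mul_log k) hτ)
    _ = -τ * R := (neg_mul _ _).symm

lemma mul_abs_le (h : IsBalanced B R q r) {y : ℝ} {k : Fin m} (hy : |y| ≤ 2 * Real.log (q k)) :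
    r k * |y| ≤ 4 * R := by
  calc r k * |y| ≤ r k * (2 * Real.log (q k)) := by gcongr
    _ ≤ 4 * R := by linarith only [h.mul_log_le k]

lemma sum_degree_mul_lt (h : IsBalanced B R q r) (hm : 1 ≤ m) (hR : 0 < R) {τ c : ℝ}
    (hτ : 0 < τ) (hBc : 24 * Real.log c < B * τ) :
    (∑ k, r k : ℕ) * Real.log c < τ * m * R / 12 := by
  have sum_pos : (0 : ℝ) < (∑ k, r k : ℕ) := Nat.cast_pos.mpr <|
    Finset.sum_pos (fun k _ => h.one_le_degree hR k) ⟨⟨0, hm⟩, Finset.mem_univ _⟩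
  have lt_mul := mul_lt_mul_of_pos_left hBc sum_pos
  have mul_le := mul_le_mul_of_nonneg_right h.sum_degree_mul_le hτ.le
  linarith only [lt_mul, mul_le]

lemma sum_degree_mul_log_le (h : IsBalanced B R q r) (hm : 1 ≤ m) {ω c : ℝ} (hω : 0 < ω)
    (hBc : 2 * m * Real.log c ≤ B * ω) : (∑ k, r k : ℕ) * Real.log c ≤ ω * R := by
  have m_pos : (0 : ℝ) < m := by exact_mod_cast hm
  have mul_le := mul_le_mul_of_nonneg_left hBc (∑ k, r k).cast_nonneg (α := ℝ)
  have sum_le := mul_le_mul_of_nonneg_right h.sum_degree_mul_le hω.le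
  refine le_of_mul_le_mul_left ?_ (mul_pos two_pos m_pos)
  linarith only [mul_le, sum_le]

lemma rothAdmissible (h : IsBalanced B R q r) (hB : 0 < B) (hR : 0 < R) (hm : 1 ≤ m) {ω c : ℝ}
    (hω : 0 < ω) (hBω : 2 ≤ B * ω) (hBc : 2 * m * Real.log c ≤ B * ω)
    (hgap : ∀ i j, i < j → 2 / ω * Real.log (q j) ≤ Real.log (q i)) {p : Fin m → ℤ}
    (hp : ∀ k, IsCoprime (p k) (q k)) {P : MvPolynomial (Fin m) ℤ} (hP : P ≠ 0)
    (hdegree : ∀ k, degreeOf k P ≤ r k) (hnorm : l1Norm P ≤ c ^ ∑ k, r k) :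
    RothAdmissible ω r p (fun k => q k) R P where
  ne_zero := hP
  degreeOf_le := hdegree
  one_le_degree := h.one_le_degree hR
  one_le_den k := by exact_mod_cast h.one_le_base hB k
  isCoprime := hp
  degree_gap i j hij := h.degree_le_mul hB hω (hgap i j hij)
  le_degree_mul_log k := by exact_mod_cast h.le_mul_log k
  degree_le k := by
    have mul_le := mul_le_mul_of_nonneg_left hBω (r k).cast_nonneg (α := ℝ)
    have degree_le := mul_le_mul_of_nonneg_right (h.degree_mul_le k) hω.le
    linarith only [mul_le, degree_le]
  log_l1Norm_le := by
    refine le_trans ?_ (h.sum_degree_mul_log_le hm hω hBc)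
    rw [← Real.log_pow]
    exact Real.log_le_log (one_pos.trans_le (one_le_l1Norm hP)) hnorm

end IsBalanced

lemma exists_lower_bound {τ ω : ℝ} (hτ : 0 < τ) (hω : 0 < ω) (y z : ℝ) :
    ∃ B, 0 < B ∧ y < B * τ ∧ 2 ≤ B * ω ∧ z ≤ B * ω :=
  ((eventually_gt_atTop 0).and <|
    ((tendsto_id.atTop_mul_const hτ).eventually_gt_atTop y).and <|
    ((tendsto_id.atTop_mul_const hω).eventually_ge_atTop 2).and <|
    (tendsto_id.atTop_mul_const hω).eventually_ge_atTop z).exists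

theorem not_frequently_isSimultaneousApproximation (hα : IsAlgebraic ℤ α)
    (hindep : LinearIndependent ℤ fun i : Fin 3 => α ^ (i : ℕ)) (hα₀ : 0 < α) (hα₁ : α ≤ 1) :
    ¬∃ᶠ q : ℕ in atTop, ∃ p s : ℤ, IsSimultaneousApproximation α q p s := by
  intro hfreq
  obtain ⟨τ, τ_pos, τ_le_one, exists_pair⟩ := exists_isShortSolutionPair hα hindep hα₀.le hα₁
  obtain ⟨m, c, one_le_m, one_le_c, exists_form⟩ := exists_isAuxiliaryForm hα hα₀ hα₁ τ_pos τ_le_one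
  obtain ⟨ω, ω_pos, roth⟩ := roth_lemma m (ε := τ / 48) (by positivity)
  obtain ⟨B, B_pos, lt_B_mul_τ, two_le_B_mul_ω, le_B_mul_ω⟩ :=
    exists_lower_bound τ_pos ω_pos (24 * Real.log (24 * c)) (2 * m * Real.log (8 * c))
  have le_log := (Real.tendsto_log_atTop.comp tendsto_natCast_atTop_atTop).eventually_ge_atTop B
  obtain ⟨q, hq, gap⟩ :=
    exists_fin_mul_log_le ((hfreq.and_eventually exists_pair).and_eventually le_log) m (2 / ω)
  choose p s approx using fun h => (hq h).1.1
  choose l u v pair sum_le abs_le using fun h =>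
    (hq h).1.2 (p h) (s h) (approx h).abs_mul_sub_le (approx h).abs_num_mul_sub_le
  obtain ⟨R, r, R_pos, bal⟩ := exists_isBalanced B_pos fun h => (hq h).2
  have mul_abs_le (h : Fin m) (i : Fin 3) : r h * |l h i| ≤ 4 * R := bal.mul_abs_le (abs_le h i)
  obtain ⟨x, hx⟩ :=
    exists_form r l R R_pos mul_abs_le fun h => bal.mul_sum_le τ_pos.le (sum_le h)
  obtain ⟨κ, hκ⟩ := exists_minimal_slice hx.exists_ne_zero
  have norm_le : l1Norm (slicePolynomial r x κ) ≤ (8 * c) ^ ∑ h, r h := by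
    rw [mul_pow]
    exact l1Norm_slicePolynomial_le (by positivity) hx.abs_le κ
  have admissible : RothAdmissible ω r (fun h => -p h) (fun h => q h) R (slicePolynomial r x κ) :=
    bal.rothAdmissible B_pos R_pos one_le_m ω_pos two_le_B_mul_ω le_B_mul_ω gap
      (fun h => (approx h).isCoprime.neg_left) (slicePolynomial_ne_zero hκ)
      (degreeOf_slicePolynomial_le x κ) norm_le
  refine roth _ _ _ _ _ admissible (indexGE_slicePolynomial hκ
    (fun h => (zero_lt_one.trans_le (admissible.one_le_den h)).ne')
    (fun h => (pair h).left_orthogonal) (fun h => (pair h).right_orthogonal)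
    (fun h => (pair h).minor_ne_zero) fun e he => ?_)
  exact le_sum_div_of_coeff_restrictedForm_ne_zero hα₀ hα₁ one_le_m (bal.one_le_degree R_pos) R_pos
    τ_pos one_le_c hx mul_abs_le (fun h => (pair h).left_le) (fun h => (pair h).right_le)
    (bal.sum_degree_mul_lt one_le_m R_pos τ_pos lt_B_mul_τ) he

end SimultaneousApproximation

section ContinuedFraction

variable {a : ℕ → ℕ} {α : ℝ}

lemma cfNum_add_two (a : ℕ → ℕ) (n : ℕ) :
    cfNum a (n + 2) = a (n + 2) * cfNum a (n + 1) + cfNum a n := rfl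

lemma cfDen_add_two (a : ℕ → ℕ) (n : ℕ) :
    cfDen a (n + 2) = a (n + 2) * cfDen a (n + 1) + cfDen a n := rfl

lemma cfDen_le_succ (ha : ∀ n, 1 ≤ n → 1 ≤ a n) (n : ℕ) : cfDen a n ≤ cfDen a (n + 1) := by
  cases n with
  | zero => exact ha 1 le_rfl
  | succ n =>
    rw [cfDen_add_two]
    exact le_add_of_le_left (Nat.le_mul_of_pos_left _ (ha (n + 2) (Nat.le_add_left 1 _)))

lemma cfDen_pos (ha : ∀ n, 1 ≤ n → 1 ≤ a n) (n : ℕ) : 0 < cfDen a n :=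
  one_pos.trans_le (monotone_nat_of_le_succ (cfDen_le_succ ha) n.zero_le)

lemma le_cfDen (ha : ∀ n, 1 ≤ n → 1 ≤ a n) (n : ℕ) : n ≤ cfDen a n := by
  induction n using Nat.twoStepInduction with
  | zero => exact Nat.zero_le _
  | one => exact ha 1 le_rfl
  | more n _ ih =>
    rw [cfDen_add_two]
    have le_mul := Nat.le_mul_of_pos_left (cfDen a (n + 1)) (ha (n + 2) (Nat.le_add_left 1 _))
    linarith only [ih, le_mul, cfDen_pos ha n]

lemma cfNum_mul_cfDen_sub (a : ℕ → ℕ) (n : ℕ) :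
    (cfNum a (n + 1) : ℤ) * cfDen a n - cfNum a n * cfDen a (n + 1) = (-1) ^ n := by
  induction n with
  | zero => simp [cfNum, cfDen]
  | succ n ih =>
    rw [cfDen_add_two, cfNum_add_two, pow_succ, ← ih]
    push_cast
    ring

lemma isCoprime_cfNum_cfDen (a : ℕ → ℕ) (n : ℕ) :
    IsCoprime (cfNum a (n + 1) : ℤ) (cfDen a (n + 1)) := by
  refine ⟨(-1) ^ n * cfDen a n, -((-1) ^ n * cfNum a n), ?_⟩
  have sq_eq_one : ((-1 : ℤ) ^ n) * (-1) ^ n = 1 := by rw [← mul_pow]; simp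
  linear_combination ((-1 : ℤ) ^ n) * cfNum_mul_cfDen_sub a n + sq_eq_one

lemma abs_cfDen_mul_cfNum_sub_mul_le (a : ℕ → ℕ) (n k : ℕ) :
    |(cfDen a n : ℤ) * cfNum a (n + k) - cfNum a n * cfDen a (n + k)| * cfDen a (n + 1) ≤
      cfDen a (n + k) := by
  induction k using Nat.twoStepInduction with
  | zero => simp [mul_comm]
  | one =>
    rw [mul_comm (cfDen a n : ℤ), cfNum_mul_cfDen_sub, abs_neg_one_pow, one_mul]
  | more k ih ih' =>
    rw [← add_assoc] at ih'
    rw [← add_assoc, cfNum_add_two, cfDen_add_two]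
    push_cast
    have sub_eq : (cfDen a n : ℤ) * (a (n + k + 2) * cfNum a (n + k + 1) + cfNum a (n + k)) -
        cfNum a n * (a (n + k + 2) * cfDen a (n + k + 1) + cfDen a (n + k)) =
        a (n + k + 2) * (cfDen a n * cfNum a (n + k + 1) - cfNum a n * cfDen a (n + k + 1)) +
          (cfDen a n * cfNum a (n + k) - cfNum a n * cfDen a (n + k)) := by ring
    grw [sub_eq, abs_add_le, abs_mul, Nat.abs_cast, add_mul, mul_assoc, ih, ih']

lemma abs_cfDen_mul_sub_cfNum_le (ha : ∀ n, 1 ≤ n → 1 ≤ a n)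
    (hα : Tendsto (fun n => (cfNum a n : ℝ) / cfDen a n) atTop (𝓝 α)) (n : ℕ) :
    |cfDen a n * α - cfNum a n| ≤ 1 / cfDen a (n + 1) := by
  have den_pos (j : ℕ) : (0 : ℝ) < cfDen a j := Nat.cast_pos.mpr (cfDen_pos ha j)
  refine le_of_tendsto ((hα.const_mul _).sub_const _).abs ?_
  filter_upwards [eventually_ge_atTop n] with j hj
  obtain ⟨k, rfl⟩ := Nat.exists_eq_add_of_le hj
  have cross_le : |(cfDen a n : ℝ) * cfNum a (n + k) - cfNum a n * cfDen a (n + k)| *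
      cfDen a (n + 1) ≤ cfDen a (n + k) := by
    exact_mod_cast abs_cfDen_mul_cfNum_sub_mul_le a n k
  rw [← mul_div_assoc, div_sub' (den_pos _).ne', abs_div, abs_of_pos (den_pos (n + k)),
    div_le_div_iff₀ (den_pos _) (den_pos _), one_mul, mul_comm (cfDen a (n + k) : ℝ)]
  exact cross_le

lemma irrational_of_tendsto (ha : ∀ n, 1 ≤ n → 1 ≤ a n)
    (hα : Tendsto (fun n => (cfNum a n : ℝ) / cfDen a n) atTop (𝓝 α)) : Irrational α := by
  rintro ⟨x, rfl⟩
  have den_pos : (0 : ℝ) < x.den := Nat.cast_pos.mpr x.den_pos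
  have eq_zero {n : ℕ} (hn : x.den ≤ n) : (cfDen a n : ℤ) * x.num - cfNum a n * x.den = 0 := by
    have den_lt : (x.den : ℝ) < cfDen a (n + 1) :=
      Nat.cast_lt.mpr ((Nat.lt_succ_of_le hn).trans_le (le_cfDen ha _))
    have cast_eq : (((cfDen a n : ℤ) * x.num - cfNum a n * x.den : ℤ) : ℝ) =
        (cfDen a n * x - cfNum a n) * x.den := by
      rw [Rat.cast_def]
      push_cast
      field_simp
    rw [← Int.abs_lt_one_iff, ← Int.cast_lt (R := ℝ), Int.cast_abs, cast_eq, abs_mul,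
      abs_of_pos den_pos, Int.cast_one]
    grw [abs_cfDen_mul_sub_cfNum_le ha hα n, one_div_mul_eq_div]
    rwa [div_lt_one (den_pos.trans den_lt)]
  have den_mul_eq_zero : (x.den : ℤ) * (-1) ^ x.den = 0 := by
    rw [← cfNum_mul_cfDen_sub a x.den]
    linear_combination (cfDen a (x.den + 1) : ℤ) * eq_zero le_rfl -
      (cfDen a x.den : ℤ) * eq_zero x.den.le_succ
  exact mul_ne_zero (Int.natCast_ne_zero.mpr x.den_nz) (pow_ne_zero _ (by decide)) den_mul_eq_zero

lemma pos_of_tendsto (ha : ∀ n, 1 ≤ n → 1 ≤ a n)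
    (hα : Tendsto (fun n => (cfNum a n : ℝ) / cfDen a n) atTop (𝓝 α)) : 0 < α :=
  (ge_of_tendsto' hα fun _ => by positivity).lt_of_ne' (irrational_of_tendsto ha hα).ne_zero

lemma le_one_of_tendsto (ha : ∀ n, 1 ≤ n → 1 ≤ a n)
    (hα : Tendsto (fun n => (cfNum a n : ℝ) / cfDen a n) atTop (𝓝 α)) : α ≤ 1 := by
  have abs_le := abs_cfDen_mul_sub_cfNum_le ha hα 0
  have le_inv : α ≤ (a 1 : ℝ)⁻¹ := by
    simpa [cfDen, cfNum] using (le_abs_self _).trans abs_le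
  exact le_inv.trans (inv_le_one_of_one_le₀ (Nat.one_le_cast.mpr (ha 1 le_rfl)))

lemma prod_map_range_eq (a : ℕ → ℕ) (n : ℕ) :
    ((List.range (n + 1)).map fun i => !![a (i + 1), 1; 1, 0]).prod =
      !![cfDen a (n + 1), cfDen a n; cfNum a (n + 1), cfNum a n] := by
  induction n with
  | zero => simp [cfDen, cfNum]
  | succ n ih =>
    rw [List.range_succ, List.map_append, List.prod_append, ih, cfDen_add_two, cfNum_add_two]
    simp [mul_comm]

lemma cfNum_succ_eq_cfDen_of_palindrome {n : ℕ}
    (hpal : ∀ j, 1 ≤ j → j ≤ n + 1 → a j = a (n + 1 + 1 - j)) : cfNum a (n + 1) = cfDen a n := by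
  set l : List (Matrix (Fin 2) (Fin 2) ℕ) :=
    (List.range (n + 1)).map fun i => !![a (i + 1), 1; 1, 0] with l_def
  have map_transpose : l.map Matrix.transpose = l := by
    rw [l_def, List.map_map]
    refine List.map_congr_left fun i _ => ?_
    ext x y
    fin_cases x <;> fin_cases y <;> rfl
  have reverse_eq : l.reverse = l := by
    refine List.ext_getElem l.length_reverse fun i _ hi => ?_
    have i_le : i ≤ n := by simpa [l_def, Nat.lt_succ_iff] using hi
    simp only [List.getElem_reverse, l_def, List.getElem_map, List.getElem_range, List.length_map,
      List.length_range]
    rw [hpal (i + 1) (by lia) (by lia), show n + 1 - 1 - i + 1 = n + 1 + 1 - (i + 1) by lia]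
  have transpose_prod : l.prod.transpose = l.prod := by
    rw [Matrix.transpose_list_prod, map_transpose, reverse_eq]
  rw [l_def, prod_map_range_eq] at transpose_prod
  exact congrFun (congrFun transpose_prod 0) 1

lemma isSimultaneousApproximation_of_palindrome (ha : ∀ n, 1 ≤ n → 1 ≤ a n)
    (hα : Tendsto (fun n => (cfNum a n : ℝ) / cfDen a n) atTop (𝓝 α)) {n : ℕ}
    (hpal : ∀ j, 1 ≤ j → j ≤ n + 1 → a j = a (n + 1 + 1 - j)) :
    IsSimultaneousApproximation α (cfDen a (n + 1)) (cfNum a (n + 1)) (cfNum a n) where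
  isCoprime := isCoprime_cfNum_cfDen a n
  abs_mul_sub_le := by
    refine (abs_cfDen_mul_sub_cfNum_le ha hα (n + 1)).trans ?_
    have := cfDen_pos ha (n + 1)
    gcongr
    exact cfDen_le_succ ha (n + 1)
  abs_num_mul_sub_le := by
    simpa only [cfNum_succ_eq_cfDen_of_palindrome hpal, Int.cast_natCast] using
      abs_cfDen_mul_sub_cfNum_le ha hα n

lemma frequently_isSimultaneousApproximation (ha : ∀ n, 1 ≤ n → 1 ≤ a n)
    (hα : Tendsto (fun n => (cfNum a n : ℝ) / cfDen a n) atTop (𝓝 α))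
    (hpal : ∀ N, ∃ n, N ≤ n ∧ ∀ j, 1 ≤ j → j ≤ n → a j = a (n + 1 - j)) :
    ∃ᶠ q : ℕ in atTop, ∃ p s : ℤ, IsSimultaneousApproximation α q p s := by
  refine frequently_atTop.mpr fun N => ?_
  obtain ⟨n, N_lt, palindrome⟩ := hpal (N + 1)
  obtain ⟨n, rfl⟩ := Nat.exists_eq_add_one_of_ne_zero (Nat.ne_zero_of_lt N_lt)
  exact ⟨cfDen a (n + 1), (Nat.le_of_succ_le N_lt).trans (le_cfDen ha _), _, _,
    isSimultaneousApproximation_of_palindrome ha hα palindrome⟩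

end ContinuedFraction

lemma linearIndependent_pow_of_le_natDegree_minpoly {x : ℝ} {d : ℕ}
    (hd : d ≤ (minpoly ℚ x).natDegree) : LinearIndependent ℤ fun i : Fin d => x ^ (i : ℕ) :=
  ((linearIndependent_pow x).comp _ (Fin.castLE_injective hd)).restrict_scalars fun _ _ h => by
    simpa using h

lemma two_lt_natDegree_minpoly {x : ℝ} (hx : IsAlgebraic ℚ x) (hirr : Irrational x)
    (hdegree : (minpoly ℚ x).natDegree ≠ 2) : 2 < (minpoly ℚ x).natDegree := by
  have natDegree_pos := minpoly.natDegree_pos hx.isIntegral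
  have natDegree_ne_one : (minpoly ℚ x).natDegree ≠ 1 := fun h =>
    hirr (minpoly.natDegree_eq_one_iff.mp h)
  lia

end PalindromicCF

/-- If the sequence of partial quotients of `α = [0; a 1, a 2, ...]` begins in
arbitrarily long palindromes, then `α` is quadratic irrational or transcendental. -/
theorem statement0 (a : ℕ → ℕ) (ha : ∀ n, 1 ≤ n → 1 ≤ a n)
    (hpal : ∀ N : ℕ, ∃ n, N ≤ n ∧ ∀ j, 1 ≤ j → j ≤ n → a j = a (n + 1 - j))
    (α : ℝ)
    (hα : Tendsto (fun n => (cfNum a n : ℝ) / cfDen a n) atTop (𝓝 α)) :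
    Transcendental ℚ α ∨ (Irrational α ∧ (minpoly ℚ α).natDegree = 2) := by
  have irrational : Irrational α := PalindromicCF.irrational_of_tendsto ha hα
  refine or_iff_not_imp_left.mpr fun not_transcendental => ⟨irrational, ?_⟩
  have algebraic : IsAlgebraic ℚ α := not_not.mp not_transcendental
  by_contra natDegree_ne_two
  have linearIndependent : LinearIndependent ℤ fun i : Fin 3 => α ^ (i : ℕ) :=
    PalindromicCF.linearIndependent_pow_of_le_natDegree_minpoly
      (PalindromicCF.two_lt_natDegree_minpoly algebraic irrational natDegree_ne_two)
  exact PalindromicCF.not_frequently_isSimultaneousApproximation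
    ((IsFractionRing.isAlgebraic_iff ℤ ℚ ℝ).mpr algebraic) linearIndependent
    (PalindromicCF.pos_of_tendsto ha hα) (PalindromicCF.le_one_of_tendsto ha hα)
    (PalindromicCF.frequently_isSimultaneousApproximation ha hα hpal)
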